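/- For every integer n ≥ 2 and every real number p with 1 ≤ p < n/(n-1) there exists a constant C = C(n,p) > 0, depending only on n and p, with the following property. Let (α,β) ⊆ ℝ be a bounded open interval, let a_j ∈ C^{n-1,1}([α,β], ℂ) for j = 1,…,n, and let λ : (α,β) → ℂ be a continuous function such that λ(t)^n + Σ_{j=1}^n a_j(t) λ(t)^{n-j} = 0 for all t ∈ (α,β). Then λ is absolutely continuous on (α,β), its almost-everywhere derivative λ' belongs to L^p((α,β)), and ‖λ'‖_{L^p((α,β))} ≤ C · max{1, (β-α)^{1/p}} · max_{1≤j≤n} ‖a_j‖_{C^{n-1,1}([α,β])}^{1/j}. -/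

import Mathlib

open Set MeasureTheory Real

noncomputable section

/-- `f` is absolutely continuous on the set `S` : for every `ε > 0` there is `δ > 0` such
that for any finitely many non-overlapping intervals `[u i, v i] ⊆ S` of total length `< δ`
the sum `∑ ‖f (v i) - f (u i)‖` is `< ε`. -/
def AbsContOn {E : Type*} [NormedAddCommGroup E] (f : ℝ → E) (S : Set ℝ) : Prop :=
  ∀ ε : ℝ, 0 < ε → ∃ δ : ℝ, 0 < δ ∧
    ∀ (N : ℕ) (u v : Fin N → ℝ),
      (∀ i, u i ≤ v i ∧ Set.Icc (u i) (v i) ⊆ S) →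
      (∀ i j, i ≠ j → Disjoint (Set.Ioo (u i) (v i)) (Set.Ioo (u j) (v j))) →
      (∑ i, (v i - u i)) < δ →
      (∑ i, ‖f (v i) - f (u i)‖) < ε

/-- `d (i+1)` is the derivative of `d i` on `S` for all `i < k`; thus `d i` is the `i`-th
derivative of `d 0` on `S` for `i ≤ k`. -/
def DerivChain {E : Type*} [NormedAddCommGroup E] [NormedSpace ℝ E]
    (d : ℕ → ℝ → E) (k : ℕ) (S : Set ℝ) : Prop :=
  ∀ i < k, ∀ x ∈ S, HasDerivWithinAt (d i) (d (i + 1) x) S x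

/-- Hölder constant of exponent `a` of `g` on `S`. -/
def HolderConst {E : Type*} [NormedAddCommGroup E] (a : ℝ) (S : Set ℝ) (g : ℝ → E) : ℝ :=
  sSup {r : ℝ | ∃ x ∈ S, ∃ y ∈ S, x ≠ y ∧ r = ‖g x - g y‖ / |x - y| ^ a}

/-- Membership in `C^{k,1}(S)`, encoded via the chain of derivatives `d`:
`d 0` is `k` times differentiable with `i`-th derivative `d i`, and the top
derivative `d k` is Lipschitz. -/
def MemCk1 {E : Type*} [NormedAddCommGroup E] [NormedSpace ℝ E]
    (d : ℕ → ℝ → E) (k : ℕ) (S : Set ℝ) : Prop :=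
  DerivChain d k S ∧ ∃ L : ℝ, ∀ x ∈ S, ∀ y ∈ S, ‖d k x - d k y‖ ≤ L * |x - y|

/-- The `C^{k,1}`-norm: sup of all derivatives up to order `k` plus the Lipschitz
(Hölder-1) constant of the `k`-th derivative. -/
def CNorm {E : Type*} [NormedAddCommGroup E] (d : ℕ → ℝ → E) (k : ℕ) (S : Set ℝ) : ℝ :=
  sSup {r : ℝ | ∃ i ≤ k, ∃ x ∈ S, r = ‖d i x‖} + HolderConst 1 S (d k)

open scoped Polynomial ENNReal

/-!
By a criterion of F. Riesz it suffices to find, along the root `λ`, arbitrarily fine partitions with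
uniformly bounded sums `∑ ‖Δλ‖ ^ p * (Δt) ^ (1 - p)`. This avoids differentiating `λ` and behaves
well under gluing and rescaling. Similarly, `C^{n-1,1}` is used only through approximation to order
`n` by polynomials at every point, and after extension by Taylor polynomials it suffices to consider
coefficients on `[0, 1]`.

The degree `d` is lowered by induction. A Tschirnhausen transformation makes the sum of the roots
zero, and if the coefficients, normalised to weighted size `1`, then stay away from `0` on an
interval, the polynomial splits there holomorphically into coprime factors of lower degree; by
compactness finitely many splittings suffice.

Let `M` bound the weighted size of the coefficients, with equality for some coefficient, and cut
`[0, 1]` into `N` cells. Up to an error that is small for large `M`, that coefficient is a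
polynomial of degree less than `n`, hence small only near its zeros. So on all but `4 * n` cells the
normalised coefficients stay away from `0`. On an exceptional cell, rescaling the cell to unit
length and the roots by `N` gives a problem of the same kind, of size at most
`max (2 * M) (N * M * θ)` with `θ` a multiple of `N ^ (-1 / d)`. These cells contribute at most a
fixed multiple of `N⁻¹ * (2 ^ p + (N * θ) ^ p)` times the bound for size `M`, which for large `N`
is a contraction since `1 - p + p / d > 0`, that is, since `p < n / (n - 1)`. As the mesh grows by
the factor `N` under rescaling, the bound follows by induction on the scale.
-/

section RieszPartition

variable {E : Type*} [NormedAddCommGroup E] {f g : ℝ → E} {p δ u v x y B : ℝ}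

/-- `[x, y]` has a finite partition `x = t₀ ≤ ⋯ ≤ t_N = y` of mesh at most `δ` whose Riesz sum
`∑ ‖f tᵢ₊₁ - f tᵢ‖ ^ p * (tᵢ₊₁ - tᵢ) ^ (1 - p)` is at most `B`.  By a theorem of F. Riesz, for
`p > 1` and continuous `f`, a bound `B` valid for all `δ` amounts to `f` being absolutely continuous
with `‖f'‖_p ^ p ≤ B`.  Degenerate pieces are allowed; for `p ≥ 1` they contribute `0`. -/
inductive HasRieszPartition (f : ℝ → E) (p δ : ℝ) : ℝ → ℝ → ℝ → Prop
  | single {x y B : ℝ} (le : x ≤ y) (mesh : y - x ≤ δ)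
      (sum_le : ‖f y - f x‖ ^ p * (y - x) ^ (1 - p) ≤ B) : HasRieszPartition f p δ x y B
  | glue {x z y B₁ B₂ B : ℝ} (left : HasRieszPartition f p δ x z B₁)
      (right : HasRieszPartition f p δ z y B₂) (sum_le : B₁ + B₂ ≤ B) :
      HasRieszPartition f p δ x y B

namespace HasRieszPartition

theorem mono {B' : ℝ} (h : HasRieszPartition f p δ x y B) (hB : B ≤ B') :
    HasRieszPartition f p δ x y B' := by
  cases h with
  | single hxy hδ h => exact .single hxy hδ (h.trans hB)
  | glue h₁ h₂ h => exact .glue h₁ h₂ (h.trans hB)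

theorem le (h : HasRieszPartition f p δ x y B) : x ≤ y := by
  induction h with
  | single hxy => exact hxy
  | glue _ _ _ ih₁ ih₂ => exact ih₁.trans ih₂

theorem refl (hp : 1 ≤ p) (hδ : 0 ≤ δ) : HasRieszPartition f p δ x x 0 :=
  .single le_rfl (by simpa using hδ) (by simp [Real.zero_rpow (by linarith : p ≠ 0)])

theorem congr (h : HasRieszPartition g p δ x y B) (hfg : EqOn f g (Icc x y)) :
    HasRieszPartition f p δ x y B := by
  induction h with
  | single hxy hδ hB =>
    refine .single hxy hδ ?_
    rwa [hfg (left_mem_Icc.2 hxy), hfg (right_mem_Icc.2 hxy)]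
  | glue h₁ h₂ hB ih₁ ih₂ =>
    exact .glue (ih₁ (hfg.mono (Icc_subset_Icc_right h₂.le)))
      (ih₂ (hfg.mono (Icc_subset_Icc_left h₁.le))) hB

theorem of_forall_lt (hp : 1 ≤ p) (hδ : 0 ≤ δ) (c B : ℕ → ℝ) (N : ℕ)
    (h : ∀ j < N, HasRieszPartition f p δ (c j) (c (j + 1)) (B j)) :
    HasRieszPartition f p δ (c 0) (c N) (∑ j ∈ Finset.range N, B j) := by
  induction N with
  | zero => simpa using refl hp hδ
  | succ N ih =>
    exact .glue (ih fun j hj => h j (by lia)) (h N (by lia)) (Finset.sum_range_succ _ _).ge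

theorem affine [NormedSpace ℝ E] {m r s : ℝ} (hr : 0 < r) (hfg : ∀ t, f (s + r * t) = m • g t)
    (h : HasRieszPartition g p δ x y B) :
    HasRieszPartition f p (r * δ) (s + r * x) (s + r * y) (|m| ^ p * r ^ (1 - p) * B) := by
  induction h with
  | @single x y B hxy hδ hB =>
    refine .single (by gcongr) (by nlinarith) ?_
    calc ‖f (s + r * y) - f (s + r * x)‖ ^ p * (s + r * y - (s + r * x)) ^ (1 - p)
        = (|m| * ‖g y - g x‖) ^ p * (r * (y - x)) ^ (1 - p) := by
          rw [hfg, hfg, ← smul_sub, norm_smul, Real.norm_eq_abs, add_sub_add_left_eq_sub, mul_sub]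
      _ = |m| ^ p * r ^ (1 - p) * (‖g y - g x‖ ^ p * (y - x) ^ (1 - p)) := by
          rw [Real.mul_rpow (abs_nonneg m) (norm_nonneg _),
            Real.mul_rpow hr.le (sub_nonneg.2 hxy)]
          ring
      _ ≤ |m| ^ p * r ^ (1 - p) * B := by gcongr
  | glue _ _ hB ih₁ ih₂ =>
    refine .glue ih₁ ih₂ ?_
    rw [← mul_add]
    gcongr

theorem const_smul [NormedSpace ℝ E] (m : ℝ) (h : HasRieszPartition g p δ x y B) :
    HasRieszPartition (fun t => m • g t) p δ x y (|m| ^ p * B) := by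
  have h₁ := affine (f := fun t => m • g t) (m := m) (s := 0) one_pos (fun t => by simp) h
  simpa using h₁

end HasRieszPartition

theorem rpow_add_le_two_rpow_mul {a b : ℝ} (ha : 0 ≤ a) (hb : 0 ≤ b) (hp : 1 ≤ p) :
    (a + b) ^ p ≤ 2 ^ (p - 1) * (a ^ p + b ^ p) := by
  have := NNReal.rpow_add_le_mul_rpow_add_rpow ⟨a, ha⟩ ⟨b, hb⟩ hp
  exact_mod_cast this

theorem HasRieszPartition.add_lipschitz {L : ℝ} (hp : 1 ≤ p) (hL : 0 ≤ L)
    (h : HasRieszPartition f p δ x y B)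
    (hg : ∀ s ∈ Icc x y, ∀ t ∈ Icc x y, ‖g t - g s‖ ≤ L * |t - s|) :
    HasRieszPartition (fun t => f t + g t) p δ x y (2 ^ (p - 1) * (B + L ^ p * (y - x))) := by
  induction h with
  | @single x y B hxy hδ hB =>
    refine .single hxy hδ ?_
    have hxy' : 0 ≤ y - x := sub_nonneg.2 hxy
    have hle : ‖f y + g y - (f x + g x)‖ ≤ ‖f y - f x‖ + L * (y - x) := by
      rw [add_sub_add_comm, ← abs_of_nonneg hxy']
      exact (norm_add_le _ _).trans
        (by gcongr; exact hg x (left_mem_Icc.2 hxy) y (right_mem_Icc.2 hxy))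
    have hlin : (L * (y - x)) ^ p * (y - x) ^ (1 - p) = L ^ p * (y - x) := by
      rw [Real.mul_rpow hL hxy', mul_assoc, ← Real.rpow_add' hxy' (by simp), add_sub_cancel,
        Real.rpow_one]
    calc ‖f y + g y - (f x + g x)‖ ^ p * (y - x) ^ (1 - p)
        ≤ 2 ^ (p - 1) * (‖f y - f x‖ ^ p + (L * (y - x)) ^ p) * (y - x) ^ (1 - p) := by
          gcongr
          exact (Real.rpow_le_rpow (norm_nonneg _) hle (by linarith)).trans
            (rpow_add_le_two_rpow_mul (norm_nonneg _) (by positivity) hp)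
      _ = 2 ^ (p - 1) * (‖f y - f x‖ ^ p * (y - x) ^ (1 - p) + L ^ p * (y - x)) := by
          rw [← hlin]; ring
      _ ≤ 2 ^ (p - 1) * (B + L ^ p * (y - x)) := by gcongr
  | glue h₁ h₂ hB ih₁ ih₂ =>
    refine .glue
      (ih₁ fun s hs t ht => hg s ⟨hs.1, hs.2.trans h₂.le⟩ t ⟨ht.1, ht.2.trans h₂.le⟩)
      (ih₂ fun s hs t ht => hg s ⟨h₁.le.trans hs.1, hs.2⟩ t ⟨h₁.le.trans ht.1, ht.2⟩) ?_
    rw [← mul_add]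
    exact mul_le_mul_of_nonneg_left (by linarith) (by positivity)

theorem mem_of_clamp_lt_clamp {x₁ x₂ : ℝ}
    (h : max u (min v x₁) < max u (min v x₂)) :
    x₁ ≤ max u (min v x₁) ∧ max u (min v x₂) ≤ x₂ := by
  grind

theorem clamp_mem_Icc (huv : u ≤ v) : max u (min v x) ∈ Icc u v :=
  ⟨le_max_left _ _, max_le huv (min_le_left _ _)⟩

theorem HasRieszPartition.of_grid [NormedSpace ℝ E] (hp : 1 ≤ p) (hδ : 0 ≤ δ) {N : ℕ} (hN : 0 < N)
    {B : ℕ → ℝ} (hB : ∀ j < N, 0 ≤ B j) (hu : 0 ≤ u) (huv : u ≤ v) (hv : v ≤ 1)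
    (h : ∀ j < N, ∀ x y : ℝ, 0 ≤ x → x ≤ y → y ≤ 1 → u ≤ (j + x) / N → (j + y) / N ≤ v →
      HasRieszPartition (fun s => f ((j + s) / N)) p (N * δ) x y (B j)) :
    HasRieszPartition f p δ u v ((N : ℝ) ^ (p - 1) * ∑ j ∈ Finset.range N, B j) := by
  have hN' : (0 : ℝ) < N := by exact_mod_cast hN
  set c : ℕ → ℝ := fun j => max u (min v (j / N)) with hc
  have hc_zero : c 0 = u := by simp [hc, hu.trans huv, hu]
  have hc_N : c N = v := by simp [hc, hv, huv, hN'.ne']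
  have hc_mem (j : ℕ) : c j ∈ Icc u v := clamp_mem_Icc huv
  have hc_mono (j : ℕ) : c j ≤ c (j + 1) := by simp only [hc]; gcongr; simp
  rw [Finset.mul_sum, ← hc_zero, ← hc_N]
  refine of_forall_lt hp hδ c _ N fun j hj => ?_
  rcases (hc_mono j).eq_or_lt with heq | hlt
  · rw [← heq]
    exact (refl hp hδ).mono (mul_nonneg (by positivity) (hB j hj))
  · obtain ⟨hleft, hright⟩ := mem_of_clamp_lt_clamp hlt
    replace hleft : j ≤ c j * N := (div_le_iff₀ hN').1 hleft
    replace hright : c (j + 1) * N ≤ j + 1 := (le_div_iff₀ hN').1 (mod_cast hright)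
    have hcell (i : ℕ) : ((j : ℝ) + (c i * N - j)) / N = c i := by field_simp; ring
    have hpart := h j hj (c j * N - j) (c (j + 1) * N - j) (sub_nonneg.2 hleft) (by gcongr)
      (by linarith) ((hc_mem j).1.trans_eq (hcell j).symm)
      ((hcell _).trans_le (hc_mem _).2)
    have haff := hpart.affine (f := f) (m := 1) (r := 1 / N) (s := j / N) (by positivity)
      (fun t => by rw [one_smul]; congr 1; field_simp)
    have hback (i : ℕ) : (j : ℝ) / N + 1 / N * (c i * N - j) = c i := by field_simp; ring
    rw [hback, hback, one_div, inv_mul_cancel_left₀ hN'.ne', Real.inv_rpow hN'.le,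
      ← Real.rpow_neg hN'.le, neg_sub, abs_one, Real.one_rpow, one_mul] at haff
    exact haff

theorem HasRieszPartition.of_grid_smul [NormedSpace ℝ E] (hp : 1 ≤ p) (hδ : 0 ≤ δ) {N : ℕ}
    (hN : 0 < N) {B : ℕ → ℝ} (hB : ∀ j < N, 0 ≤ B j) (hu : 0 ≤ u) (huv : u ≤ v) (hv : v ≤ 1)
    (h : ∀ j < N, ∀ x y : ℝ, 0 ≤ x → x ≤ y → y ≤ 1 → u ≤ (j + x) / N → (j + y) / N ≤ v →
      HasRieszPartition (fun s => (N : ℝ) • f ((j + s) / N)) p (N * δ) x y (B j)) :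
    HasRieszPartition f p δ u v ((∑ j ∈ Finset.range N, B j) / N) := by
  have hN' : (0 : ℝ) < N := by exact_mod_cast hN
  have hgrid := of_grid (f := fun t => (N : ℝ) • f t) hp hδ hN hB hu huv hv h
  have hinv := hgrid.const_smul (N : ℝ)⁻¹
  simp only [inv_smul_smul₀ hN'.ne'] at hinv
  refine hinv.mono (le_of_eq ?_)
  rw [abs_of_pos (inv_pos.2 hN'), ← mul_assoc, Real.inv_rpow hN'.le, ← Real.rpow_neg hN'.le,
    ← Real.rpow_add hN', ← add_sub_assoc, neg_add_cancel, zero_sub, Real.rpow_neg_one,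
    div_eq_inv_mul]

end RieszPartition

section TaylorApprox

variable {n : ℕ} {P : ℂ[X]}

theorem eval_eq_sum_range_of_degree_lt (hP : P.degree < n) (x : ℂ) :
    P.eval x = ∑ k ∈ Finset.range n, P.coeff k * x ^ k := by
  rcases eq_or_ne P 0 with rfl | h₀
  · simp
  · exact Polynomial.eval_eq_sum_range' ((Polynomial.natDegree_lt_iff_degree_lt h₀).2 hP) x

theorem norm_eval_le {B : ℝ} (hP : P.degree < n) (hB : ∀ k, ‖P.coeff k‖ ≤ B) {x : ℂ}
    (hx : ‖x‖ ≤ 1) : ‖P.eval x‖ ≤ n * B := by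
  rw [eval_eq_sum_range_of_degree_lt hP]
  refine (norm_sum_le_of_le _ fun k _ => ?_).trans_eq (by simp : ∑ k ∈ Finset.range n, B = n * B)
  rw [norm_mul, norm_pow]
  exact (mul_le_of_le_one_right (norm_nonneg _) (pow_le_one₀ (norm_nonneg _) hx)).trans (hB k)

theorem norm_pow_sub_pow_le {x y : ℂ} {R : ℝ} (hR : 1 ≤ R) (hx : ‖x‖ ≤ R) (hy : ‖y‖ ≤ R) {k : ℕ}
    (hk : k ≤ n) : ‖x ^ k - y ^ k‖ ≤ n * R ^ n * ‖x - y‖ := by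
  have hterm (i : ℕ) (hi : i ∈ Finset.range k) : ‖x ^ i * y ^ (k - 1 - i)‖ ≤ R ^ n := by
    rw [Finset.mem_range] at hi
    calc ‖x ^ i * y ^ (k - 1 - i)‖ ≤ R ^ i * R ^ (k - 1 - i) := by
          rw [norm_mul, norm_pow, norm_pow]; gcongr
      _ = R ^ (i + (k - 1 - i)) := (pow_add _ _ _).symm
      _ ≤ R ^ n := pow_le_pow_right₀ hR (by lia)
  rw [← (Commute.all x y).geom_sum₂_mul k, norm_mul]
  gcongr
  refine (norm_sum_le_of_le _ hterm).trans ?_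
  rw [Finset.sum_const, Finset.card_range, nsmul_eq_mul]
  gcongr

theorem norm_eval_sub_eval_le {B R : ℝ} (hP : P.degree < n) (hB : ∀ k, ‖P.coeff k‖ ≤ B)
    (hR : 1 ≤ R) {x y : ℂ} (hx : ‖x‖ ≤ R) (hy : ‖y‖ ≤ R) :
    ‖P.eval x - P.eval y‖ ≤ n ^ 2 * R ^ n * B * ‖x - y‖ := by
  have hterm (k : ℕ) (hk : k ∈ Finset.range n) :
      ‖P.coeff k * x ^ k - P.coeff k * y ^ k‖ ≤ B * (n * R ^ n * ‖x - y‖) := by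
    rw [← mul_sub, norm_mul]
    exact mul_le_mul (hB k) (norm_pow_sub_pow_le hR hx hy (Finset.mem_range.1 hk).le)
      (norm_nonneg _) ((norm_nonneg _).trans (hB k))
  rw [eval_eq_sum_range_of_degree_lt hP, eval_eq_sum_range_of_degree_lt hP,
    ← Finset.sum_sub_distrib]
  refine (norm_sum_le_of_le _ hterm).trans_eq ?_
  rw [Finset.sum_const, Finset.card_range, nsmul_eq_mul]
  ring

theorem exists_norm_coeff_le_of_nodes (s : Finset ℂ) :
    ∃ C : ℝ, 1 ≤ C ∧ ∀ P : ℂ[X], P.degree < s.card → ∀ D : ℝ, 0 ≤ D →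
      (∀ x ∈ s, ‖P.eval x‖ ≤ D) → ∀ k, ‖P.coeff k‖ ≤ C * D := by
  set b : ℂ → ℂ[X] := Lagrange.basis s id with hb
  have hnn : 0 ≤ ∑ x ∈ s, ∑ k ∈ Finset.range s.card, ‖(b x).coeff k‖ := by positivity
  refine ⟨1 + ∑ x ∈ s, ∑ k ∈ Finset.range s.card, ‖(b x).coeff k‖, by linarith,
    fun P hP D hD h k => ?_⟩
  rcases lt_or_ge k s.card with hk | hk
  · have hcoeff : P.coeff k = ∑ x ∈ s, P.eval x * (b x).coeff k := by
      conv_lhs => rw [Lagrange.eq_interpolate (Set.injOn_id _) hP, Lagrange.interpolate_apply]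
      simp only [Polynomial.finsetSum_coeff, Polynomial.coeff_C_mul, id, hb]
    have hterm (x : ℂ) (hx : x ∈ s) : ‖P.eval x * (b x).coeff k‖
        ≤ (∑ k ∈ Finset.range s.card, ‖(b x).coeff k‖) * D := by
      rw [norm_mul, mul_comm]
      gcongr
      · exact Finset.single_le_sum (f := fun k => ‖(b x).coeff k‖) (fun _ _ => norm_nonneg _)
          (Finset.mem_range.2 hk)
      · exact h x hx
    rw [hcoeff]
    refine (norm_sum_le_of_le _ hterm).trans ?_
    rw [← Finset.sum_mul]
    gcongr
    linarith
  · rw [(Polynomial.degree_lt_iff_coeff_zero _ _).1 hP k hk, norm_zero]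
    positivity

theorem degree_comp_C_mul_X_lt (hP : P.degree < n) (r : ℂ) :
    (P.comp (Polynomial.C r * Polynomial.X)).degree < n := by
  rw [Polynomial.degree_lt_iff_coeff_zero] at hP ⊢
  intro k hk
  rw [Polynomial.comp_C_mul_X_coeff, hP k hk, zero_mul]

theorem norm_coeff_comp_C_mul_X_le {B : ℝ} (hB : ∀ k, ‖P.coeff k‖ ≤ B) {r : ℂ} (hr : ‖r‖ ≤ 1)
    (k : ℕ) : ‖(P.comp (Polynomial.C r * Polynomial.X)).coeff k‖ ≤ B := by
  rw [Polynomial.comp_C_mul_X_coeff, norm_mul, norm_pow]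
  exact (mul_le_of_le_one_right (norm_nonneg _) (pow_le_one₀ (norm_nonneg _) hr)).trans (hB k)

theorem abs_sub_le_one {s t : ℝ} (hs : s ∈ Icc (0 : ℝ) 1) (ht : t ∈ Icc (0 : ℝ) 1) :
    |t - s| ≤ 1 :=
  (abs_sub_le_of_le_of_le ht.1 ht.2 hs.1 hs.2).trans_eq (sub_zero 1)

/-- `P`, of degree less than `n`, is an approximate Taylor polynomial of order `n` of `f` at `t₀`
on the unit interval, with error constant `κ`. -/
structure IsTaylorApprox (n : ℕ) (κ : ℝ) (f : ℝ → ℂ) (t₀ : ℝ) (P : ℂ[X]) : Prop where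
  degree_lt : P.degree < n
  norm_sub_le : ∀ t ∈ Icc (0 : ℝ) 1, ‖f t - P.eval ((t - t₀ : ℝ) : ℂ)‖ ≤ κ * |t - t₀| ^ n

/-- The functions with an approximate Taylor polynomial of order `n` and error constant `κ` at
every point of `[0, 1]`; by Whitney's theorem these are the `C^{n-1,1}` functions, and the size of
`κ` corresponds to that of the Lipschitz constant of the derivative of order `n - 1`. -/
def WhitneyClass (n : ℕ) (κ : ℝ) (f : ℝ → ℂ) : Prop :=
  ∀ t₀ ∈ Icc (0 : ℝ) 1, ∃ P, IsTaylorApprox n κ f t₀ P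

/-- The functions in the Whitney class of order `n` whose approximate Taylor polynomials can be
chosen with coefficients bounded by the error constant `B`; this plays the role of a ball of
`C^{n-1,1}([0, 1])`. -/
def BoundedWhitneyClass (n : ℕ) (B : ℝ) (f : ℝ → ℂ) : Prop :=
  ∀ t₀ ∈ Icc (0 : ℝ) 1, ∃ P, IsTaylorApprox n B f t₀ P ∧ ∀ k, ‖P.coeff k‖ ≤ B

namespace IsTaylorApprox

variable {κ κ' t₀ : ℝ} {f : ℝ → ℂ}

theorem mono (h : IsTaylorApprox n κ f t₀ P) (hκ : κ ≤ κ') : IsTaylorApprox n κ' f t₀ P :=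
  ⟨h.degree_lt, fun t ht => (h.norm_sub_le t ht).trans (by gcongr)⟩

theorem coeff_zero (hn : n ≠ 0) (h₀ : t₀ ∈ Icc (0 : ℝ) 1) (h : IsTaylorApprox n κ f t₀ P) :
    P.coeff 0 = f t₀ := by
  have hle := h.norm_sub_le t₀ h₀
  rw [sub_self, Complex.ofReal_zero, ← Polynomial.coeff_zero_eq_eval_zero, abs_zero, zero_pow hn,
    mul_zero] at hle
  exact (sub_eq_zero.1 (norm_le_zero_iff.1 hle)).symm

theorem comp_affine {x r : ℝ} (hx : 0 ≤ x) (hr : 0 ≤ r) (hxr : x + r ≤ 1)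
    (h : IsTaylorApprox n κ f (x + r * t₀) P) :
    IsTaylorApprox n (κ * r ^ n) (fun s => f (x + r * s)) t₀
      (P.comp (Polynomial.C (r : ℂ) * Polynomial.X)) := by
  refine ⟨degree_comp_C_mul_X_lt h.degree_lt _, fun s hs => ?_⟩
  have hle := h.norm_sub_le (x + r * s)
    ⟨by nlinarith [hs.1, hs.2], by nlinarith [hs.1, hs.2]⟩
  rw [add_sub_add_left_eq_sub, ← mul_sub, abs_mul, mul_pow, abs_of_nonneg hr, ← mul_assoc] at hle
  simpa using hle

theorem const_mul (m : ℂ) (h : IsTaylorApprox n κ f t₀ P) :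
    IsTaylorApprox n (‖m‖ * κ) (fun s => m * f s) t₀ (Polynomial.C m * P) := by
  refine ⟨?_, fun s hs => ?_⟩
  · have hP := h.degree_lt
    rw [Polynomial.degree_lt_iff_coeff_zero] at hP ⊢
    exact fun k hk => by rw [Polynomial.coeff_C_mul, hP k hk, mul_zero]
  · rw [Polynomial.eval_C_mul, ← mul_sub, norm_mul, mul_assoc]
    gcongr
    exact h.norm_sub_le s hs

end IsTaylorApprox

namespace WhitneyClass

variable {κ κ' : ℝ} {f : ℝ → ℂ}

theorem mono (h : WhitneyClass n κ f) (hκ : κ ≤ κ') : WhitneyClass n κ' f := fun t₀ h₀ =>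
  (h t₀ h₀).imp fun _ hP => hP.mono hκ

theorem nonneg (h : WhitneyClass n κ f) : 0 ≤ κ := by
  obtain ⟨P, hP⟩ := h 0 ⟨le_rfl, zero_le_one⟩
  simpa using (norm_nonneg _).trans (hP.norm_sub_le 1 ⟨zero_le_one, le_rfl⟩)

theorem comp_affine (h : WhitneyClass n κ f) {x r : ℝ} (hx : 0 ≤ x) (hr : 0 ≤ r)
    (hxr : x + r ≤ 1) : WhitneyClass n (κ * r ^ n) (fun s => f (x + r * s)) := fun t₀ h₀ => by
  obtain ⟨P, hP⟩ := h (x + r * t₀) ⟨by nlinarith [h₀.1, h₀.2], by nlinarith [h₀.1, h₀.2]⟩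
  exact ⟨_, hP.comp_affine hx hr hxr⟩

theorem const_mul (h : WhitneyClass n κ f) (m : ℂ) :
    WhitneyClass n (‖m‖ * κ) (fun s => m * f s) := fun t₀ h₀ =>
  let ⟨_, hP⟩ := h t₀ h₀
  ⟨_, hP.const_mul m⟩

end WhitneyClass

namespace BoundedWhitneyClass

variable {B B' : ℝ} {f : ℝ → ℂ}

theorem whitneyClass (h : BoundedWhitneyClass n B f) : WhitneyClass n B f := fun t₀ h₀ =>
  (h t₀ h₀).imp fun _ hP => hP.1

theorem nonneg (h : BoundedWhitneyClass n B f) : 0 ≤ B :=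
  let ⟨_, _, hB⟩ := h 0 (by simp)
  (norm_nonneg _).trans (hB 0)

theorem mono (h : BoundedWhitneyClass n B f) (hB : B ≤ B') : BoundedWhitneyClass n B' f :=
  fun t₀ h₀ => (h t₀ h₀).imp fun _ hP => ⟨hP.1.mono hB, fun k => (hP.2 k).trans hB⟩

theorem norm_le (hn : n ≠ 0) (h : BoundedWhitneyClass n B f) {t : ℝ} (ht : t ∈ Icc (0 : ℝ) 1) :
    ‖f t‖ ≤ B := by
  obtain ⟨P, hP, hB⟩ := h t ht
  exact hP.coeff_zero hn ht ▸ hB 0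

theorem norm_sub_le (hn : n ≠ 0) (h : BoundedWhitneyClass n B f) {s t : ℝ}
    (hs : s ∈ Icc (0 : ℝ) 1) (ht : t ∈ Icc (0 : ℝ) 1) :
    ‖f t - f s‖ ≤ (n ^ 2 + 1) * B * |t - s| := by
  obtain ⟨P, hP, hB⟩ := h s hs
  have hst := abs_sub_le_one hs ht
  have hnorm : ‖((t - s : ℝ) : ℂ)‖ = |t - s| := by rw [Complex.norm_real, Real.norm_eq_abs]
  have hpoly := norm_eval_sub_eval_le hP.degree_lt hB le_rfl (hnorm.trans_le hst)
    (norm_zero.trans_le zero_le_one)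
  rw [← Polynomial.coeff_zero_eq_eval_zero, hP.coeff_zero hn hs, sub_zero, one_pow, mul_one,
    hnorm] at hpoly
  have hremainder := hP.norm_sub_le t ht
  calc ‖f t - f s‖ ≤ B * |t - s| ^ n + n ^ 2 * B * |t - s| :=
        (norm_sub_le_norm_sub_add_norm_sub _ _ _).trans (add_le_add hremainder hpoly)
    _ ≤ B * |t - s| + n ^ 2 * B * |t - s| := by
        gcongr
        · exact h.nonneg
        · exact pow_le_of_le_one (abs_nonneg _) hst hn
    _ = (n ^ 2 + 1) * B * |t - s| := by ring

theorem continuousOn (hn : n ≠ 0) (h : BoundedWhitneyClass n B f) :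
    ContinuousOn f (Icc (0 : ℝ) 1) := by
  have hB := h.nonneg
  refine (LipschitzOnWith.of_dist_le_mul (K := ⟨(n ^ 2 + 1) * B, by positivity⟩)
    fun x hx y hy => ?_).continuousOn
  rw [dist_eq_norm, Real.dist_eq]
  exact h.norm_sub_le hn hy hx

theorem comp_affine (h : BoundedWhitneyClass n B f) {x r : ℝ} (hx : 0 ≤ x) (hr : 0 ≤ r)
    (hxr : x + r ≤ 1) : BoundedWhitneyClass n B (fun s => f (x + r * s)) := fun t₀ h₀ => by
  have hr₁ : r ≤ 1 := by linarith
  obtain ⟨P, hP, hB⟩ := h (x + r * t₀) ⟨by nlinarith [h₀.1, h₀.2], by nlinarith [h₀.1, h₀.2]⟩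
  refine ⟨_, (hP.comp_affine hx hr hxr).mono ?_, norm_coeff_comp_C_mul_X_le hB ?_⟩
  · exact mul_le_of_le_one_right h.nonneg (pow_le_one₀ hr hr₁)
  · rwa [Complex.norm_real, Real.norm_eq_abs, abs_of_nonneg hr]

theorem of_local {σ D K M : ℝ} (hσ : 0 < σ) (hK : 0 ≤ K) (hD : 0 ≤ D)
    (hM : ∀ t ∈ Icc (0 : ℝ) 1, ‖f t‖ ≤ M)
    (h : ∀ t₀ ∈ Icc (0 : ℝ) 1, ∃ P : ℂ[X], P.degree < n ∧ (∀ k, ‖P.coeff k‖ ≤ D) ∧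
      ∀ t ∈ Icc (0 : ℝ) 1, |t - t₀| < σ →
        ‖f t - P.eval ((t - t₀ : ℝ) : ℂ)‖ ≤ K * |t - t₀| ^ n) :
    BoundedWhitneyClass n (D + K + (M + n * D) / σ ^ n) f := by
  intro t₀ h₀
  obtain ⟨P, hP, hcoeff, hnear⟩ := h t₀ h₀
  have hM₀ : 0 ≤ M := (norm_nonneg _).trans (hM t₀ h₀)
  have hfar₀ : 0 ≤ (M + n * D) / σ ^ n := by positivity
  refine ⟨P, ⟨hP, fun t ht => ?_⟩, fun k => (hcoeff k).trans (by linarith)⟩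
  rcases lt_or_ge |t - t₀| σ with hlt | hge
  · refine (hnear t ht hlt).trans ?_
    gcongr
    linarith
  · have hP_le : ‖P.eval ((t - t₀ : ℝ) : ℂ)‖ ≤ n * D :=
      norm_eval_le hP hcoeff ((Complex.norm_real _).trans_le (abs_sub_le_one h₀ ht))
    calc ‖f t - P.eval ((t - t₀ : ℝ) : ℂ)‖ ≤ M + n * D :=
          (_root_.norm_sub_le _ _).trans (add_le_add (hM t ht) hP_le)
      _ = (M + n * D) / σ ^ n * σ ^ n := by field_simp
      _ ≤ (D + K + (M + n * D) / σ ^ n) * |t - t₀| ^ n := by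
          gcongr
          linarith

end BoundedWhitneyClass

theorem exists_unit_forall_add_mul_mem_Icc {t₀ : ℝ} (h₀ : t₀ ∈ Icc (0 : ℝ) 1) :
    ∃ ε : ℝ, |ε| = 1 ∧ ∀ s ∈ Icc (0 : ℝ) (1 / 2), t₀ + ε * s ∈ Icc (0 : ℝ) 1 := by
  rcases le_total t₀ (1 / 2) with h | h
  · exact ⟨1, abs_one, fun s hs => ⟨by linarith [h₀.1, hs.1], by linarith [hs.2]⟩⟩
  · exact ⟨-1, by rw [abs_neg, abs_one], fun s hs => ⟨by linarith [hs.2], by linarith [h₀.2, hs.1]⟩⟩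

theorem exists_finset_card_eq_subset_Icc_half (n : ℕ) :
    ∃ s : Finset ℂ, s.card = n ∧ ∀ x ∈ s, ∃ t ∈ Icc (0 : ℝ) (1 / 2), (t : ℂ) = x := by
  obtain ⟨s, hs, hcard⟩ := (Icc_infinite (by norm_num : (0 : ℝ) < 1 / 2)).exists_subset_card_eq n
  refine ⟨s.map ⟨_, Complex.ofReal_injective⟩, by rw [Finset.card_map, hcard], fun x hx => ?_⟩
  obtain ⟨t, ht, rfl⟩ := Finset.mem_map.1 hx
  exact ⟨t, hs ht, rfl⟩

theorem exists_forall_norm_coeff_le (n : ℕ) :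
    ∃ C : ℝ, 1 ≤ C ∧ ∀ (B κ : ℝ) (f : ℝ → ℂ) (t₀ : ℝ) (P : ℂ[X]), t₀ ∈ Icc (0 : ℝ) 1 →
      IsTaylorApprox n κ f t₀ P → κ ≤ B → (∀ t ∈ Icc (0 : ℝ) 1, ‖f t‖ ≤ B) →
      ∀ k, ‖P.coeff k‖ ≤ C * B := by
  obtain ⟨s, rfl, hs⟩ := exists_finset_card_eq_subset_Icc_half n
  obtain ⟨C, hC, h⟩ := exists_norm_coeff_le_of_nodes s
  refine ⟨C * 2, by linarith, fun B κ f t₀ P h₀ hP hκ hB k => ?_⟩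
  have hB₀ : 0 ≤ B := (norm_nonneg _).trans (hB t₀ h₀)
  have hval (t : ℝ) (ht : t ∈ Icc (0 : ℝ) 1) : ‖P.eval ((t - t₀ : ℝ) : ℂ)‖ ≤ 2 * B :=
    calc ‖P.eval ((t - t₀ : ℝ) : ℂ)‖ ≤ ‖f t‖ + ‖f t - P.eval ((t - t₀ : ℝ) : ℂ)‖ :=
          norm_le_insert _ _
      _ ≤ B + B * 1 := by
          refine add_le_add (hB t ht) (((hP.mono hκ).norm_sub_le t ht).trans ?_)
          gcongr
          exact pow_le_one₀ (abs_nonneg _) (abs_sub_le_one h₀ ht)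
      _ = 2 * B := by ring
  obtain ⟨ε, hε, hmem⟩ := exists_unit_forall_add_mul_mem_Icc h₀
  have hcoeff := h _ (degree_comp_C_mul_X_lt hP.degree_lt ε) (2 * B) (by positivity)
    (fun x hx => by
      obtain ⟨t, ht, rfl⟩ := hs x hx
      simpa using hval _ (hmem t ht)) k
  rwa [Polynomial.comp_C_mul_X_coeff, norm_mul, norm_pow, Complex.norm_real, Real.norm_eq_abs, hε,
    one_pow, mul_one, ← mul_assoc] at hcoeff

theorem WhitneyClass.exists_bounded (n : ℕ) :
    ∃ C : ℝ, 1 ≤ C ∧ ∀ (B : ℝ) (f : ℝ → ℂ), WhitneyClass n B f →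
      (∀ t ∈ Icc (0 : ℝ) 1, ‖f t‖ ≤ B) → BoundedWhitneyClass n (C * B) f := by
  obtain ⟨C, hC, h⟩ := exists_forall_norm_coeff_le n
  refine ⟨C, hC, fun B f hf hB t₀ h₀ => ?_⟩
  obtain ⟨P, hP⟩ := hf t₀ h₀
  exact ⟨P, hP.mono (le_mul_of_one_le_left ((norm_nonneg _).trans (hB t₀ h₀)) hC),
    h B B f t₀ P h₀ hP le_rfl hB⟩

end TaylorApprox

section HolomorphicComposition

theorem exists_taylor_polynomial (n : ℕ) {σ B : ℝ} (hσ : 0 < σ) (hσ₁ : σ ≤ 1) {G : ℂ → ℂ}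
    (hG : DifferentiableOn ℂ G (Metric.ball 0 σ)) (hB : ∀ z ∈ Metric.ball (0 : ℂ) σ, ‖G z‖ ≤ B) :
    ∃ P : ℂ[X], P.degree < n ∧ (∀ k, ‖P.coeff k‖ ≤ B * (2 / σ) ^ n) ∧
      ∀ z ∈ Metric.ball (0 : ℂ) σ, ‖G z - P.eval z‖ ≤ B * (2 / σ) ^ n * ‖z‖ ^ n := by
  induction n generalizing G B with
  | zero =>
    have hB₀ : 0 ≤ B := (norm_nonneg _).trans (hB 0 (Metric.mem_ball_self hσ))
    exact ⟨0, by simp, by simpa using hB₀, by simpa using hB⟩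
  | succ n ih =>
    have h₀ : (0 : ℂ) ∈ Metric.ball (0 : ℂ) σ := Metric.mem_ball_self hσ
    have hB₀ : 0 ≤ B := (norm_nonneg _).trans (hB 0 h₀)
    have hslope : ∀ z ∈ Metric.ball (0 : ℂ) σ, ‖dslope G 0 z‖ ≤ 2 * B / σ := fun z hz => by
      refine Complex.norm_dslope_le_div_of_mapsTo_ball hG (fun w hw => ?_) hz
      rw [Metric.mem_closedBall, dist_eq_norm, two_mul]
      exact (norm_sub_le _ _).trans (add_le_add (hB w hw) (hB 0 h₀))
    obtain ⟨Q, hQ, hcoeff, hGQ⟩ := ih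
      ((Complex.differentiableOn_dslope (Metric.ball_mem_nhds _ hσ)).2 hG) hslope
    have hconst : 2 * B / σ * (2 / σ) ^ n = B * (2 / σ) ^ (n + 1) := by ring
    rw [hconst] at hcoeff hGQ
    refine ⟨Polynomial.X * Q + Polynomial.C (G 0), ?_, fun k => ?_, fun z hz => ?_⟩
    · rw [Polynomial.degree_lt_iff_coeff_zero] at hQ ⊢
      rintro (_ | k) hk
      · lia
      · simpa using hQ k (by lia)
    · cases k with
      | zero =>
        simp only [Polynomial.coeff_add, Polynomial.coeff_X_mul_zero, Polynomial.coeff_C_zero,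
          zero_add]
        refine (hB 0 h₀).trans (le_mul_of_one_le_right hB₀ (one_le_pow₀ ?_))
        rw [le_div_iff₀ hσ]
        linarith
      | succ k => simpa using hcoeff k
    · have hG_eq : G z = z * dslope G 0 z + G 0 := by
        rw [← sub_eq_iff_eq_add, ← smul_eq_mul, ← sub_smul_dslope, sub_zero]
      rw [Polynomial.eval_add, Polynomial.eval_mul, Polynomial.eval_X, Polynomial.eval_C, hG_eq,
        add_sub_add_right_eq_sub, ← mul_sub, norm_mul, pow_succ' ‖z‖, mul_left_comm]
      exact mul_le_mul_of_nonneg_left (hGQ z hz) (norm_nonneg z)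

variable {d n : ℕ}

theorem BoundedWhitneyClass.exists_comp_holomorphic (hn : n ≠ 0) {B r B' : ℝ} (hB : 0 ≤ B)
    (hr : 0 < r) (hB' : 0 ≤ B') :
    ∃ B'' : ℝ, 0 ≤ B'' ∧ ∀ (a : ℝ → Fin d → ℂ) (F : (Fin d → ℂ) → ℂ) (U : Set (Fin d → ℂ)),
      (∀ i, BoundedWhitneyClass n B (fun t => a t i)) →
      (∀ t ∈ Icc (0 : ℝ) 1, Metric.ball (a t) r ⊆ U) →
      DifferentiableOn ℂ F U → (∀ x ∈ U, ‖F x‖ ≤ B') →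
      (∀ x ∈ U, ∀ y ∈ U, ‖F x - F y‖ ≤ B' * ‖x - y‖) →
      BoundedWhitneyClass n B'' (fun t => F (a t)) := by
  set σ : ℝ := min 1 (r / (n ^ 2 * B + 1))
  have hσ : 0 < σ := lt_min one_pos (by positivity)
  have hσ₁ : σ ≤ 1 := min_le_left _ _
  set D := B' * (2 / σ) ^ n
  have hD : 0 ≤ D := by positivity
  refine ⟨D + (B' * B + D) + (B' + n * D) / σ ^ n, by positivity,
    fun a F U ha hU hF hFB hFL => of_local hσ (by positivity) hD
      (fun t ht => hFB _ (hU t ht (Metric.mem_ball_self hr))) fun t₀ h₀ => ?_⟩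
  choose P hP hcoeff using fun i => ha i t₀ h₀
  have hmem : ∀ z ∈ Metric.ball (0 : ℂ) σ, (fun i => (P i).eval z) ∈ U := fun z hz => by
    rw [mem_ball_zero_iff] at hz
    refine hU t₀ h₀ ?_
    rw [Metric.mem_ball, dist_pi_lt_iff hr]
    intro i
    rw [dist_eq_norm, ← (hP i).coeff_zero hn h₀, Polynomial.coeff_zero_eq_eval_zero]
    refine (norm_eval_sub_eval_le (hP i).degree_lt (hcoeff i) le_rfl (hz.le.trans hσ₁)
      (norm_zero.trans_le zero_le_one)).trans_lt ?_
    have hz_lt := (lt_div_iff₀ (by positivity)).1 (hz.trans_le (min_le_right _ _))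
    rw [sub_zero, one_pow]
    nlinarith [norm_nonneg z]
  have hG : DifferentiableOn ℂ (fun z => F fun i => (P i).eval z) (Metric.ball 0 σ) :=
    hF.comp (differentiable_pi.2 fun i => (P i).differentiable).differentiableOn hmem
  obtain ⟨Q, hQ, hQcoeff, hFQ⟩ :=
    exists_taylor_polynomial n hσ hσ₁ hG fun z hz => hFB _ (hmem z hz)
  refine ⟨Q, hQ, hQcoeff, fun t ht hlt => ?_⟩
  have hnorm : ‖((t - t₀ : ℝ) : ℂ)‖ = |t - t₀| := by rw [Complex.norm_real, Real.norm_eq_abs]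
  have hz : ((t - t₀ : ℝ) : ℂ) ∈ Metric.ball (0 : ℂ) σ := by rwa [mem_ball_zero_iff, hnorm]
  have happrox : ‖a t - fun i => (P i).eval ((t - t₀ : ℝ) : ℂ)‖ ≤ B * |t - t₀| ^ n :=
    (pi_norm_le_iff_of_nonneg (by positivity)).2 fun i => (hP i).norm_sub_le t ht
  calc ‖F (a t) - Q.eval ((t - t₀ : ℝ) : ℂ)‖
      ≤ B' * (B * |t - t₀| ^ n) + D * |t - t₀| ^ n := by
        refine (norm_sub_le_norm_sub_add_norm_sub _ (F fun i => (P i).eval _) _).trans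
          (add_le_add ((hFL _ (hU t ht (Metric.mem_ball_self hr)) _ (hmem _ hz)).trans ?_) ?_)
        · gcongr
        · exact (hFQ _ hz).trans_eq (by rw [hnorm])
    _ = (B' * B + D) * |t - t₀| ^ n := by ring

theorem BoundedWhitneyClass.exists_comp_contDiff (hn : n ≠ 0) {F : (Fin d → ℂ) → ℂ}
    (hF : ContDiff ℂ 1 F) {B : ℝ} (hB : 0 ≤ B) :
    ∃ B' : ℝ, 0 ≤ B' ∧ ∀ a : ℝ → Fin d → ℂ, (∀ i, BoundedWhitneyClass n B (fun t => a t i)) →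
      BoundedWhitneyClass n B' (fun t => F (a t)) := by
  have hK := isCompact_closedBall (0 : Fin d → ℂ) (B + 1)
  obtain ⟨C₁, hC₁⟩ := hK.exists_bound_of_continuousOn hF.continuous.continuousOn
  obtain ⟨C₂, hC₂⟩ := hK.exists_bound_of_continuousOn
    (hF.continuous_fderiv one_ne_zero).continuousOn
  obtain ⟨B', hB', h⟩ := exists_comp_holomorphic (d := d) hn hB one_pos (le_max_left 0 (max C₁ C₂))
  refine ⟨B', hB', fun a ha => h a F (Metric.ball 0 (B + 1)) ha (fun t ht => ?_)
    (hF.differentiable one_ne_zero).differentiableOn (fun x hx => ?_) fun x hx y hy => ?_⟩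
  · have hat : ‖a t‖ ≤ B := (pi_norm_le_iff_of_nonneg hB).2 fun i => (ha i).norm_le hn ht
    refine Metric.ball_subset_ball' ?_
    rw [dist_zero_right]
    linarith
  · exact (hC₁ x (Metric.ball_subset_closedBall hx)).trans (by simp)
  · exact (convex_ball _ _).norm_image_sub_le_of_norm_fderiv_le (𝕜 := ℂ)
      (fun z _ => hF.differentiable one_ne_zero z)
      (fun z hz => (hC₂ z (Metric.ball_subset_closedBall hz)).trans (by simp)) hy hx

end HolomorphicComposition

section PolynomialsOnGrid

variable {n : ℕ} {P : ℂ[X]}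

theorem norm_eval_eq_prod_roots (P : ℂ[X]) (x : ℂ) :
    ‖P.eval x‖ = ‖P.leadingCoeff‖ * (P.roots.map fun z => ‖x - z‖).prod := by
  have hprod (s : Multiset ℂ) : ‖s.prod‖ = (s.map norm).prod :=
    (Multiset.prod_hom s (normHom (α := ℂ))).symm
  rw [(IsAlgClosed.splits P).eval_eq_prod_roots, norm_mul, hprod, Multiset.map_map]
  rfl

theorem pow_mul_norm_eval_le_norm_eval (hP : P.natDegree ≤ n) {ε : ℝ} (hε : 0 < ε) (hε₁ : ε ≤ 1)
    {x y : ℂ} (hxy : ‖x - y‖ ≤ 1) (h : ∀ z ∈ P.roots, ε ≤ ‖x - z‖) :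
    (ε / 2) ^ n * ‖P.eval y‖ ≤ ‖P.eval x‖ := by
  have hroot (z : ℂ) (hz : z ∈ P.roots) : ε / 2 * ‖y - z‖ ≤ ‖x - z‖ := by
    have htri : ‖y - z‖ ≤ 1 + ‖x - z‖ := by
      rw [show y - z = x - z - (x - y) by ring]
      linarith [norm_sub_le (x - z) (x - y)]
    nlinarith [h z hz, norm_nonneg (x - z)]
  have hprod : (ε / 2) ^ P.roots.card * (P.roots.map fun z => ‖y - z‖).prod
      ≤ (P.roots.map fun z => ‖x - z‖).prod := by
    rw [show (ε / 2) ^ P.roots.card = (P.roots.map fun _ => ε / 2).prod by simp,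
      ← Multiset.prod_map_mul]
    exact Multiset.prod_map_le_prod_map₀ _ _ (fun z _ => by positivity) hroot
  have hexp : (ε / 2) ^ n ≤ (ε / 2) ^ P.roots.card :=
    pow_le_pow_of_le_one (by positivity) (by linarith) ((Polynomial.card_roots' P).trans hP)
  calc (ε / 2) ^ n * ‖P.eval y‖ ≤ (ε / 2) ^ P.roots.card * ‖P.eval y‖ := by gcongr
    _ = ‖P.leadingCoeff‖ * ((ε / 2) ^ P.roots.card * (P.roots.map fun z => ‖y - z‖).prod) := by
        rw [norm_eval_eq_prod_roots]; ring
    _ ≤ ‖P.eval x‖ := by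
        rw [norm_eval_eq_prod_roots P x]
        gcongr

theorem norm_eval_le_of_near_root (hP : P.degree < n) {B δ : ℝ} (hB : ∀ k, ‖P.coeff k‖ ≤ B)
    {x z : ℂ} (hx : ‖x‖ ≤ 1) (hz : P.eval z = 0) (hxz : ‖x - z‖ ≤ δ) (hδ : δ ≤ 2) :
    ‖P.eval x‖ ≤ n ^ 2 * 3 ^ n * B * δ := by
  have hz₃ : ‖z‖ ≤ 3 := by
    rw [show z = x - (x - z) by ring]
    linarith [norm_sub_le x (x - z)]
  have hB₀ : 0 ≤ B := (norm_nonneg _).trans (hB 0)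
  have h := norm_eval_sub_eval_le hP hB (by norm_num) (hx.trans (by norm_num)) hz₃
  rw [hz, sub_zero] at h
  exact h.trans (by gcongr)

/-- The `k`-th closed cell of the uniform subdivision of `[0, 1]` into `N` intervals. -/
def gridCell (N k : ℕ) : Set ℝ := Icc ((k : ℝ) / N) (((k : ℝ) + 1) / N)

theorem gridCell_subset_Icc {N k : ℕ} (hk : k < N) : gridCell N k ⊆ Icc 0 1 := by
  refine Icc_subset_Icc (by positivity) ?_
  have hN : (0 : ℝ) < N := by exact_mod_cast hk.pos
  rw [div_le_one hN]
  exact_mod_cast hk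

theorem abs_sub_le_of_mem_gridCell {N k : ℕ} {s t : ℝ} (hs : s ∈ gridCell N k)
    (ht : t ∈ gridCell N k) : |s - t| ≤ 1 / N := by
  have hwidth : ((k : ℝ) + 1) / N - k / N = 1 / N := by ring
  rw [abs_sub_le_iff]
  constructor <;> linarith [hs.1, hs.2, ht.1, ht.2]

theorem add_div_mem_gridCell {N j : ℕ} {s : ℝ} (hs : s ∈ Icc (0 : ℝ) 1) :
    ((j : ℝ) + s) / N ∈ gridCell N j := by
  constructor <;> gcongr <;> linarith [hs.1, hs.2]

open Classical in
/-- The cells of the uniform subdivision of `[0, 1]` into `N` intervals which contain a point at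
distance at most `1 / N` from a root of `P`. -/
def cellsNearRoots (P : ℂ[X]) (N : ℕ) : Finset ℕ :=
  {k ∈ Finset.range N | ∃ z ∈ P.roots, ∃ t ∈ gridCell N k, ‖(t : ℂ) - z‖ ≤ 1 / N}

theorem mem_cellsNearRoots {N k : ℕ} : k ∈ cellsNearRoots P N ↔
    k < N ∧ ∃ z ∈ P.roots, ∃ t ∈ gridCell N k, ‖(t : ℂ) - z‖ ≤ 1 / N := by
  simp only [cellsNearRoots, Finset.mem_filter, Finset.mem_range]

theorem mem_Icc_floor_of_mem_gridCell {N k : ℕ} (hN : N ≠ 0) {t : ℝ} (ht : t ∈ gridCell N k)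
    {z : ℂ} (hz : ‖(t : ℂ) - z‖ ≤ 1 / N) :
    (k : ℤ) ∈ Finset.Icc (⌊N * z.re⌋ - 2) (⌊N * z.re⌋ + 1) := by
  have hN₀ : (0 : ℝ) < N := by positivity
  obtain ⟨hlt, hgt⟩ := abs_le.1 ((by simpa using Complex.abs_re_le_norm ((t : ℂ) - z) :
    |t - z.re| ≤ ‖(t : ℂ) - z‖).trans hz)
  have hlow : (k : ℝ) - 1 ≤ N * z.re := by
    rw [← div_le_iff₀' hN₀, sub_div]; linarith [ht.1]
  have hupp : N * z.re ≤ (k : ℝ) + 2 := by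
    rw [← le_div_iff₀' hN₀, show ((k : ℝ) + 2) / N = (k + 1) / N + 1 / N by ring]; linarith [ht.2]
  have hfloor : ⌊N * z.re⌋ ≤ (k : ℤ) + 2 := by exact_mod_cast (Int.floor_le _).trans hupp
  have hfloor' : (k : ℤ) - 1 ≤ ⌊N * z.re⌋ := Int.le_floor.2 (by exact_mod_cast hlow)
  rw [Finset.mem_Icc]
  lia

theorem card_cellsNearRoots_le (P : ℂ[X]) {N : ℕ} (hN : N ≠ 0) :
    (cellsNearRoots P N).card ≤ 4 * P.natDegree := by
  classical
  have hsub : (cellsNearRoots P N).map Nat.castEmbedding ⊆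
      P.roots.toFinset.biUnion fun z => Finset.Icc (⌊N * z.re⌋ - 2) (⌊N * z.re⌋ + 1) := by
    intro j hj
    obtain ⟨k, hk, rfl⟩ := Finset.mem_map.1 hj
    obtain ⟨-, z, hz, t, ht, hd⟩ := mem_cellsNearRoots.1 hk
    exact Finset.mem_biUnion.2
      ⟨z, Multiset.mem_toFinset.2 hz, mem_Icc_floor_of_mem_gridCell hN ht hd⟩
  have hfour (m : ℤ) : (Finset.Icc (m - 2) (m + 1)).card = 4 := by rw [Int.card_Icc]; lia
  calc (cellsNearRoots P N).card = ((cellsNearRoots P N).map Nat.castEmbedding).card :=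
        (Finset.card_map _).symm
    _ ≤ P.roots.toFinset.card * 4 := (Finset.card_le_card hsub).trans
        (Finset.card_biUnion_le_card_mul _ _ _ fun z _ => (hfour _).le)
    _ ≤ 4 * P.natDegree := by
        linarith [(Multiset.toFinset_card_le P.roots).trans (Polynomial.card_roots' P)]

theorem le_norm_eval_of_notMem_cellsNearRoots (hP : P.natDegree ≤ n) {N k : ℕ} (hk : k < N)
    (hkS : k ∉ cellsNearRoots P N) {s t : ℝ} (hs : s ∈ Icc (0 : ℝ) 1) (ht : t ∈ gridCell N k) :
    (1 / N / 2 : ℝ) ^ n * ‖P.eval (s : ℂ)‖ ≤ ‖P.eval (t : ℂ)‖ := by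
  have hN₁ : (1 : ℝ) ≤ N := by exact_mod_cast hk.pos
  have hclose : ‖(t : ℂ) - s‖ ≤ 1 := by
    rw [← Complex.ofReal_sub, Complex.norm_real]
    exact abs_sub_le_one hs (gridCell_subset_Icc hk ht)
  refine pow_mul_norm_eval_le_norm_eval hP (by positivity)
    (div_le_one_of_le₀ hN₁ (by positivity)) hclose fun z hz => ?_
  by_contra! hlt
  exact hkS (mem_cellsNearRoots.2 ⟨hk, z, hz, t, ht, hlt.le⟩)

theorem norm_eval_le_of_mem_cellsNearRoots (hP : P.degree < n) {B : ℝ}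
    (hB : ∀ k, ‖P.coeff k‖ ≤ B) {N k : ℕ} (hkS : k ∈ cellsNearRoots P N) {t : ℝ}
    (ht : t ∈ gridCell N k) : ‖P.eval (t : ℂ)‖ ≤ n ^ 2 * 3 ^ n * B * (2 / N) := by
  obtain ⟨hk, z, hz, s, hs, hsz⟩ := mem_cellsNearRoots.1 hkS
  have hN₁ : (1 : ℝ) ≤ N := by exact_mod_cast hk.pos
  have ht₀₁ := gridCell_subset_Icc hk ht
  have ht_norm : ‖(t : ℂ)‖ ≤ 1 := by
    rw [Complex.norm_real, norm_of_nonneg ht₀₁.1]; exact ht₀₁.2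
  have hts : ‖(t : ℂ) - s‖ ≤ 1 / N := by
    rw [← Complex.ofReal_sub, Complex.norm_real]
    exact abs_sub_le_of_mem_gridCell ht hs
  have hdist : ‖(t : ℂ) - z‖ ≤ 2 / N := by
    linarith [norm_sub_le_norm_sub_add_norm_sub (t : ℂ) s z,
      (by ring : 2 / (N : ℝ) = 1 / N + 1 / N)]
  exact norm_eval_le_of_near_root hP hB ht_norm (Polynomial.mem_roots'.1 hz).2 hdist
    (div_le_self zero_le_two hN₁)

theorem exists_cells_dichotomy_polynomial (n : ℕ) (B : ℝ) :
    ∃ L : ℝ, 1 ≤ L ∧ ∀ (P : ℂ[X]) (N : ℕ), N ≠ 0 → P.degree < n → (∀ k, ‖P.coeff k‖ ≤ B) →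
      ∃ S : Finset ℕ,
        (∀ k < N, k ∉ S → ∀ t ∈ gridCell N k, (1 / N / 2 : ℝ) ^ n * (1 / N) ≤ ‖P.eval (t : ℂ)‖) ∧
        (∀ k < N, k ∈ S → ∀ t ∈ gridCell N k, ‖P.eval (t : ℂ)‖ ≤ L / N) ∧
        ((∃ t ∈ Icc (0 : ℝ) 1, 1 / (N : ℝ) ≤ ‖P.eval (t : ℂ)‖) → S.card ≤ 4 * n) := by
  refine ⟨max 1 (n ^ 2 * 3 ^ n * B * 2), le_max_left _ _, fun P N hN hP hB => ?_⟩
  by_cases hex : ∃ s ∈ Icc (0 : ℝ) 1, 1 / (N : ℝ) ≤ ‖P.eval (s : ℂ)‖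
  · obtain ⟨s, hs, hbig⟩ := hex
    have hdeg : P.natDegree ≤ n := Polynomial.natDegree_le_of_degree_le hP.le
    refine ⟨cellsNearRoots P N, fun k hk hkS t ht => ?_, fun k _ hkS t ht => ?_, fun _ =>
      (card_cellsNearRoots_le P hN).trans (by lia)⟩
    · exact le_trans (by gcongr) (le_norm_eval_of_notMem_cellsNearRoots hdeg hk hkS hs ht)
    · refine (norm_eval_le_of_mem_cellsNearRoots hP hB hkS ht).trans ?_
      rw [mul_div_assoc']
      gcongr
      exact le_max_right _ _
  · push Not at hex
    refine ⟨Finset.range N, fun k hk hkS => absurd (Finset.mem_range.2 hk) hkS,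
      fun k hk _ t ht => ?_, fun ⟨s, hs, h⟩ => absurd h (hex s hs).not_ge⟩
    exact (hex t (gridCell_subset_Icc hk ht)).le.trans (by gcongr; exact le_max_left _ _)

theorem WhitneyClass.exists_cells_dichotomy (n : ℕ) :
    ∃ L : ℝ, 1 ≤ L ∧ ∀ (f : ℝ → ℂ) (N : ℕ) (κ : ℝ), 2 ≤ N →
      κ ≤ (1 / N / 2 : ℝ) ^ n * (1 / N) / 2 → WhitneyClass n κ f →
      (∀ t ∈ Icc (0 : ℝ) 1, ‖f t‖ ≤ 1) → ∃ S : Finset ℕ,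
        (∀ k < N, k ∉ S → ∀ t ∈ gridCell N k, (1 / N / 2 : ℝ) ^ n * (1 / N) / 2 ≤ ‖f t‖) ∧
        (∀ k < N, k ∈ S → ∀ t ∈ gridCell N k, ‖f t‖ ≤ 2 * L / N) ∧
        ((∃ t ∈ Icc (0 : ℝ) 1, ‖f t‖ = 1) → S.card ≤ 4 * n) := by
  obtain ⟨C, -, hC⟩ := exists_forall_norm_coeff_le n
  obtain ⟨L, hL, hdich⟩ := exists_cells_dichotomy_polynomial n (C * 1)
  refine ⟨L, hL, fun f N κ hN hκ hf hf₁ => ?_⟩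
  have hN₂ : (2 : ℝ) ≤ N := by exact_mod_cast hN
  have hhalf : 1 / (N : ℝ) ≤ 1 / 2 := by gcongr
  have hpos : 0 < 1 / (N : ℝ) := by positivity
  have hpow : (1 / N / 2 : ℝ) ^ n * (1 / N) ≤ 1 / N :=
    mul_le_of_le_one_left (by positivity) (pow_le_one₀ (by positivity) (by linarith))
  have hzero : (0 : ℝ) ∈ Icc (0 : ℝ) 1 := ⟨le_rfl, zero_le_one⟩
  obtain ⟨P, hP⟩ := hf 0 hzero
  have hclose (t : ℝ) (ht : t ∈ Icc (0 : ℝ) 1) : ‖f t - P.eval (t : ℂ)‖ ≤ κ := by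
    have h := hP.norm_sub_le t ht
    simp only [sub_zero] at h
    exact h.trans (mul_le_of_le_one_right hf.nonneg (pow_le_one₀ (abs_nonneg _)
      (by rw [abs_of_nonneg ht.1]; exact ht.2)))
  obtain ⟨S, hlarge, hsmall, hcard⟩ := hdich P N (by lia) hP.degree_lt
    (hC 1 κ f 0 P hzero hP (by linarith) hf₁)
  refine ⟨S, fun k hk hkS t ht => ?_, fun k hk hkS t ht => ?_, fun ⟨t, ht, hft⟩ =>
    hcard ⟨t, ht, ?_⟩⟩
  · linarith [hlarge k hk hkS t ht, hclose t (gridCell_subset_Icc hk ht),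
      norm_sub_norm_le (P.eval (t : ℂ)) (f t), norm_sub_rev (P.eval (t : ℂ)) (f t)]
  · have hL' : 1 / (N : ℝ) ≤ L / N := by gcongr
    linarith [hsmall k hk hkS t ht, hclose t (gridCell_subset_Icc hk ht),
      norm_sub_norm_le (f t) (P.eval (t : ℂ)), (by ring : 2 * L / N = L / N + L / N)]
  · linarith [hclose t ht, norm_sub_norm_le (f t) (P.eval (t : ℂ))]

end PolynomialsOnGrid

section MonicPolynomials

variable {d : ℕ}

/-- The monic polynomial `X ^ d + a (d - 1) X ^ (d - 1) + ⋯ + a 0` of degree `d` with lower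
coefficients `a`. -/
def monicOfCoeffs (a : Fin d → ℂ) : ℂ[X] := Polynomial.X ^ d + Polynomial.ofFn d a

theorem eval_monicOfCoeffs (a : Fin d → ℂ) (z : ℂ) :
    (monicOfCoeffs a).eval z = z ^ d + ∑ i, a i * z ^ (i : ℕ) := by
  simp [monicOfCoeffs, Polynomial.ofFn_eq_sum_monomial, Polynomial.eval_finsetSum]

theorem monic_monicOfCoeffs (a : Fin d → ℂ) : (monicOfCoeffs a).Monic :=
  Polynomial.monic_X_pow_add (Polynomial.ofFn_degree_lt a)

theorem natDegree_monicOfCoeffs (a : Fin d → ℂ) : (monicOfCoeffs a).natDegree = d := by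
  refine Polynomial.natDegree_eq_of_degree_eq_some ?_
  rw [monicOfCoeffs, Polynomial.degree_add_eq_left_of_degree_lt] <;> rw [Polynomial.degree_X_pow]
  exact Polynomial.ofFn_degree_lt a

theorem card_roots_monicOfCoeffs (a : Fin d → ℂ) : (monicOfCoeffs a).roots.card = d := by
  rw [← (IsAlgClosed.splits _).natDegree_eq_card_roots, natDegree_monicOfCoeffs]

theorem coeff_monicOfCoeffs (a : Fin d → ℂ) (i : Fin d) : (monicOfCoeffs a).coeff i = a i := by
  rw [monicOfCoeffs, Polynomial.coeff_add, Polynomial.coeff_X_pow, if_neg i.2.ne, zero_add,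
    Polynomial.ofFn_coeff_eq_val_of_lt]

theorem monicOfCoeffs_injective : Function.Injective (monicOfCoeffs (d := d)) := fun a b hab => by
  ext i
  rw [← coeff_monicOfCoeffs a, hab, coeff_monicOfCoeffs]

theorem monicOfCoeffs_coeff {P : ℂ[X]} (hP : P.Monic) (hd : P.natDegree = d) :
    monicOfCoeffs (fun i : Fin d => P.coeff i) = P := by
  ext j
  rw [monicOfCoeffs, Polynomial.coeff_add, Polynomial.coeff_X_pow]
  rcases lt_trichotomy j d with hj | rfl | hj
  · rw [if_neg hj.ne, zero_add, Polynomial.ofFn_coeff_eq_val_of_lt _ hj]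
  · rw [if_pos rfl, Polynomial.ofFn_coeff_eq_zero_of_ge _ le_rfl, add_zero, ← hd,
      hP.coeff_natDegree]
  · rw [if_neg hj.ne', zero_add, Polynomial.ofFn_coeff_eq_zero_of_ge _ hj.le,
      Polynomial.coeff_eq_zero_of_natDegree_lt (hd.trans_lt hj)]

theorem exists_root_near (hd : d ≠ 0) (a : Fin d → ℂ) {z : ℂ} {ε : ℝ} (hε : 0 < ε)
    (h : ‖(monicOfCoeffs a).eval z‖ ≤ ε ^ d) : ∃ w ∈ (monicOfCoeffs a).roots, ‖z - w‖ ≤ ε := by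
  by_contra! hfar
  have hne : (monicOfCoeffs a).roots ≠ 0 := by
    rwa [← Multiset.card_pos, card_roots_monicOfCoeffs, Nat.pos_iff_ne_zero]
  have hprod := Multiset.prod_map_lt_prod_map hne (fun _ => ε) (fun w => ‖z - w‖)
    (fun _ _ => hε) hfar
  rw [norm_eval_eq_prod_roots, (monic_monicOfCoeffs a).leadingCoeff, norm_one, one_mul] at h
  rw [Multiset.map_const', Multiset.prod_replicate, card_roots_monicOfCoeffs] at hprod
  exact hprod.not_ge h

theorem norm_root_le {a : Fin d → ℂ} {M : ℝ} (hM : 0 ≤ M) (ha : ∀ i, ‖a i‖ ≤ M ^ (d - (i : ℕ)))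
    {z : ℂ} (hz : (monicOfCoeffs a).eval z = 0) : ‖z‖ ≤ d * M := by
  rw [eval_monicOfCoeffs] at hz
  rcases Nat.eq_zero_or_pos d with rfl | hd
  · simp at hz
  have hd₁ : (1 : ℝ) ≤ d := by exact_mod_cast hd
  by_contra! hlt
  have hMz : M ≤ ‖z‖ := by nlinarith
  have hz₀ : 0 < ‖z‖ := lt_of_le_of_lt (by positivity) hlt
  have hterm (i : Fin d) : ‖a i * z ^ (i : ℕ)‖ ≤ M * ‖z‖ ^ (d - 1) := by
    have hi := i.2
    calc ‖a i * z ^ (i : ℕ)‖ ≤ M ^ (d - (i : ℕ)) * ‖z‖ ^ (i : ℕ) := by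
          rw [norm_mul, norm_pow]; gcongr; exact ha i
      _ = M * (M ^ (d - 1 - (i : ℕ)) * ‖z‖ ^ (i : ℕ)) := by
          rw [← mul_assoc, ← pow_succ']; congr 2; lia
      _ ≤ M * (‖z‖ ^ (d - 1 - (i : ℕ)) * ‖z‖ ^ (i : ℕ)) := by gcongr
      _ = M * ‖z‖ ^ (d - 1) := by rw [← pow_add]; congr 2; lia
  have hpow : ‖z‖ * ‖z‖ ^ (d - 1) ≤ d * M * ‖z‖ ^ (d - 1) := by
    calc ‖z‖ * ‖z‖ ^ (d - 1) = ‖∑ i, a i * z ^ (i : ℕ)‖ := by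
          rw [← pow_succ', Nat.sub_add_cancel hd, ← norm_pow, eq_neg_of_add_eq_zero_left hz,
            norm_neg]
      _ ≤ ∑ _i : Fin d, M * ‖z‖ ^ (d - 1) := norm_sum_le_of_le _ fun i _ => hterm i
      _ = d * M * ‖z‖ ^ (d - 1) := by simp [mul_assoc]
  exact hlt.not_ge (le_of_mul_le_mul_right hpow (by positivity))

theorem norm_root_le_of_norm_le {a : Fin d → ℂ} {B : ℝ} (hB : 0 ≤ B) (ha : ∀ i, ‖a i‖ ≤ B) {z : ℂ}
    (hz : (monicOfCoeffs a).eval z = 0) : ‖z‖ ≤ d * (B + 1) :=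
  norm_root_le (by positivity) (fun i => (ha i).trans <| (le_add_of_nonneg_right zero_le_one).trans
    (le_self_pow₀ (by linarith) (Nat.sub_ne_zero_of_lt i.2))) hz

theorem eval_monicOfCoeffs_smul (a : Fin d → ℂ) (m z : ℂ) :
    (monicOfCoeffs fun i => m ^ (d - (i : ℕ)) * a i).eval (m * z)
      = m ^ d * (monicOfCoeffs a).eval z := by
  rw [eval_monicOfCoeffs, eval_monicOfCoeffs, mul_add, Finset.mul_sum, mul_pow]
  congr 1
  refine Finset.sum_congr rfl fun i _ => ?_
  rw [mul_pow, ← pow_sub_mul_pow m i.2.le]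
  ring

theorem norm_eval_monicOfCoeffs_sub_le (a b : Fin d → ℂ) {z : ℂ} {R ε : ℝ} (hR : 1 ≤ R)
    (hz : ‖z‖ ≤ R) (h : ∀ i, ‖a i - b i‖ ≤ ε) :
    ‖(monicOfCoeffs a).eval z - (monicOfCoeffs b).eval z‖ ≤ d * R ^ d * ε := by
  have hterm (i : Fin d) : ‖a i * z ^ (i : ℕ) - b i * z ^ (i : ℕ)‖ ≤ R ^ d * ε := by
    rw [← sub_mul, norm_mul, norm_pow, mul_comm]
    gcongr
    · exact (pow_le_pow_left₀ (norm_nonneg z) hz _).trans (pow_le_pow_right₀ hR i.2.le)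
    · exact h i
  rw [eval_monicOfCoeffs, eval_monicOfCoeffs, add_sub_add_left_eq_sub, ← Finset.sum_sub_distrib]
  refine (norm_sum_le_of_le _ fun i _ => hterm i).trans_eq ?_
  simp [mul_assoc]

end MonicPolynomials

section ContinuousRoots

variable {d n : ℕ} {a : ℝ → Fin d → ℂ} {l : ℝ → ℂ} {u v : ℝ}

/-- `l` is a continuous choice, over a subinterval `[u, v]` of `[0, 1]`, of a root of the monic
polynomial with lower coefficients `a t`. -/
structure IsContinuousRoot (a : ℝ → Fin d → ℂ) (l : ℝ → ℂ) (u v : ℝ) : Prop where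
  zero_le : 0 ≤ u
  le : u ≤ v
  le_one : v ≤ 1
  continuousOn : ContinuousOn l (Icc u v)
  eval_eq_zero : ∀ t ∈ Icc u v, (monicOfCoeffs (a t)).eval (l t) = 0

theorem IsContinuousRoot.Icc_subset (h : IsContinuousRoot a l u v) : Icc u v ⊆ Icc 0 1 :=
  Icc_subset_Icc h.zero_le h.le_one

theorem norm_sub_le_of_forall_exists_near {r : ℝ} (huv : u ≤ v) (hr : 0 ≤ r)
    (hl : ContinuousOn l (Icc u v)) (Z : Multiset ℂ)
    (h : ∀ t ∈ Icc u v, ∃ w ∈ Z, ‖l t - w‖ ≤ r) : ‖l v - l u‖ ≤ Z.card * (2 * r) := by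
  classical
  -- the interval of values of `‖l t - l u‖` is covered by intervals of length `2 * r`
  have hcover : Icc (0 : ℝ) ‖l v - l u‖ ⊆
      ⋃ w ∈ Z.toFinset, Icc (‖w - l u‖ - r) (‖w - l u‖ + r) := by
    have hivt := intermediate_value_Icc huv (hl.sub (continuousOn_const (c := l u))).norm
    simp only [Pi.sub_apply, sub_self, norm_zero] at hivt
    refine hivt.trans ?_
    rintro _ ⟨t, ht, rfl⟩
    obtain ⟨w, hw, hwr⟩ := h t ht
    refine mem_iUnion₂.2 ⟨w, Multiset.mem_toFinset.2 hw, ?_⟩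
    have hclose : |‖l t - l u‖ - ‖w - l u‖| ≤ r :=
      (abs_norm_sub_norm_le _ _).trans (by rwa [sub_sub_sub_cancel_right])
    rw [abs_le] at hclose
    constructor <;> linarith [hclose.1, hclose.2]
  have hvol := (measure_mono (μ := volume) hcover).trans (measure_biUnion_finset_le _ _)
  have hlength (w : ℂ) : ‖w - l u‖ + r - (‖w - l u‖ - r) = 2 * r := by ring
  simp only [Real.volume_Icc, sub_zero, hlength, Finset.sum_const, nsmul_eq_mul] at hvol
  rw [← ENNReal.ofReal_natCast, ← ENNReal.ofReal_mul (by positivity),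
    ENNReal.ofReal_le_ofReal_iff (by positivity)] at hvol
  refine hvol.trans ?_
  gcongr
  exact Multiset.toFinset_card_le Z

theorem IsContinuousRoot.norm_sub_le (hn : n ≠ 0) (hd : d ≠ 0) {B : ℝ} (hB : 0 ≤ B)
    (ha : ∀ i, BoundedWhitneyClass n B (fun t => a t i)) (h : IsContinuousRoot a l u v) {ε : ℝ}
    (hε : 0 < ε) (hεd : d * (d * (B + 1)) ^ d * ((n ^ 2 + 1) * B * (v - u)) ≤ ε ^ d) :
    ‖l v - l u‖ ≤ d * (2 * ε) := by
  set R : ℝ := d * (B + 1)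
  have hd₁ : (1 : ℝ) ≤ d := by exact_mod_cast Nat.one_le_iff_ne_zero.2 hd
  have hR : 1 ≤ R := by nlinarith
  have hlR (t : ℝ) (ht : t ∈ Icc u v) : ‖l t‖ ≤ R :=
    norm_root_le_of_norm_le hB (fun i => (ha i).norm_le hn (h.Icc_subset ht)) (h.eval_eq_zero t ht)
  have hmove := norm_sub_le_of_forall_exists_near h.le hε.le h.continuousOn
    (monicOfCoeffs (a u)).roots fun t ht => by
      refine exists_root_near hd _ hε (le_trans ?_ hεd)
      have hsub := norm_eval_monicOfCoeffs_sub_le (a u) (a t) hR (hlR t ht)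
        (ε := (n ^ 2 + 1) * B * (v - u)) fun i => by
          refine ((ha i).norm_sub_le hn (h.Icc_subset ht)
            (h.Icc_subset (left_mem_Icc.2 h.le))).trans ?_
          gcongr
          rw [abs_sub_comm, abs_of_nonneg (by linarith [ht.1])]
          linarith [ht.2]
      rwa [h.eval_eq_zero t ht, sub_zero] at hsub
  rwa [card_roots_monicOfCoeffs] at hmove

theorem exists_forall_rpow_mul_rpow_le (hn : n ≠ 0) (hd : d ≠ 0) {p : ℝ} (hp : 1 ≤ p)
    (hpd : 0 ≤ 1 - p + p / d) {B : ℝ} (hB : 0 ≤ B) :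
    ∃ C : ℝ, 0 ≤ C ∧ ∀ (a : ℝ → Fin d → ℂ) (l : ℝ → ℂ) (u v : ℝ),
      (∀ i, BoundedWhitneyClass n B (fun t => a t i)) → IsContinuousRoot a l u v →
      ‖l v - l u‖ ^ p * (v - u) ^ (1 - p) ≤ C := by
  set K : ℝ := d * (d * (B + 1)) ^ d * ((n ^ 2 + 1) * B) + 1
  have hK : 0 < K := by positivity
  refine ⟨(d * (2 * K ^ (1 / (d : ℝ)))) ^ p, by positivity, fun a l u v ha h => ?_⟩
  rcases eq_or_lt_of_le h.le with rfl | huv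
  · rw [sub_self, norm_zero, Real.zero_rpow (by linarith), zero_mul]
    positivity
  have hlen : 0 < v - u := sub_pos.2 huv
  set ε : ℝ := (K * (v - u)) ^ (1 / (d : ℝ)) with hε
  have hεd : ε ^ d = K * (v - u) := by
    rw [hε, one_div, Real.rpow_inv_natCast_pow (by positivity) hd]
  have hsub := h.norm_sub_le hn hd hB ha (ε := ε) (by positivity) (by rw [hεd]; nlinarith)
  have hscale : d * (2 * ε) = d * (2 * K ^ (1 / (d : ℝ))) * (v - u) ^ (1 / (d : ℝ)) := by
    rw [hε, Real.mul_rpow hK.le hlen.le]; ring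
  calc ‖l v - l u‖ ^ p * (v - u) ^ (1 - p) ≤ (d * (2 * ε)) ^ p * (v - u) ^ (1 - p) := by gcongr
    _ = (d * (2 * K ^ (1 / (d : ℝ)))) ^ p * (v - u) ^ (1 - p + p / d) := by
        rw [hscale, Real.mul_rpow (by positivity) (by positivity), ← Real.rpow_mul hlen.le,
          mul_assoc, ← Real.rpow_add hlen]
        congr 2; ring
    _ ≤ (d * (2 * K ^ (1 / (d : ℝ)))) ^ p := mul_le_of_le_one_right (by positivity)
        (Real.rpow_le_one hlen.le (by linarith [h.zero_le, h.le_one]) hpd)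

end ContinuousRoots

section HolomorphicSplitting

open Filter Topology

variable {d k m : ℕ}

theorem continuous_eval_monicOfCoeffs :
    Continuous fun x : (Fin d → ℂ) × ℂ => (monicOfCoeffs x.1).eval x.2 := by
  simp only [eval_monicOfCoeffs]
  fun_prop

/-- The lower coefficients of the product of the monic polynomials with lower coefficients `x.1`
and `x.2`. -/
def mulCoeffs (x : (Fin k → ℂ) × (Fin m → ℂ)) : Fin (k + m) → ℂ :=
  fun i => (monicOfCoeffs x.1 * monicOfCoeffs x.2).coeff i

theorem monicOfCoeffs_mulCoeffs (x : (Fin k → ℂ) × (Fin m → ℂ)) :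
    monicOfCoeffs (mulCoeffs x) = monicOfCoeffs x.1 * monicOfCoeffs x.2 :=
  monicOfCoeffs_coeff ((monic_monicOfCoeffs x.1).mul (monic_monicOfCoeffs x.2)) <| by
    rw [(monic_monicOfCoeffs x.1).natDegree_mul (monic_monicOfCoeffs x.2),
      natDegree_monicOfCoeffs, natDegree_monicOfCoeffs]

theorem contDiff_coeff_monicOfCoeffs (j : ℕ) :
    ContDiff ℂ 1 fun a : Fin d → ℂ => (monicOfCoeffs a).coeff j := by
  simp only [monicOfCoeffs, Polynomial.coeff_add]
  exact contDiff_const.add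
    ((Polynomial.lcoeff ℂ j).comp (Polynomial.ofFn d)).toContinuousLinearMap.contDiff

theorem contDiff_mulCoeffs : ContDiff ℂ 1 (mulCoeffs (k := k) (m := m)) := by
  refine contDiff_pi.2 fun i => ?_
  simp only [mulCoeffs, Polynomial.coeff_mul]
  exact ContDiff.sum fun j _ => ((contDiff_coeff_monicOfCoeffs _).comp contDiff_fst).mul
    ((contDiff_coeff_monicOfCoeffs _).comp contDiff_snd)

theorem fderiv_mulCoeffs_apply (x y : (Fin k → ℂ) × (Fin m → ℂ)) :
    fderiv ℂ mulCoeffs x y = fun i : Fin (k + m) =>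
      (Polynomial.ofFn k y.1 * monicOfCoeffs x.2
        + monicOfCoeffs x.1 * Polynomial.ofFn m y.2).coeff i := by
  have hline : HasDerivAt (fun s : ℂ => x + s • y) y 0 := by
    simpa using ((hasDerivAt_id (0 : ℂ)).smul_const y).const_add x
  have hfderiv : HasFDerivAt mulCoeffs (fderiv ℂ mulCoeffs x) (x + (0 : ℂ) • y) := by
    simpa using (contDiff_mulCoeffs.differentiable one_ne_zero x).hasFDerivAt
  refine (hfderiv.comp_hasDerivAt (0 : ℂ) hline).unique (hasDerivAt_pi.2 fun i => ?_)
  set b := (Polynomial.ofFn k y.1 * monicOfCoeffs x.2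
    + monicOfCoeffs x.1 * Polynomial.ofFn m y.2).coeff i
  set c := (Polynomial.ofFn k y.1 * Polynomial.ofFn m y.2).coeff i with hc
  have hexpand : (fun s : ℂ => (mulCoeffs ∘ fun s => x + s • y) s i)
      = fun s => mulCoeffs x i + s * b + s ^ 2 * c := by
    funext s
    rw [hc, mulCoeffs, ← Polynomial.coeff_C_mul, ← Polynomial.coeff_C_mul, ← Polynomial.coeff_add,
      ← Polynomial.coeff_add]
    simp only [Function.comp_apply, mulCoeffs, monicOfCoeffs, Prod.fst_add, Prod.snd_add,
      Prod.smul_fst, Prod.smul_snd, map_add, map_smul, Polynomial.smul_eq_C_mul, Polynomial.C_pow]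
    congr 1
    ring
  rw [hexpand]
  simpa using (((hasDerivAt_id (0 : ℂ)).mul_const b).const_add (mulCoeffs x i)).fun_add
    (((hasDerivAt_id (0 : ℂ)).pow 2).mul_const c)

theorem eq_zero_of_mul_add_mul_eq_zero {P Q F G : ℂ[X]} (hPQ : IsCoprime P Q)
    (hF : F.degree < P.degree) (hG : G.degree < Q.degree) (h : F * Q + P * G = 0) :
    F = 0 ∧ G = 0 := by
  have hP_dvd : P ∣ F :=
    hPQ.dvd_of_dvd_mul_right ⟨-G, by rw [mul_neg]; exact eq_neg_of_add_eq_zero_left h⟩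
  have hQ_dvd : Q ∣ G := hPQ.symm.dvd_of_dvd_mul_left
    ⟨-F, by rw [mul_neg, mul_comm Q]; exact eq_neg_of_add_eq_zero_right h⟩
  exact ⟨Polynomial.eq_zero_of_dvd_of_degree_lt hP_dvd hF,
    Polynomial.eq_zero_of_dvd_of_degree_lt hQ_dvd hG⟩

theorem degree_monicOfCoeffs (a : Fin d → ℂ) : (monicOfCoeffs a).degree = d := by
  rw [Polynomial.degree_eq_natDegree (monic_monicOfCoeffs a).ne_zero, natDegree_monicOfCoeffs]

theorem fderiv_mulCoeffs_injective {x : (Fin k → ℂ) × (Fin m → ℂ)}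
    (hx : IsCoprime (monicOfCoeffs x.1) (monicOfCoeffs x.2)) :
    Function.Injective (fderiv ℂ mulCoeffs x) := by
  refine (injective_iff_map_eq_zero _).2 fun y hy => ?_
  rw [fderiv_mulCoeffs_apply] at hy
  set F := Polynomial.ofFn k y.1
  set G := Polynomial.ofFn m y.2
  have hFdeg : F.degree < (monicOfCoeffs x.1).degree :=
    (Polynomial.ofFn_degree_lt y.1).trans_eq (degree_monicOfCoeffs x.1).symm
  have hGdeg : G.degree < (monicOfCoeffs x.2).degree :=
    (Polynomial.ofFn_degree_lt y.2).trans_eq (degree_monicOfCoeffs x.2).symm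
  have hdeg : (F * monicOfCoeffs x.2 + monicOfCoeffs x.1 * G).degree < (k + m : ℕ) := by
    rw [Nat.cast_add, ← degree_monicOfCoeffs x.1, ← degree_monicOfCoeffs x.2]
    refine (Polynomial.degree_add_le _ _).trans_lt (max_lt ?_ ?_) <;> rw [Polynomial.degree_mul]
    · exact WithBot.add_lt_add_right (by simp [degree_monicOfCoeffs]) hFdeg
    · exact WithBot.add_lt_add_left (by simp [degree_monicOfCoeffs]) hGdeg
  have hzero : F * monicOfCoeffs x.2 + monicOfCoeffs x.1 * G = 0 := by
    ext j
    rcases lt_or_ge j (k + m) with hj | hj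
    · exact congrFun hy ⟨j, hj⟩
    · exact Polynomial.coeff_eq_zero_of_degree_lt (hdeg.trans_le (by exact_mod_cast hj))
  obtain ⟨hF₀, hG₀⟩ := eq_zero_of_mul_add_mul_eq_zero hx hFdeg hGdeg hzero
  exact Prod.ext (Polynomial.injective_ofFn k (hF₀.trans (map_zero _).symm))
    (Polynomial.injective_ofFn m (hG₀.trans (map_zero _).symm))

theorem exists_local_inverse_mulCoeffs {x : (Fin k → ℂ) × (Fin m → ℂ)}
    (hx : IsCoprime (monicOfCoeffs x.1) (monicOfCoeffs x.2)) :
    ∃ g : (Fin (k + m) → ℂ) → (Fin k → ℂ) × (Fin m → ℂ), ContDiffAt ℂ 1 g (mulCoeffs x) ∧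
      g (mulCoeffs x) = x ∧ ∀ᶠ a in 𝓝 (mulCoeffs x), mulCoeffs (g a) = a := by
  have hsmooth : ContDiffAt ℂ 1 mulCoeffs x := contDiff_mulCoeffs.contDiffAt
  let e : ((Fin k → ℂ) × (Fin m → ℂ)) ≃L[ℂ] (Fin (k + m) → ℂ) :=
    ((fderiv ℂ mulCoeffs x).toLinearMap.linearEquivOfInjective (fderiv_mulCoeffs_injective hx)
      (by simp)).toContinuousLinearEquiv
  have hderiv : HasFDerivAt mulCoeffs
      (e : ((Fin k → ℂ) × (Fin m → ℂ)) →L[ℂ] (Fin (k + m) → ℂ)) x :=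
    (contDiff_mulCoeffs.differentiable one_ne_zero x).hasFDerivAt
  exact ⟨hsmooth.localInverse hderiv one_ne_zero, hsmooth.to_localInverse hderiv one_ne_zero,
    hsmooth.localInverse_apply_image hderiv one_ne_zero,
    (hsmooth.hasStrictFDerivAt' hderiv one_ne_zero).eventually_right_inverse⟩

theorem eventually_forall_not_common_root {x₀ : (Fin k → ℂ) × (Fin m → ℂ)}
    (hx : IsCoprime (monicOfCoeffs x₀.1) (monicOfCoeffs x₀.2)) :
    ∀ᶠ x in 𝓝 x₀, ∀ z,
      ¬((monicOfCoeffs x.1).eval z = 0 ∧ (monicOfCoeffs x.2).eval z = 0) := by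
  have hcoprime (z : ℂ) :
      ¬((monicOfCoeffs x₀.1).eval z = 0 ∧ (monicOfCoeffs x₀.2).eval z = 0) := by
    rintro ⟨h₁, h₂⟩
    obtain ⟨u, v, huv⟩ := hx
    simpa [h₁, h₂] using congrArg (Polynomial.eval z) huv
  have hcompact : ∀ᶠ x in 𝓝 x₀, ∀ z ∈ Metric.closedBall (0 : ℂ) (k * (‖x₀‖ + 1 + 1)),
      ¬((monicOfCoeffs x.1).eval z = 0 ∧ (monicOfCoeffs x.2).eval z = 0) := by
    refine (isCompact_closedBall _ _).eventually_forall_of_forall_eventually fun z _ => ?_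
    refine ((isClosed_eq (continuous_eval_monicOfCoeffs.comp (by fun_prop : Continuous
      fun q : ((Fin k → ℂ) × (Fin m → ℂ)) × ℂ => (q.1.1, q.2))) continuous_const).inter
      (isClosed_eq (continuous_eval_monicOfCoeffs.comp (by fun_prop : Continuous
        fun q : ((Fin k → ℂ) × (Fin m → ℂ)) × ℂ => (q.1.2, q.2)))
          continuous_const)).isOpen_compl.mem_nhds (hcoprime z)
  filter_upwards [hcompact, continuous_norm.continuousAt.eventually_lt_const (lt_add_one ‖x₀‖)]
    with x hx hnorm z hz
  refine hx z (mem_closedBall_zero_iff.2 (norm_root_le_of_norm_le (by positivity) (fun i => ?_)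
    hz.1)) hz
  exact ((norm_le_pi_norm x.1 i).trans (norm_fst_le x)).trans hnorm.le

/-- `F` factors, for `a ∈ U`, the monic polynomial with lower coefficients `a` into two monic
polynomials without common roots, depending holomorphically on `a`; the constant `B` bounds `F` and
is a Lipschitz constant of `F`. -/
structure IsHolomorphicSplitting (F : (Fin d → ℂ) → (Fin k → ℂ) × (Fin m → ℂ))
    (U : Set (Fin d → ℂ)) (B : ℝ) : Prop where
  differentiableOn : DifferentiableOn ℂ F U
  norm_le : ∀ a ∈ U, ‖F a‖ ≤ B
  norm_sub_le : ∀ a ∈ U, ∀ b ∈ U, ‖F a - F b‖ ≤ B * ‖a - b‖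
  mul_eq : ∀ a ∈ U, monicOfCoeffs (F a).1 * monicOfCoeffs (F a).2 = monicOfCoeffs a
  not_common_root : ∀ a ∈ U, ∀ z,
    ¬((monicOfCoeffs (F a).1).eval z = 0 ∧ (monicOfCoeffs (F a).2).eval z = 0)

/-- The monic polynomials with lower coefficients in `U` split holomorphically into two factors of
smaller degrees, with constant `B`. -/
def SplitsOn (U : Set (Fin d → ℂ)) (B : ℝ) : Prop :=
  ∃ k < d, ∃ m < d, ∃ F : (Fin d → ℂ) → (Fin k → ℂ) × (Fin m → ℂ), IsHolomorphicSplitting F U B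

theorem SplitsOn.mono {U V : Set (Fin d → ℂ)} {B B' : ℝ} (h : SplitsOn U B) (hV : V ⊆ U)
    (hB : B ≤ B') : SplitsOn V B' := by
  obtain ⟨k, hk, m, hm, F, hF⟩ := h
  exact ⟨k, hk, m, hm, F, hF.differentiableOn.mono hV, fun a ha => (hF.norm_le a (hV ha)).trans hB,
    fun a ha b hb => (hF.norm_sub_le a (hV ha) b (hV hb)).trans (by gcongr),
    fun a ha => hF.mul_eq a (hV ha), fun a ha => hF.not_common_root a (hV ha)⟩

theorem exists_splitsOn_ball_mulCoeffs (hk : k ≠ 0) (hm : m ≠ 0) {x : (Fin k → ℂ) × (Fin m → ℂ)}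
    (hx : IsCoprime (monicOfCoeffs x.1) (monicOfCoeffs x.2)) :
    ∃ r > 0, ∃ B ≥ 0, SplitsOn (Metric.ball (mulCoeffs x) r) B := by
  obtain ⟨g, hg, hgx, hright⟩ := exists_local_inverse_mulCoeffs hx
  obtain ⟨K, t, ht, hlip⟩ := hg.exists_lipschitzOnWith
  have hdiff : ∀ᶠ a in 𝓝 (mulCoeffs x), DifferentiableAt ℂ g a :=
    (hg.eventually (by simp)).mono fun a ha => ha.differentiableAt one_ne_zero
  have htendsto : Tendsto g (𝓝 (mulCoeffs x)) (𝓝 x) := by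
    simpa only [hgx] using hg.continuousAt.tendsto
  have hbound : ∀ᶠ a in 𝓝 (mulCoeffs x), ‖g a‖ < ‖x‖ + 1 :=
    htendsto.norm.eventually_lt_const (lt_add_one _)
  have hroots := htendsto.eventually (eventually_forall_not_common_root hx)
  obtain ⟨r, hr, hball⟩ := Metric.eventually_nhds_iff_ball.1
    (hright.and (hdiff.and (hbound.and (hroots.and (eventually_mem_set.2 ht)))))
  refine ⟨r, hr, max K (‖x‖ + 1), le_max_of_le_left K.2, k, by lia, m, by lia, g, ?_⟩
  exact {
    differentiableOn := fun a ha => (hball a ha).2.1.differentiableWithinAt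
    norm_le := fun a ha => (hball a ha).2.2.1.le.trans (le_max_right _ _)
    norm_sub_le := fun a ha b hb =>
      (hlip.norm_sub_le (hball a ha).2.2.2.2 (hball b hb).2.2.2.2).trans
        (by gcongr; exact le_max_left _ _)
    mul_eq := fun a ha => by rw [← monicOfCoeffs_mulCoeffs, (hball a ha).1]
    not_common_root := fun a ha => (hball a ha).2.2.2.1 }

theorem exists_coprime_monic_factors {P : ℂ[X]} (hP : P.Monic)
    (hpow : ∀ w, P ≠ (Polynomial.X - Polynomial.C w) ^ P.natDegree) :
    ∃ Q R : ℂ[X], Q.Monic ∧ R.Monic ∧ IsCoprime Q R ∧ Q.natDegree ≠ 0 ∧ R.natDegree ≠ 0 ∧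
      Q * R = P := by
  have hdeg : P.degree ≠ 0 := fun h => by
    have hP₀ : P.natDegree = 0 := Polynomial.natDegree_eq_of_degree_eq_some h
    exact hpow 0 (by rw [hP₀, pow_zero, hP.natDegree_eq_zero.1 hP₀])
  obtain ⟨w, hw⟩ := IsAlgClosed.exists_root P hdeg
  obtain ⟨R, hPR, hnd⟩ := Polynomial.exists_eq_pow_rootMultiplicity_mul_and_not_dvd P hP.ne_zero w
  set j := P.rootMultiplicity w
  have hQ : ((Polynomial.X - Polynomial.C w) ^ j).Monic := (Polynomial.monic_X_sub_C w).pow j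
  have hR : R.Monic := hQ.of_mul_monic_left (hPR ▸ hP)
  have hQdeg : ((Polynomial.X - Polynomial.C w) ^ j).natDegree = j := by
    rw [(Polynomial.monic_X_sub_C w).natDegree_pow, Polynomial.natDegree_X_sub_C, mul_one]
  have hj : j ≠ 0 := ((Polynomial.rootMultiplicity_pos hP.ne_zero).2 hw).ne'
  refine ⟨_, R, hQ, hR, IsCoprime.pow_left ?_, by rwa [hQdeg], fun hR₀ => hpow w ?_, hPR.symm⟩
  · exact (Polynomial.irreducible_X_sub_C w).coprime_iff_not_dvd.2 hnd
  · have hP_eq : P = (Polynomial.X - Polynomial.C w) ^ j := by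
      rw [hPR, hR.natDegree_eq_zero.1 hR₀, mul_one]
    rw [hP_eq, hQdeg]

/-- The monic polynomial with lower coefficients `a` has no term of degree `d - 1`, that is, its
roots have sum zero. -/
def IsTraceless (a : Fin d → ℂ) : Prop := ∀ i : Fin d, (i : ℕ) + 1 = d → a i = 0

theorem IsTraceless.eq_zero_of_monicOfCoeffs_eq_pow {a : Fin d → ℂ} (ha : IsTraceless a) {w : ℂ}
    (h : monicOfCoeffs a = (Polynomial.X - Polynomial.C w) ^ d) : a = 0 := by
  rcases Nat.eq_zero_or_pos d with rfl | hd
  · exact Subsingleton.elim _ _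
  have hlt : d - 1 < d := Nat.sub_lt hd one_pos
  have htrace : (monicOfCoeffs a).nextCoeff = 0 := by
    rw [Polynomial.nextCoeff_of_natDegree_pos (by rwa [natDegree_monicOfCoeffs]),
      natDegree_monicOfCoeffs]
    exact (coeff_monicOfCoeffs a ⟨d - 1, hlt⟩).trans (ha _ (Nat.sub_add_cancel hd))
  rw [h, (Polynomial.monic_X_sub_C w).nextCoeff_pow, Polynomial.nextCoeff_X_sub_C, nsmul_eq_mul,
    mul_neg, neg_eq_zero, mul_eq_zero, Nat.cast_eq_zero, or_iff_right hd.ne'] at htrace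
  refine monicOfCoeffs_injective ?_
  rw [h, htrace]
  simp [monicOfCoeffs]

theorem IsTraceless.exists_splitsOn_ball {a : Fin d → ℂ} (ha : IsTraceless a) (h₀ : a ≠ 0) :
    ∃ r > 0, ∃ B ≥ 0, SplitsOn (Metric.ball a r) B := by
  obtain ⟨Q, R, hQ, hR, hQR, hQ₀, hR₀, hmul⟩ := exists_coprime_monic_factors
    (monic_monicOfCoeffs a) fun w hw => h₀ (ha.eq_zero_of_monicOfCoeffs_eq_pow
      (by rwa [natDegree_monicOfCoeffs] at hw))
  have hdeg : Q.natDegree + R.natDegree = d := by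
    rw [← hQ.natDegree_mul hR, hmul, natDegree_monicOfCoeffs]
  subst hdeg
  let x : (Fin Q.natDegree → ℂ) × (Fin R.natDegree → ℂ) := (fun i => Q.coeff i, fun i => R.coeff i)
  have hx₁ : monicOfCoeffs x.1 = Q := monicOfCoeffs_coeff hQ rfl
  have hx₂ : monicOfCoeffs x.2 = R := monicOfCoeffs_coeff hR rfl
  have hx : mulCoeffs x = a :=
    monicOfCoeffs_injective (by rw [monicOfCoeffs_mulCoeffs, hx₁, hx₂, hmul])
  rw [← hx]
  exact exists_splitsOn_ball_mulCoeffs hQ₀ hR₀ (by rwa [hx₁, hx₂])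

theorem isClosed_setOf_isTraceless : IsClosed {a : Fin d → ℂ | IsTraceless a} := by
  simp only [IsTraceless, ofPred_forall]
  exact isClosed_iInter fun i => isClosed_iInter fun _ =>
    isClosed_eq (continuous_apply i) continuous_const

theorem exists_forall_splitsOn_ball (d : ℕ) (B : ℝ) {c : ℝ} (hc : 0 < c) :
    ∃ r > 0, ∃ B' ≥ 0, ∀ a : Fin d → ℂ, ‖a‖ ≤ B → c ≤ ‖a‖ → IsTraceless a →
      SplitsOn (Metric.ball a r) B' := by
  have hcompact : IsCompact ({a : Fin d → ℂ | ‖a‖ ≤ B} ∩ ({a | c ≤ ‖a‖} ∩ {a | IsTraceless a})) :=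
    (isCompact_closedBall (0 : Fin d → ℂ) B).of_isClosed_subset
      ((isClosed_le continuous_norm continuous_const).inter
        ((isClosed_le continuous_const continuous_norm).inter isClosed_setOf_isTraceless))
      fun a ha => mem_closedBall_zero_iff.2 ha.1
  obtain ⟨r, hr, B', hB', h⟩ := hcompact.induction_on
    (p := fun s => ∃ r > 0, ∃ B' ≥ 0, ∀ a ∈ s, SplitsOn (Metric.ball a r) B')
    ⟨1, one_pos, 0, le_rfl, by simp⟩
    (fun s t hst ⟨r, hr, B', hB', h⟩ => ⟨r, hr, B', hB', fun a ha => h a (hst ha)⟩)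
    (fun s t ⟨r, hr, B', hB', h⟩ ⟨r₂, hr₂, B₂, _, h₂⟩ =>
      ⟨min r r₂, lt_min hr hr₂, max B' B₂, le_max_of_le_left hB', fun a ha => ha.elim
        (fun ha => (h a ha).mono (Metric.ball_subset_ball (min_le_left _ _)) (le_max_left _ _))
        (fun ha => (h₂ a ha).mono (Metric.ball_subset_ball (min_le_right _ _))
          (le_max_right _ _))⟩)
    fun a ha => by
      obtain ⟨r, hr, B', hB', h⟩ :=
        ha.2.2.exists_splitsOn_ball (norm_pos_iff.1 (hc.trans_le ha.2.1))
      refine ⟨Metric.ball a (r / 2),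
        mem_nhdsWithin_of_mem_nhds (Metric.ball_mem_nhds _ (half_pos hr)), r / 2, half_pos hr, B',
        hB', fun b hb => h.mono (Metric.ball_subset_ball' ?_) le_rfl⟩
      linarith [Metric.mem_ball.1 hb]
  exact ⟨r, hr, B', hB', fun a h₁ h₂ h₃ => h a ⟨h₁, h₂, h₃⟩⟩

end HolomorphicSplitting

section CoprimeSplitting

variable {n d : ℕ} {a : ℝ → Fin d → ℂ} {l : ℝ → ℂ} {p u v x y B : ℝ}

/-- Along every continuous root `l` of a monic polynomial of degree `d` whose lower coefficients
stay in `BoundedWhitneyClass n B` on `[0, 1]`, there are arbitrarily fine partitions with Riesz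
`p`-sums bounded in terms of `B` only. -/
def UniformRieszBound (n : ℕ) (p : ℝ) (d : ℕ) : Prop :=
  ∀ B ≥ 0, ∃ A ≥ 0, ∀ (a : ℝ → Fin d → ℂ) (l : ℝ → ℂ) (u v : ℝ),
    (∀ i, BoundedWhitneyClass n B fun t => a t i) → IsContinuousRoot a l u v →
      ∀ δ > 0, HasRieszPartition l p δ u v A

theorem exists_forall_lt_hasRieszPartition (h : ∀ k < d, UniformRieszBound n p k) (hB : 0 ≤ B) :
    ∃ A ≥ 0, ∀ k < d, ∀ (a : ℝ → Fin k → ℂ) (l : ℝ → ℂ) (u v : ℝ),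
      (∀ i, BoundedWhitneyClass n B fun t => a t i) → IsContinuousRoot a l u v →
        ∀ δ > 0, HasRieszPartition l p δ u v A := by
  choose! A hA₀ hA using fun k hk => h k hk B hB
  have hA₀ : ∀ k ∈ Finset.range d, 0 ≤ A k := fun k hk => hA₀ k (Finset.mem_range.1 hk)
  exact ⟨∑ k ∈ Finset.range d, A k, Finset.sum_nonneg hA₀, fun k hk a l u v ha hl δ hδ =>
    (hA k hk a l u v ha hl δ hδ).mono
      (Finset.single_le_sum hA₀ (Finset.mem_range.2 hk))⟩

theorem BoundedWhitneyClass.comp_add_div {f : ℝ → ℂ} (h : BoundedWhitneyClass n B f) {j N : ℕ}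
    (hj : j < N) : BoundedWhitneyClass n B fun s => f ((j + s) / N) := by
  have hj' : (j : ℝ) + 1 ≤ N := by exact_mod_cast hj
  have hN : (0 : ℝ) < N := by exact_mod_cast j.zero_le.trans_lt hj
  have := h.comp_affine (x := j / N) (r := 1 / N) (by positivity) (by positivity)
    (by rwa [← add_div, div_le_one hN])
  convert this using 3
  ring

theorem IsContinuousRoot.comp_add_div (h : IsContinuousRoot a l u v) {c N : ℝ} (hN : 0 < N)
    (hx : 0 ≤ x) (hxy : x ≤ y) (hy : y ≤ 1) (hu : u ≤ (c + x) / N) (hv : (c + y) / N ≤ v) :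
    IsContinuousRoot (fun s => a ((c + s) / N)) (fun s => l ((c + s) / N)) x y := by
  have hmaps : MapsTo (fun s => (c + s) / N) (Icc x y) (Icc u v) := fun s hs =>
    ⟨hu.trans (div_le_div_of_nonneg_right (by linarith [hs.1]) hN.le),
      (div_le_div_of_nonneg_right (by linarith [hs.2]) hN.le).trans hv⟩
  exact ⟨hx, hxy, hy, h.continuousOn.comp (by fun_prop) hmaps,
    fun s hs => h.eval_eq_zero _ (hmaps hs)⟩

theorem pi_norm_le_of_boundedWhitneyClass (hn : n ≠ 0) (hB : 0 ≤ B)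
    (ha : ∀ i, BoundedWhitneyClass n B fun t => a t i) {t : ℝ} (ht : t ∈ Icc (0 : ℝ) 1) :
    ‖a t‖ ≤ B :=
  (pi_norm_le_iff_of_nonneg hB).2 fun i => (ha i).norm_le hn ht

theorem pi_norm_sub_le_of_boundedWhitneyClass (hn : n ≠ 0) (hB : 0 ≤ B)
    (ha : ∀ i, BoundedWhitneyClass n B fun t => a t i) {s t : ℝ} (hs : s ∈ Icc (0 : ℝ) 1)
    (ht : t ∈ Icc (0 : ℝ) 1) : ‖a t - a s‖ ≤ (n ^ 2 + 1) * B * |t - s| :=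
  (pi_norm_le_iff_of_nonneg (by positivity)).2 fun i => (ha i).norm_sub_le hn hs ht

theorem eqOn_zero_or_eqOn_zero_of_mul_eq_zero {f g : ℝ → ℂ} (hf : ContinuousOn f (Icc x y))
    (hg : ContinuousOn g (Icc x y)) (hmul : ∀ s ∈ Icc x y, f s * g s = 0)
    (hne : ∀ s ∈ Icc x y, ¬(f s = 0 ∧ g s = 0)) : EqOn f 0 (Icc x y) ∨ EqOn g 0 (Icc x y) := by
  by_contra! hcon
  simp only [EqOn, Pi.zero_apply, not_forall] at hcon
  obtain ⟨⟨s, hs, hfs⟩, t, ht, hgt⟩ := hcon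
  have hgs : g s = 0 := (mul_eq_zero.1 (hmul s hs)).resolve_left hfs
  have hft : f t = 0 := (mul_eq_zero.1 (hmul t ht)).resolve_right hgt
  obtain ⟨w, hw, ⟨-, hfw⟩, ⟨-, hgw⟩⟩ :=
    isPreconnected_closed_iff.1 (isPreconnected_Icc (a := x) (b := y)) _ _
      (hf.preimage_isClosed_of_isClosed isClosed_Icc isClosed_singleton)
      (hg.preimage_isClosed_of_isClosed isClosed_Icc isClosed_singleton)
      (fun w hw => (mul_eq_zero.1 (hmul w hw)).imp (fun h => ⟨hw, h⟩) fun h => ⟨hw, h⟩)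
      ⟨t, ht, ht, hft⟩ ⟨s, hs, hs, hgs⟩
  exact hne w hw ⟨hfw, hgw⟩

theorem IsHolomorphicSplitting.isContinuousRoot_fst_or_snd {k m : ℕ}
    {F : (Fin d → ℂ) → (Fin k → ℂ) × (Fin m → ℂ)} {U : Set (Fin d → ℂ)}
    (hF : IsHolomorphicSplitting F U B) (ha : ContinuousOn a (Icc x y))
    (haU : MapsTo a (Icc x y) U) (hl : IsContinuousRoot a l x y) :
    IsContinuousRoot (fun s => (F (a s)).1) l x y ∨
      IsContinuousRoot (fun s => (F (a s)).2) l x y := by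
  have hFa : ContinuousOn (fun s => F (a s)) (Icc x y) :=
    hF.differentiableOn.continuousOn.comp ha haU
  have hmul (s) (hs : s ∈ Icc x y) :
      (monicOfCoeffs (F (a s)).1).eval (l s) * (monicOfCoeffs (F (a s)).2).eval (l s) = 0 := by
    rw [← Polynomial.eval_mul, hF.mul_eq _ (haU hs), hl.eval_eq_zero s hs]
  exact (eqOn_zero_or_eqOn_zero_of_mul_eq_zero
    (continuous_eval_monicOfCoeffs.comp_continuousOn (hFa.fst.prodMk hl.continuousOn))
    (continuous_eval_monicOfCoeffs.comp_continuousOn (hFa.snd.prodMk hl.continuousOn)) hmul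
    fun s hs => hF.not_common_root _ (haU hs) _).imp
    (fun h => ⟨hl.zero_le, hl.le, hl.le_one, hl.continuousOn, h⟩)
    fun h => ⟨hl.zero_le, hl.le, hl.le_one, hl.continuousOn, h⟩

theorem exists_hasRieszPartition_of_splitsOn (hn : n ≠ 0) (hd : ∀ k < d, UniformRieszBound n p k)
    (hB : 0 ≤ B) {r B' : ℝ} (hr : 0 < r) (hB' : 0 ≤ B') :
    ∃ A ≥ 0, ∀ (U : Set (Fin d → ℂ)) (a : ℝ → Fin d → ℂ) (l : ℝ → ℂ) (u v : ℝ), SplitsOn U B' →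
      (∀ t ∈ Icc (0 : ℝ) 1, Metric.ball (a t) r ⊆ U) →
      (∀ i, BoundedWhitneyClass n B fun t => a t i) → IsContinuousRoot a l u v →
        ∀ δ > 0, HasRieszPartition l p δ u v A := by
  obtain ⟨B'', hB'', hcomp⟩ := BoundedWhitneyClass.exists_comp_holomorphic (d := d) hn hB hr hB'
  obtain ⟨A, hA₀, hA⟩ := exists_forall_lt_hasRieszPartition hd hB''
  refine ⟨A, hA₀, fun U a l u v ⟨k, hk, m, hm, F, hF⟩ hU ha hl δ hδ => ?_⟩
  have hF₁ (i) : BoundedWhitneyClass n B'' fun t => (F (a t)).1 i :=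
    hcomp a (fun x => (F x).1 i) U ha hU (differentiableOn_pi.1 hF.differentiableOn.fst i)
      (fun x hx => ((norm_le_pi_norm _ i).trans (norm_fst_le _)).trans (hF.norm_le x hx))
      fun x hx y hy => ((norm_le_pi_norm (F x - F y).1 i).trans (norm_fst_le _)).trans
        (hF.norm_sub_le x hx y hy)
  have hF₂ (i) : BoundedWhitneyClass n B'' fun t => (F (a t)).2 i :=
    hcomp a (fun x => (F x).2 i) U ha hU (differentiableOn_pi.1 hF.differentiableOn.snd i)
      (fun x hx => ((norm_le_pi_norm _ i).trans (norm_snd_le _)).trans (hF.norm_le x hx))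
      fun x hx y hy => ((norm_le_pi_norm (F x - F y).2 i).trans (norm_snd_le _)).trans
        (hF.norm_sub_le x hx y hy)
  rcases hF.isContinuousRoot_fst_or_snd
    (continuousOn_pi.2 fun i => ((ha i).continuousOn hn).mono hl.Icc_subset)
    (fun s hs => hU s (hl.Icc_subset hs) (Metric.mem_ball_self hr)) hl with h | h
  · exact hA k hk _ l u v hF₁ h δ hδ
  · exact hA m hm _ l u v hF₂ h δ hδ

theorem exists_hasRieszPartition_of_le_norm (hn : n ≠ 0) (hp : 1 ≤ p)
    (hd : ∀ k < d, UniformRieszBound n p k) (hB : 0 ≤ B) {c : ℝ} (hc : 0 < c) :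
    ∃ A ≥ 0, ∀ (a : ℝ → Fin d → ℂ) (l : ℝ → ℂ) (u v : ℝ),
      (∀ i, BoundedWhitneyClass n B fun t => a t i) → (∀ t ∈ Icc (0 : ℝ) 1, c ≤ ‖a t‖) →
      (∀ t ∈ Icc (0 : ℝ) 1, IsTraceless (a t)) → IsContinuousRoot a l u v →
        ∀ δ > 0, HasRieszPartition l p δ u v A := by
  obtain ⟨r, hr, B', hB', hsplit⟩ := exists_forall_splitsOn_ball d B hc
  obtain ⟨A, hA₀, hA⟩ := exists_hasRieszPartition_of_splitsOn hn hd hB (half_pos hr) hB'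
  obtain ⟨N, hN⟩ := exists_nat_gt ((n ^ 2 + 1) * B / (r / 2))
  have hN₀ : (0 : ℝ) < N := lt_of_le_of_lt (by positivity) hN
  refine ⟨N ^ (p - 1) * ∑ _j ∈ Finset.range N, A, by positivity,
    fun a l u v ha hac htr hl δ hδ => .of_grid hp hδ.le (Nat.cast_pos.1 hN₀) (fun _ _ => hA₀)
      hl.zero_le hl.le hl.le_one fun j hj x y hx hxy hy hux hyv => ?_⟩
  have hcell (s : ℝ) (hs : s ∈ Icc (0 : ℝ) 1) : (j + s) / N ∈ Icc (0 : ℝ) 1 :=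
    gridCell_subset_Icc hj (add_div_mem_gridCell hs)
  have hnear (s : ℝ) (hs : s ∈ Icc (0 : ℝ) 1) :
      dist (a ((j + s) / N)) (a ((j + 0) / N)) < r / 2 := by
    calc dist (a ((j + s) / N)) (a ((j + 0) / N))
        ≤ (n ^ 2 + 1) * B * |(j + s) / N - (j + 0) / N| := (dist_eq_norm _ _).trans_le <|
          pi_norm_sub_le_of_boundedWhitneyClass hn hB ha (hcell 0 (by simp)) (hcell s hs)
      _ = (n ^ 2 + 1) * B * s / N := by
          rw [← sub_div, add_sub_add_left_eq_sub, sub_zero, abs_of_nonneg (div_nonneg hs.1 hN₀.le),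
            mul_div_assoc]
      _ ≤ (n ^ 2 + 1) * B / N :=
          div_le_div_of_nonneg_right (mul_le_of_le_one_right (by positivity) hs.2) hN₀.le
      _ < r / 2 := by rwa [div_lt_comm₀ hN₀ (half_pos hr)]
  have hcell₀ := hcell 0 (by simp)
  exact hA _ _ _ x y
    (hsplit _ (pi_norm_le_of_boundedWhitneyClass hn hB ha hcell₀) (hac _ hcell₀) (htr _ hcell₀))
    (fun s hs => Metric.ball_subset_ball' (by linarith [hnear s hs]))
    (fun i => (ha i).comp_add_div hj) (hl.comp_add_div hN₀ hx hxy hy hux hyv) _ (by positivity)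

end CoprimeSplitting

section Tschirnhausen

variable {n d : ℕ}

/-- The arithmetic mean of the roots of the monic polynomial with lower coefficients `a`. -/
def rootMean (a : Fin d → ℂ) : ℂ := -(monicOfCoeffs a).coeff (d - 1) / d

/-- The lower coefficients of the monic polynomial obtained by the Tschirnhausen transformation,
which shifts the variable by the mean of the roots. -/
def tschirnhausen (a : Fin d → ℂ) : Fin d → ℂ :=
  fun j => (Polynomial.taylor (rootMean a) (monicOfCoeffs a)).coeff j

theorem eval_monicOfCoeffs_tschirnhausen (a : Fin d → ℂ) (z : ℂ) :
    (monicOfCoeffs (tschirnhausen a)).eval (z - rootMean a) = (monicOfCoeffs a).eval z := by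
  have h : monicOfCoeffs (tschirnhausen a) = Polynomial.taylor (rootMean a) (monicOfCoeffs a) :=
    monicOfCoeffs_coeff ((monic_monicOfCoeffs a).comp_X_add_C _) <| by
      rw [Polynomial.natDegree_taylor, natDegree_monicOfCoeffs]
  rw [h, Polynomial.taylor_eval, sub_add_cancel]

theorem coeff_taylor_eq_sum (w : ℂ) (P : ℂ[X]) (j : ℕ) :
    (Polynomial.taylor w P).coeff j
      = ∑ i ∈ Finset.range (P.natDegree + 1), P.coeff i * (w ^ (i - j) * i.choose j) := by
  conv_lhs => rw [P.as_sum_range_C_mul_X_pow]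
  simp only [map_sum, Polynomial.finsetSum_coeff, Polynomial.taylor_mul, Polynomial.taylor_C,
    Polynomial.taylor_X_pow, Polynomial.coeff_C_mul, Polynomial.coeff_X_add_C_pow]

theorem tschirnhausen_apply (a : Fin d → ℂ) (j : Fin d) :
    tschirnhausen a j = ∑ i ∈ Finset.range (d + 1),
      (monicOfCoeffs a).coeff i * (rootMean a ^ (i - (j : ℕ)) * i.choose j) := by
  rw [tschirnhausen, coeff_taylor_eq_sum, natDegree_monicOfCoeffs]

theorem isTraceless_tschirnhausen (a : Fin d → ℂ) : IsTraceless (tschirnhausen a) := by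
  rintro ⟨j, hj⟩ (rfl : j + 1 = d)
  have hmonic : (monicOfCoeffs a).coeff (j + 1) = 1 := by
    simpa only [natDegree_monicOfCoeffs] using (monic_monicOfCoeffs a).coeff_natDegree
  have hlow : ∀ i ∈ Finset.range j,
      (monicOfCoeffs a).coeff i * (rootMean a ^ (i - j) * (i.choose j : ℂ)) = 0 := fun i hi => by
    rw [Nat.choose_eq_zero_of_lt (Finset.mem_range.1 hi), Nat.cast_zero, mul_zero, mul_zero]
  rw [tschirnhausen_apply, Finset.sum_range_succ, Finset.sum_range_succ, Finset.sum_eq_zero hlow,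
    hmonic]
  have hj₀ : (j : ℂ) + 1 ≠ 0 := by exact_mod_cast j.succ_ne_zero
  simp [rootMean, div_mul_cancel₀ _ hj₀]

theorem contDiff_rootMean : ContDiff ℂ 1 (rootMean (d := d)) :=
  (contDiff_coeff_monicOfCoeffs _).neg.div_const _

theorem contDiff_tschirnhausen (j : Fin d) : ContDiff ℂ 1 fun a => tschirnhausen a j := by
  simp only [tschirnhausen_apply]
  exact ContDiff.sum fun i _ => (contDiff_coeff_monicOfCoeffs i).mul
    ((contDiff_rootMean.pow _).mul contDiff_const)

theorem exists_boundedWhitneyClass_tschirnhausen (hn : n ≠ 0) {B : ℝ} (hB : 0 ≤ B) :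
    ∃ B' ≥ 0, ∀ a : ℝ → Fin d → ℂ, (∀ i, BoundedWhitneyClass n B fun t => a t i) →
      (∀ j, BoundedWhitneyClass n B' fun t => tschirnhausen (a t) j) ∧
        BoundedWhitneyClass n B' fun t => rootMean (a t) := by
  choose B₁ hB₁ h₁ using fun j : Fin d =>
    BoundedWhitneyClass.exists_comp_contDiff hn (contDiff_tschirnhausen j) hB
  obtain ⟨B₂, hB₂, h₂⟩ :=
    BoundedWhitneyClass.exists_comp_contDiff hn (contDiff_rootMean (d := d)) hB
  have hsum : 0 ≤ ∑ j, B₁ j := Finset.sum_nonneg fun j _ => hB₁ j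
  refine ⟨∑ j, B₁ j + B₂, by positivity, fun a ha =>
    ⟨fun j => (h₁ j a ha).mono ?_, (h₂ a ha).mono (le_add_of_nonneg_left hsum)⟩⟩
  exact (Finset.single_le_sum (fun i _ => hB₁ i) (Finset.mem_univ j)).trans
    (le_add_of_nonneg_right hB₂)

theorem IsContinuousRoot.tschirnhausen {a : ℝ → Fin d → ℂ} {l : ℝ → ℂ} {u v : ℝ}
    (h : IsContinuousRoot a l u v) (ha : ContinuousOn (fun t => rootMean (a t)) (Icc 0 1)) :
    IsContinuousRoot (fun t => tschirnhausen (a t)) (fun t => l t - rootMean (a t)) u v :=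
  ⟨h.zero_le, h.le, h.le_one, h.continuousOn.sub (ha.mono h.Icc_subset),
    fun t ht => (eval_monicOfCoeffs_tschirnhausen _ _).trans (h.eval_eq_zero t ht)⟩

end Tschirnhausen

section Rescaling

variable {n d N j : ℕ} {a : ℝ → Fin d → ℂ} {l : ℝ → ℂ} {m p u v x y κ M M' : ℝ}

/-- The lower coefficients of the monic polynomial whose roots are `m` times the roots of the monic
polynomial with lower coefficients `a`. -/
def scaleCoeffs (m : ℝ) (a : Fin d → ℂ) : Fin d → ℂ := fun i => (m : ℂ) ^ (d - (i : ℕ)) * a i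

theorem norm_scaleCoeffs_apply (hm : 0 ≤ m) (a : Fin d → ℂ) (i : Fin d) :
    ‖scaleCoeffs m a i‖ = m ^ (d - (i : ℕ)) * ‖a i‖ := by
  rw [scaleCoeffs, norm_mul, norm_pow, Complex.norm_real, Real.norm_of_nonneg hm]

theorem IsTraceless.scaleCoeffs {a : Fin d → ℂ} (ha : IsTraceless a) :
    IsTraceless (scaleCoeffs m a) := fun i hi => mul_eq_zero_of_right _ (ha i hi)

theorem IsContinuousRoot.scaleCoeffs (h : IsContinuousRoot a l u v) (m : ℝ) :
    IsContinuousRoot (fun t => scaleCoeffs m (a t)) (fun t => m • l t) u v where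
  zero_le := h.zero_le
  le := h.le
  le_one := h.le_one
  continuousOn := h.continuousOn.const_smul m
  eval_eq_zero t ht := by
    rw [Complex.real_smul]
    exact (eval_monicOfCoeffs_smul _ _ _).trans (by rw [h.eval_eq_zero t ht, mul_zero])

theorem WhitneyClass.scaleCoeffs {i : Fin d} (h : WhitneyClass n κ fun t => a t i) (hm : 0 ≤ m) :
    WhitneyClass n (m ^ (d - (i : ℕ)) * κ) fun t => scaleCoeffs m (a t) i := by
  have := h.const_mul ((m : ℂ) ^ (d - (i : ℕ)))
  rwa [norm_pow, Complex.norm_real, Real.norm_of_nonneg hm] at this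

/-- The coefficients `a` of a monic polynomial without trace, normalised for the induction over
scales: their Taylor remainders on `[0, 1]` are bounded by `1`, and by the weighted homogeneous
bound in terms of `M` all roots are of size `O(M)`. -/
structure IsAdmissible (n : ℕ) (M : ℝ) (a : ℝ → Fin d → ℂ) : Prop where
  nonneg : 0 ≤ M
  whitneyClass : ∀ i, WhitneyClass n 1 fun t => a t i
  isTraceless : ∀ t ∈ Icc (0 : ℝ) 1, IsTraceless (a t)
  norm_le : ∀ t ∈ Icc (0 : ℝ) 1, ∀ i, ‖a t i‖ ≤ M ^ (d - (i : ℕ))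

/-- The weighted homogeneous bound in `IsAdmissible n M a` is attained. -/
def IsAttained (M : ℝ) (a : ℝ → Fin d → ℂ) : Prop :=
  ∃ t ∈ Icc (0 : ℝ) 1, ∃ i, ‖a t i‖ = M ^ (d - (i : ℕ))

theorem sub_val_ne_zero (i : Fin d) : d - (i : ℕ) ≠ 0 := Nat.sub_ne_zero_of_lt i.2

theorem IsAdmissible.continuousOn (hn : n ≠ 0) (h : IsAdmissible n M a) (i : Fin d) :
    ContinuousOn (fun t => a t i) (Icc 0 1) := by
  obtain ⟨C, -, hC⟩ := WhitneyClass.exists_bounded n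
  exact (hC _ _ ((h.whitneyClass i).mono (le_max_left _ _))
    fun t ht => (h.norm_le t ht i).trans (le_max_right _ _)).continuousOn hn

theorem IsAdmissible.exists_isAttained (hn : n ≠ 0) (hd : d ≠ 0) (h : IsAdmissible n M a) :
    ∃ M' ≤ M, IsAdmissible n M' a ∧ IsAttained M' a := by
  have hmax (i : Fin d) : ∃ t ∈ Icc (0 : ℝ) 1, IsMaxOn (fun t => ‖a t i‖) (Icc 0 1) t :=
    isCompact_Icc.exists_isMaxOn (nonempty_Icc.2 zero_le_one) (h.continuousOn hn i).norm
  choose T hT hTmax using hmax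
  have : Nonempty (Fin d) := ⟨⟨0, Nat.pos_of_ne_zero hd⟩⟩
  let R (i : Fin d) : ℝ := ‖a (T i) i‖ ^ ((d - (i : ℕ) : ℕ) : ℝ)⁻¹
  have hR (i : Fin d) : R i ^ (d - (i : ℕ)) = ‖a (T i) i‖ :=
    Real.rpow_inv_natCast_pow (norm_nonneg _) (sub_val_ne_zero i)
  have hR₀ (i : Fin d) : 0 ≤ R i := by positivity
  obtain ⟨i, hi⟩ := Finite.exists_max R
  refine ⟨R i, le_of_pow_le_pow_left₀ (sub_val_ne_zero i) h.nonneg ?_,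
    ⟨hR₀ i, h.whitneyClass, h.isTraceless, fun t ht k => ?_⟩, T i, hT i, i, (hR i).symm⟩
  · exact (hR i).trans_le (h.norm_le _ (hT i) i)
  · calc ‖a t k‖ ≤ R k ^ (d - (k : ℕ)) := (hTmax k ht).trans_eq (hR k).symm
      _ ≤ R i ^ (d - (k : ℕ)) := pow_le_pow_left₀ (hR₀ k) (hi k) _

theorem WhitneyClass.comp_add_div {f : ℝ → ℂ} (h : WhitneyClass n κ f) (hj : j < N) :
    WhitneyClass n (κ * (1 / N) ^ n) fun s => f ((j + s) / N) := by
  have hj' : (j : ℝ) + 1 ≤ N := by exact_mod_cast hj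
  have hN : (0 : ℝ) < N := by exact_mod_cast j.zero_le.trans_lt hj
  have := h.comp_affine (x := j / N) (r := 1 / N) (by positivity) (by positivity)
    (by rwa [← add_div, div_le_one hN])
  convert this using 3
  ring

theorem IsAdmissible.rescale (hdn : d ≤ n) (h : IsAdmissible n M a) (hj : j < N) (hM' : 0 ≤ M')
    (hb : ∀ t ∈ gridCell N j, ∀ i : Fin d, N ^ (d - (i : ℕ)) * ‖a t i‖ ≤ M' ^ (d - (i : ℕ))) :
    IsAdmissible n M' fun s => scaleCoeffs N (a ((j + s) / N)) where
  nonneg := hM'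
  whitneyClass i := by
    have hN : (1 : ℝ) ≤ N := by exact_mod_cast (by lia : 1 ≤ N)
    refine (((h.whitneyClass i).comp_add_div hj).scaleCoeffs (a := fun s => a ((j + s) / N))
      N.cast_nonneg).mono ?_
    rw [one_mul, one_div, inv_pow, ← div_eq_mul_inv, div_le_one (by positivity)]
    exact pow_le_pow_right₀ hN ((Nat.sub_le _ _).trans hdn)
  isTraceless t ht :=
    (h.isTraceless _ (gridCell_subset_Icc hj (add_div_mem_gridCell ht))).scaleCoeffs
  norm_le t ht i := (norm_scaleCoeffs_apply N.cast_nonneg _ i).trans_le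
    (hb _ (add_div_mem_gridCell ht) i)

theorem IsAdmissible.whitneyClass_scaleCoeffs_inv (h : IsAdmissible n M a) (hm : 1 ≤ m)
    (i : Fin d) : WhitneyClass n m⁻¹ fun t => scaleCoeffs m⁻¹ (a t) i := by
  have hm₀ : 0 < m := one_pos.trans_le hm
  refine ((h.whitneyClass i).scaleCoeffs (inv_nonneg.2 hm₀.le)).mono ?_
  rw [mul_one]
  exact pow_le_of_le_one (inv_nonneg.2 hm₀.le) (inv_le_one_of_one_le₀ hm) (sub_val_ne_zero i)

theorem IsAdmissible.norm_scaleCoeffs_inv_le_one (h : IsAdmissible n M a) (hm : 0 < m)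
    (hMm : M ≤ m) {t : ℝ} (ht : t ∈ Icc (0 : ℝ) 1) (i : Fin d) : ‖scaleCoeffs m⁻¹ (a t) i‖ ≤ 1 := by
  rw [norm_scaleCoeffs_apply (inv_nonneg.2 hm.le), inv_pow, inv_mul_le_one₀ (by positivity)]
  exact (h.norm_le t ht i).trans (pow_le_pow_left₀ h.nonneg hMm _)

theorem IsAdmissible.exists_boundedWhitneyClass_scaleCoeffs_inv (n d : ℕ) :
    ∃ C ≥ 1, ∀ (m M : ℝ) (a : ℝ → Fin d → ℂ), IsAdmissible n M a → 1 ≤ m → M ≤ m →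
      ∀ i, BoundedWhitneyClass n C fun t => scaleCoeffs m⁻¹ (a t) i := by
  obtain ⟨C, hC, h⟩ := WhitneyClass.exists_bounded n
  refine ⟨C, hC, fun m M a ha hm hMm i => ?_⟩
  simpa only [mul_one] using h 1 _
    ((ha.whitneyClass_scaleCoeffs_inv hm i).mono (inv_le_one_of_one_le₀ hm))
    fun t ht => ha.norm_scaleCoeffs_inv_le_one (one_pos.trans_le hm) hMm ht i

theorem IsAdmissible.exists_hasRieszPartition_of_one_le (hn : n ≠ 0) (hd : d ≠ 0) (hp : 1 ≤ p)
    (hpd : 0 ≤ 1 - p + p / d) :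
    ∃ C ≥ 0, ∀ (M : ℝ) (a : ℝ → Fin d → ℂ) (l : ℝ → ℂ) (u v : ℝ), IsAdmissible n M a →
      IsContinuousRoot a l u v → ∀ δ ≥ 1, HasRieszPartition l p δ u v (C * max M 1 ^ p) := by
  obtain ⟨B, hB, hclass⟩ := exists_boundedWhitneyClass_scaleCoeffs_inv n d
  obtain ⟨C, hC, hbound⟩ := exists_forall_rpow_mul_rpow_le hn hd hp hpd (zero_le_one.trans hB)
  refine ⟨C, hC, fun M a l u v ha hl δ hδ => ?_⟩
  set m := max M 1
  have hm : 0 < m := one_pos.trans_le (le_max_right _ _)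
  have hpart : HasRieszPartition (fun t => m⁻¹ • l t) p δ u v C :=
    .single hl.le (by linarith [hl.zero_le, hl.le_one]) <| hbound _ _ u v
      (hclass m M a ha (le_max_right _ _) (le_max_left _ _)) (hl.scaleCoeffs _)
  have := hpart.const_smul m
  rw [abs_of_pos hm, mul_comm] at this
  exact this.congr fun t _ => (smul_inv_smul₀ hm.ne' _).symm

theorem IsAdmissible.exists_cells_dichotomy (n : ℕ) :
    ∃ L ≥ 1, ∀ (d N : ℕ) (M : ℝ) (a : ℝ → Fin d → ℂ), 2 ≤ N → 1 ≤ M →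
      M⁻¹ ≤ (1 / N / 2 : ℝ) ^ n * (1 / N) / 2 → IsAdmissible n M a → IsAttained M a →
      ∃ S : Finset ℕ, S.card ≤ 4 * n ∧
        (∀ k < N, k ∉ S → ∀ t ∈ gridCell N k,
          (1 / N / 2 : ℝ) ^ n * (1 / N) / 2 ≤ ‖scaleCoeffs M⁻¹ (a t)‖) ∧
        ∀ k < N, k ∈ S → ∀ t ∈ gridCell N k, ‖scaleCoeffs M⁻¹ (a t)‖ ≤ 2 * L / N := by
  classical
  obtain ⟨L, hL, h⟩ := WhitneyClass.exists_cells_dichotomy n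
  refine ⟨L, hL, fun d N M a hN hM hMN ha ⟨t₀, ht₀, i₀, hi₀⟩ => ?_⟩
  have hM₀ : 0 < M := one_pos.trans_le hM
  choose S hgood hbad hcard using fun i => h _ N _ hN hMN (ha.whitneyClass_scaleCoeffs_inv hM i)
    fun t ht => ha.norm_scaleCoeffs_inv_le_one hM₀ le_rfl ht i
  refine ⟨(S i₀).filter fun k => ∀ i, k ∈ S i, (Finset.card_filter_le _ _).trans
    (hcard i₀ ⟨t₀, ht₀, ?_⟩), fun k hk hkS t ht => ?_, fun k hk hkS t ht => ?_⟩
  · rw [norm_scaleCoeffs_apply (inv_nonneg.2 hM₀.le), hi₀, inv_pow, inv_mul_cancel₀ (by positivity)]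
  · obtain ⟨i, hi⟩ : ∃ i, k ∉ S i := by
      by_contra! hall
      exact hkS (Finset.mem_filter.2 ⟨hall i₀, hall⟩)
    exact (hgood i k hk hi t ht).trans (norm_le_pi_norm _ i)
  · exact (pi_norm_le_iff_of_nonneg (by positivity)).2 fun i =>
      hbad i k hk ((Finset.mem_filter.1 hkS).2 i) t ht

theorem IsAdmissible.rescale_of_norm_scaleCoeffs_le {θ : ℝ} (hdn : d ≤ n) (h : IsAdmissible n M a)
    (hM : 0 < M) (hj : j < N) (hθ₀ : 0 ≤ θ) (hθ₁ : θ ≤ 1)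
    (hb : ∀ t ∈ gridCell N j, ‖scaleCoeffs M⁻¹ (a t)‖ ≤ θ ^ d) :
    IsAdmissible n (N * M * θ) fun s => scaleCoeffs N (a ((j + s) / N)) := by
  refine h.rescale hdn hj (by positivity) fun t ht i => ?_
  have hti := (norm_le_pi_norm (scaleCoeffs M⁻¹ (a t)) i).trans (hb t ht)
  rw [norm_scaleCoeffs_apply (inv_nonneg.2 hM.le), inv_pow, inv_mul_le_iff₀ (by positivity)] at hti
  rw [mul_pow, mul_pow, mul_assoc]
  gcongr
  exact hti.trans
    (mul_le_mul_of_nonneg_left (pow_le_pow_of_le_one hθ₀ hθ₁ (Nat.sub_le _ _)) (by positivity))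

theorem HasRieszPartition.of_grid_smul_of_card_le {E : Type*} [NormedAddCommGroup E]
    [NormedSpace ℝ E] {f : ℝ → E} {δ G H : ℝ} {c : ℕ} {S : Finset ℕ} (hp : 1 ≤ p) (hδ : 0 ≤ δ)
    (hN : 0 < N) (hG : 0 ≤ G) (hH : 0 ≤ H) (hS : S.card ≤ c) (hu : 0 ≤ u) (huv : u ≤ v) (hv : v ≤ 1)
    (h : ∀ j < N, ∀ x y : ℝ, 0 ≤ x → x ≤ y → y ≤ 1 → u ≤ (j + x) / N → (j + y) / N ≤ v →
      HasRieszPartition (fun s => (N : ℝ) • f ((j + s) / N)) p (N * δ) x y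
        (if j ∈ S then H else G)) :
    HasRieszPartition f p δ u v (G + c * H / N) := by
  have : (0 : ℝ) < N := Nat.cast_pos.2 hN
  refine (of_grid_smul hp hδ hN (fun j _ => by positivity) hu huv hv h).mono ?_
  calc (∑ j ∈ Finset.range N, if j ∈ S then H else G) / N
      ≤ (∑ j ∈ Finset.range N, (G + if j ∈ S then H else 0)) / N := by
        gcongr
        split_ifs <;> linarith
    _ = (N * G + ((Finset.range N).filter (· ∈ S)).card * H) / N := by
        rw [Finset.sum_add_distrib, Finset.sum_const, Finset.card_range, nsmul_eq_mul,
          ← Finset.sum_filter, Finset.sum_const, nsmul_eq_mul]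
    _ ≤ (N * G + c * H) / N := by
        gcongr
        exact (Finset.card_le_card fun k hk => (Finset.mem_filter.1 hk).2).trans hS
    _ = G + c * H / N := by field_simp

end Rescaling

section RecursionOverScales

variable {n d N j : ℕ} {a : ℝ → Fin d → ℂ} {l : ℝ → ℂ} {p u v x y δ K A M θ : ℝ}

theorem exists_branching_number (n : ℕ) (hd : d ≠ 0) {L : ℝ} (hL : 0 ≤ L)
    (hpd : 0 < 1 - p + p / d) :
    ∃ N : ℕ, 2 ≤ N ∧ 2 * L ≤ N ∧
      4 * n * (2 ^ p + (N * (2 * L / N) ^ (d : ℝ)⁻¹) ^ p) ≤ (N : ℝ) / 2 := by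
  have htendsto : Filter.Tendsto (fun N : ℕ => 4 * n * (2 ^ p * (N : ℝ) ^ (-1 : ℝ) +
      (2 * L) ^ (p / d) * (N : ℝ) ^ (-(1 - p + p / d)))) Filter.atTop
      (nhds (4 * n * (2 ^ p * 0 + (2 * L) ^ (p / d) * 0))) :=
    ((((tendsto_rpow_neg_atTop one_pos).comp tendsto_natCast_atTop_atTop).const_mul _).add
      (((tendsto_rpow_neg_atTop hpd).comp tendsto_natCast_atTop_atTop).const_mul _)).const_mul _
  obtain ⟨N, hle, hLN, hN⟩ := ((htendsto.eventually_le_const (u := 1 / 2) (by norm_num)).and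
    ((tendsto_natCast_atTop_atTop.eventually (Filter.eventually_ge_atTop (2 * L))).and
      (Filter.eventually_ge_atTop 2))).exists
  have hN₀ : (0 : ℝ) < N := by exact_mod_cast (by lia : 0 < N)
  have : (d : ℝ) ≠ 0 := by exact_mod_cast hd
  refine ⟨N, hN, hLN, ?_⟩
  calc 4 * n * ((2 : ℝ) ^ p + (N * (2 * L / N) ^ (d : ℝ)⁻¹) ^ p)
      = N * (4 * n * (2 ^ p * (N : ℝ) ^ (-1 : ℝ) +
          (2 * L) ^ (p / d) * (N : ℝ) ^ (-(1 - p + p / d)))) := by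
        rw [Real.mul_rpow hN₀.le (by positivity), ← Real.rpow_mul (by positivity),
          Real.div_rpow (by positivity) hN₀.le, inv_mul_eq_div,
          show -(1 - p + p / d) = p - 1 - p / d by ring, Real.rpow_sub hN₀, Real.rpow_sub hN₀,
          Real.rpow_one, Real.rpow_neg_one]
        field_simp
    _ ≤ N * (1 / 2) := by gcongr
    _ = N / 2 := by ring

/-- The estimate at mesh `δ` that is proved by induction over scales: Riesz partitions of the roots
of all admissible polynomials, of every size `M`. -/
def AdmissibleRieszBound (n d : ℕ) (p K A δ : ℝ) : Prop :=
  ∀ (M : ℝ) (a : ℝ → Fin d → ℂ) (l : ℝ → ℂ) (u v : ℝ), IsAdmissible n M a →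
    IsContinuousRoot a l u v → HasRieszPartition l p δ u v (A * max K M ^ p)

theorem AdmissibleRieszBound.hasRieszPartition_of_two_mul_le (hdn : d ≤ n) (hp : 1 ≤ p)
    (hδ : 0 ≤ δ) (hK : 0 ≤ K) (hA : 0 ≤ A) (H : AdmissibleRieszBound n d p K A (2 * δ))
    (ha : IsAdmissible n M a) (hl : IsContinuousRoot a l u v) (hM : 2 * M ≤ K) :
    HasRieszPartition l p δ u v (A * K ^ p) := by
  have hM₀ := ha.nonneg
  have := HasRieszPartition.of_grid_smul_of_card_le (N := 2) (S := ∅) (c := 0) (G := A * K ^ p)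
    (H := 0) (f := l) hp hδ two_pos (by positivity) le_rfl le_rfl hl.zero_le hl.le hl.le_one
    fun j hj x y hx hxy hy hu hv => by
      have hadm := ha.rescale (N := 2) (M' := 2 * M) hdn hj (by positivity) fun t ht i => by
        rw [mul_pow, Nat.cast_ofNat]
        exact mul_le_mul_of_nonneg_left (ha.norm_le t (gridCell_subset_Icc hj ht) i) (by positivity)
      have hroot := (hl.comp_add_div (by norm_num) hx hxy hy hu hv).scaleCoeffs (2 : ℕ)
      simpa only [Finset.notMem_empty, if_false, max_eq_left hM, Nat.cast_ofNat] using
        H _ _ _ x y hadm hroot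
  simpa using this

theorem AdmissibleRieszBound.hasRieszPartition_of_norm_scaleCoeffs_le (hdn : d ≤ n)
    (H : AdmissibleRieszBound n d p K A δ) (ha : IsAdmissible n M a) (hM : 0 < M) (hj : j < N)
    (hθ₀ : 0 ≤ θ) (hθ₁ : θ ≤ 1) (hb : ∀ t ∈ gridCell N j, ‖scaleCoeffs M⁻¹ (a t)‖ ≤ θ ^ d)
    (hl : IsContinuousRoot (fun s => a ((j + s) / N)) (fun s => l ((j + s) / N)) x y) :
    HasRieszPartition (fun s => (N : ℝ) • l ((j + s) / N)) p δ x y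
      (A * max K (N * M * θ) ^ p) :=
  H _ _ _ x y (ha.rescale_of_norm_scaleCoeffs_le hdn hM hj hθ₀ hθ₁ hb) (hl.scaleCoeffs N)

theorem IsAdmissible.exists_hasRieszPartition_of_le_norm_scaleCoeffs (hn : n ≠ 0) (hp : 1 ≤ p)
    (hd : ∀ k < d, UniformRieszBound n p k) {c : ℝ} (hc : 0 < c) :
    ∃ A ≥ 0, ∀ (M : ℝ) (N j : ℕ) (a : ℝ → Fin d → ℂ) (l : ℝ → ℂ) (x y : ℝ), IsAdmissible n M a →
      1 ≤ M → j < N → (∀ t ∈ gridCell N j, c ≤ ‖scaleCoeffs M⁻¹ (a t)‖) →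
      IsContinuousRoot (fun s => a ((j + s) / N)) (fun s => l ((j + s) / N)) x y →
        ∀ δ > 0, HasRieszPartition (fun s => (N : ℝ) • l ((j + s) / N)) p δ x y
          ((N * M) ^ p * A) := by
  obtain ⟨B, hB, hclass⟩ := exists_boundedWhitneyClass_scaleCoeffs_inv n d
  obtain ⟨A, hA, hbound⟩ :=
    exists_hasRieszPartition_of_le_norm hn hp hd (zero_le_one.trans hB) hc
  refine ⟨A, hA, fun M N j a l x y ha hM hj hc hl δ hδ => ?_⟩
  have hM₀ : M ≠ 0 := (one_pos.trans_le hM).ne'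
  have := (hbound _ _ x y (fun i => (hclass M M a ha hM le_rfl i).comp_add_div hj)
    (fun t ht => hc _ (add_div_mem_gridCell ht))
    (fun t ht => (ha.isTraceless _ (gridCell_subset_Icc hj (add_div_mem_gridCell ht))).scaleCoeffs)
    (hl.scaleCoeffs M⁻¹) δ hδ).const_smul (N * M)
  rw [abs_of_nonneg (by positivity)] at this
  exact this.congr fun t _ => by simp only [mul_smul, smul_inv_smul₀ hM₀]

theorem branching_estimate {L : ℝ} (hp : 0 ≤ p) (hN : 0 < N) (hA : 0 ≤ A) (hM : 0 ≤ M)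
    (hK : 0 ≤ K) (hKM : K ≤ 2 * M) (hθ : 0 ≤ θ) (hL : 2 * N ^ p * L ≤ A)
    (hbranch : 4 * n * (2 ^ p + (N * θ) ^ p) ≤ (N : ℝ) / 2) :
    (N * M) ^ p * L + (4 * n : ℕ) * (A * max K (N * M * θ) ^ p) / N ≤ A * M ^ p := by
  have hN₀ : (0 : ℝ) < N := Nat.cast_pos.2 hN
  have hmax : max K (N * M * θ) ^ p ≤ M ^ p * (2 ^ p + (N * θ) ^ p) := by
    rw [mul_add, ← Real.mul_rpow hM zero_le_two, ← Real.mul_rpow hM (by positivity)]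
    rcases max_cases K (N * M * θ) with ⟨h, -⟩ | ⟨h, -⟩ <;> rw [h]
    · refine (Real.rpow_le_rpow hK ?_ hp).trans (le_add_of_nonneg_right (by positivity))
      linarith
    · rw [show N * M * θ = M * (N * θ) by ring]
      exact le_add_of_nonneg_left (by positivity)
  have hgood : (N * M) ^ p * L ≤ A * M ^ p / 2 := by
    rw [Real.mul_rpow hN₀.le hM]
    nlinarith [mul_le_mul_of_nonneg_right hL (Real.rpow_nonneg hM p)]
  have hbad : (4 * n : ℕ) * (A * max K (N * M * θ) ^ p) / N ≤ A * M ^ p / 2 := by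
    rw [div_le_iff₀ hN₀]
    calc ((4 * n : ℕ) : ℝ) * (A * max K (N * M * θ) ^ p)
        ≤ (4 * n : ℕ) * (A * (M ^ p * (2 ^ p + (N * θ) ^ p))) := by gcongr
      _ = A * M ^ p * (4 * n * (2 ^ p + (N * θ) ^ p)) := by push_cast; ring
      _ ≤ A * M ^ p * (N / 2) := by gcongr
      _ = A * M ^ p / 2 * N := by ring
  linarith

theorem AdmissibleRieszBound.exists_hasRieszPartition_of_isAttained (hn : n ≠ 0) (hd : d ≠ 0)
    (hdn : d ≤ n) (hp : 1 ≤ p) (hpd : 0 < 1 - p + p / d)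
    (hrec : ∀ k < d, UniformRieszBound n p k) :
    ∃ (N : ℕ) (M₀ A₀ : ℝ), 2 ≤ N ∧ 1 ≤ M₀ ∧ ∀ K A δ : ℝ, 0 ≤ K → 0 ≤ A → A₀ ≤ A → 0 < δ →
      AdmissibleRieszBound n d p K A (N * δ) →
        ∀ (M : ℝ) (a : ℝ → Fin d → ℂ) (l : ℝ → ℂ) (u v : ℝ), M₀ ≤ M → K ≤ 2 * M →
          IsAdmissible n M a → IsAttained M a → IsContinuousRoot a l u v →
            HasRieszPartition l p δ u v (A * M ^ p) := by
  obtain ⟨L, hL, hcells⟩ := IsAdmissible.exists_cells_dichotomy n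
  obtain ⟨N, hN, hLN, hbranch⟩ := exists_branching_number n hd (zero_le_one.trans hL) hpd
  have hN₀ : (0 : ℝ) < N := by exact_mod_cast (by lia : 0 < N)
  set c : ℝ := (1 / N / 2) ^ n * (1 / N) / 2
  have hc : 0 < c := by positivity
  obtain ⟨A₁, hA₁, hgood⟩ :=
    IsAdmissible.exists_hasRieszPartition_of_le_norm_scaleCoeffs hn hp hrec hc
  set θ := (2 * L / N) ^ (d : ℝ)⁻¹
  have hθ₀ : 0 ≤ θ := by positivity
  have hθ₁ : θ ≤ 1 :=
    Real.rpow_le_one (by positivity) ((div_le_one hN₀).2 hLN) (by positivity)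
  have hθd : θ ^ d = 2 * L / N := Real.rpow_inv_natCast_pow (by positivity) hd
  refine ⟨N, max 1 c⁻¹, 2 * N ^ p * A₁, hN, le_max_left _ _,
    fun K A δ hK hA hA₁A hδ H M a l u v hM hKM ha hatt hl => ?_⟩
  have hM₁ : 1 ≤ M := (le_max_left _ _).trans hM
  have hM₀ : 0 < M := one_pos.trans_le hM₁
  obtain ⟨S, hS, hcgood, hcbad⟩ := hcells d N M a hN hM₁
    (inv_le_of_inv_le₀ hc ((le_max_right _ _).trans hM)) ha hatt
  refine (HasRieszPartition.of_grid_smul_of_card_le (G := (N * M) ^ p * A₁)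
    (H := A * max K (N * M * θ) ^ p) hp hδ.le (by lia) (by positivity) (by positivity) hS
    hl.zero_le hl.le hl.le_one fun j hj x y hx hxy hy hu hv => ?_).mono
    (branching_estimate (zero_le_one.trans hp) (by lia) hA hM₀.le hK hKM hθ₀ hA₁A hbranch)
  have hroot := hl.comp_add_div hN₀ hx hxy hy hu hv
  split_ifs with hjS
  · exact H.hasRieszPartition_of_norm_scaleCoeffs_le hdn ha hM₀ hj hθ₀ hθ₁
      (fun t ht => (hcbad j hj hjS t ht).trans_eq hθd.symm) hroot
  · exact hgood M N j a l x y ha hM₁ hj (hcgood j hj hjS) hroot _ (by positivity)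

theorem exists_admissibleRieszBound (hn : n ≠ 0) (hd : d ≠ 0) (hdn : d ≤ n) (hp : 1 ≤ p)
    (hpd : 0 < 1 - p + p / d) (hrec : ∀ k < d, UniformRieszBound n p k) :
    ∃ K ≥ 1, ∃ A ≥ 0, ∀ δ > 0, AdmissibleRieszBound n d p K A δ := by
  obtain ⟨N, M₀, A₀, hN, hM₀, hlarge⟩ :=
    AdmissibleRieszBound.exists_hasRieszPartition_of_isAttained hn hd hdn hp hpd hrec
  obtain ⟨C, hC, hbase⟩ := IsAdmissible.exists_hasRieszPartition_of_one_le hn hd hp hpd.le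
  have hA : 0 ≤ max C A₀ := hC.trans (le_max_left _ _)
  have : 0 ≤ p := zero_le_one.trans hp
  have hK : 0 ≤ 2 * M₀ := by linarith
  refine ⟨2 * M₀, by linarith, max C A₀, hA, ?_⟩
  have hscale (k : ℕ) : ∀ δ ≥ (1 / 2 : ℝ) ^ k,
      AdmissibleRieszBound n d p (2 * M₀) (max C A₀) δ := by
    induction k with
    | zero =>
      intro δ hδ M a l u v ha hl
      refine (hbase M a l u v ha hl δ (by simpa using hδ)).mono ?_
      gcongr ?_ * ?_ ^ p
      · exact le_max_left _ _
      · exact max_le (le_max_right _ _) (le_max_of_le_left (by linarith))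
    | succ k ih =>
      intro δ hδ M a l u v ha hl
      have hδ₀ : 0 < δ := lt_of_lt_of_le (by positivity) hδ
      have hδ₂ : (1 / 2 : ℝ) ^ k ≤ 2 * δ := by linarith [pow_succ (1 / 2 : ℝ) k]
      have hδN : 2 * δ ≤ N * δ := by gcongr; exact_mod_cast hN
      obtain ⟨M', hM', ha', hatt⟩ := ha.exists_isAttained hn hd
      rcases le_total (2 * M') (2 * M₀) with hsmall | hbig
      · refine ((ih _ hδ₂).hasRieszPartition_of_two_mul_le hdn hp hδ₀.le hK hA ha' hl hsmall).mono
          ?_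
        gcongr
        exact le_max_left _ _
      · refine (hlarge _ _ δ hK hA (le_max_right _ _) hδ₀ (ih _ (hδ₂.trans hδN)) M' a l u v
          (by linarith) hbig ha' hatt hl).mono ?_
        gcongr
        · exact ha'.nonneg
        · exact le_max_of_le_right hM'
  intro δ hδ
  obtain ⟨k, hk⟩ := exists_pow_lt_of_lt_one hδ (by norm_num : (1 / 2 : ℝ) < 1)
  exact hscale k δ hk.le

theorem one_sub_add_div_pos {n p : ℝ} {d : ℝ} (hn : 1 < n) (hp : 0 ≤ p) (hpn : p < n / (n - 1))
    (hd : 0 < d) (hdn : d ≤ n) : 0 < 1 - p + p / d := by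
  rw [lt_div_iff₀ (by linarith)] at hpn
  have hpos : 0 < 1 - p + p / n := by
    rw [show 1 - p + p / n = (n - p * (n - 1)) / n by field_simp; ring]
    exact div_pos (by linarith) (by linarith)
  linarith [div_le_div_of_nonneg_left hp hd hdn]

theorem not_isContinuousRoot_of_degree_zero {a : ℝ → Fin 0 → ℂ} : ¬ IsContinuousRoot a l u v :=
  fun h => by simpa [monicOfCoeffs] using h.eval_eq_zero u (left_mem_Icc.2 h.le)

theorem uniformRieszBound_of_admissibleRieszBound (hn : n ≠ 0) (hp : 1 ≤ p)
    (hK : 1 ≤ K) (hA : 0 ≤ A) (hbound : ∀ δ > 0, AdmissibleRieszBound n d p K A δ) :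
    UniformRieszBound n p d := by
  intro B hB
  obtain ⟨B', hB', hT⟩ := exists_boundedWhitneyClass_tschirnhausen (d := d) hn hB
  set m := max B' 1
  have hm : 1 ≤ m := le_max_right _ _
  have hm₀ : 0 < m := one_pos.trans_le hm
  set L := (n ^ 2 + 1) * B'
  refine ⟨2 ^ (p - 1) * (m ^ p * (A * K ^ p) + L ^ p * 1), by positivity,
    fun a l u v ha hl δ hδ => ?_⟩
  obtain ⟨hcoeff, hmean⟩ := hT a ha
  have hadm : IsAdmissible n 1 fun t => scaleCoeffs m⁻¹ (tschirnhausen (a t)) := by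
    have hle (i : Fin d) : m⁻¹ ^ (d - (i : ℕ)) * B' ≤ 1 := by
      rw [inv_pow, inv_mul_le_one₀ (by positivity)]
      exact (le_max_left _ _).trans (le_self_pow₀ hm (sub_val_ne_zero i))
    refine ⟨zero_le_one, fun i => ?_, fun t _ => (isTraceless_tschirnhausen _).scaleCoeffs,
      fun t ht i => ?_⟩
    · exact ((hcoeff i).whitneyClass.scaleCoeffs (a := fun t => tschirnhausen (a t))
        (inv_nonneg.2 hm₀.le)).mono (hle i)
    · rw [norm_scaleCoeffs_apply (inv_nonneg.2 hm₀.le), one_pow]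
      exact (mul_le_mul_of_nonneg_left ((hcoeff i).norm_le hn ht) (by positivity)).trans (hle i)
  have hroot := (hl.tschirnhausen (hmean.continuousOn hn)).scaleCoeffs m⁻¹
  have hpart := (hbound δ hδ 1 _ _ u v hadm hroot).const_smul m
  rw [max_eq_left hK, abs_of_pos hm₀] at hpart
  refine ((hpart.add_lipschitz hp (L := L) (by positivity) fun s hs t ht =>
    hmean.norm_sub_le hn (hl.Icc_subset hs) (hl.Icc_subset ht)).congr fun t _ => ?_).mono ?_
  · simp only [smul_inv_smul₀ hm₀.ne', sub_add_cancel]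
  · gcongr
    linarith [hl.zero_le, hl.le_one]

theorem uniformRieszBound (hn : 2 ≤ n) (hp : 1 ≤ p) (hpn : p < n / (n - 1)) (hdn : d ≤ n) :
    UniformRieszBound n p d := by
  induction d using Nat.strong_induction_on with
  | _ d ih =>
  rcases eq_or_ne d 0 with rfl | hd
  · exact fun B _ => ⟨0, le_rfl, fun a l u v _ hl => (not_isContinuousRoot_of_degree_zero hl).elim⟩
  have hpd : 0 < 1 - p + p / d := one_sub_add_div_pos (n := n) (by exact_mod_cast hn)
    (zero_le_one.trans hp) hpn (by exact_mod_cast Nat.pos_of_ne_zero hd) (by exact_mod_cast hdn)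
  obtain ⟨K, hK, A, hA, hbound⟩ := exists_admissibleRieszBound (by lia) hd hdn hp hpd
    fun k hk => ih k hk (hk.le.trans hdn)
  exact uniformRieszBound_of_admissibleRieszBound (by lia) hp hK hA hbound

end RecursionOverScales

section RieszDensity

variable {E : Type*} [NormedAddCommGroup E] {f : ℝ → E} {g : ℝ → ℝ≥0∞} {p δ x y z r α β B : ℝ}

theorem HasRieszPartition.nonneg (h : HasRieszPartition f p δ x y B) : 0 ≤ B := by
  induction h with
  | single hxy _ hB =>
    exact (mul_nonneg (by positivity) (Real.rpow_nonneg (sub_nonneg.2 hxy) _)).trans hB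
  | glue _ _ hB ih₁ ih₂ => exact (add_nonneg ih₁ ih₂).trans hB

theorem lintegral_Ioc_add_lintegral_Ioc (g : ℝ → ℝ≥0∞) (hxz : x ≤ z) (hzy : z ≤ y) :
    (∫⁻ t in Ioc x z, g t) + ∫⁻ t in Ioc z y, g t = ∫⁻ t in Ioc x y, g t := by
  rw [← lintegral_union measurableSet_Ioc (Ioc_disjoint_Ioc_of_le le_rfl),
    Ioc_union_Ioc_eq_Ioc hxz hzy]

theorem exists_density_single (hp : 0 < p) (hxy : x ≤ y) :
    ∃ c : ℝ≥0∞, ∫⁻ _ in Ioc x y, c ^ p = ENNReal.ofReal (‖f y - f x‖ ^ p * (y - x) ^ (1 - p)) ∧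
      ‖f y - f x‖ₑ = ∫⁻ _ in Ioc x y, c := by
  have hyx : 0 ≤ y - x := sub_nonneg.2 hxy
  have hc : 0 ≤ ‖f y - f x‖ / (y - x) := by positivity
  refine ⟨ENNReal.ofReal (‖f y - f x‖ / (y - x)), ?_, ?_⟩
  · rw [setLIntegral_const, Real.volume_Ioc, ENNReal.ofReal_rpow_of_nonneg hc hp.le,
      ← ENNReal.ofReal_mul (by positivity)]
    rcases hxy.eq_or_lt with rfl | hlt
    · simp [Real.zero_rpow hp.ne']
    · rw [Real.div_rpow (norm_nonneg _) hyx, Real.rpow_sub (sub_pos.2 hlt), Real.rpow_one,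
        div_mul_eq_mul_div, mul_div_assoc]
  · rw [setLIntegral_const, Real.volume_Ioc, ← ENNReal.ofReal_mul hc, ← ofReal_norm]
    rcases hxy.eq_or_lt with rfl | hlt
    · simp
    · rw [div_mul_cancel₀ _ (sub_pos.2 hlt).ne']

/-- `g` is an approximate density of `f` on `[x, y]`: the increment of `f` over `[s, t]` is at most
`∫ g` over `[s, t]`, plus an error `e` for each of `s`, `t` that is not an endpoint of `[x, y]`.
Being exact at the endpoints, approximate densities can be glued without accumulating errors. -/
def IsApproxDensity (f : ℝ → E) (e : ℝ≥0∞) (g : ℝ → ℝ≥0∞) (x y : ℝ) : Prop :=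
  ∀ s ∈ Icc x y, ∀ t ∈ Icc x y, s ≤ t →
    ‖f t - f s‖ₑ ≤ (∫⁻ r in Ioc s t, g r) + ((if s = x then 0 else e) + if t = y then 0 else e)

namespace IsApproxDensity

variable {e : ℝ≥0∞} {g₁ : ℝ → ℝ≥0∞}

theorem enorm_sub_le (h : IsApproxDensity f e g x y) {s t : ℝ} (hs : s ∈ Icc x y) (ht : t ∈ Icc x y)
    (hst : s ≤ t) : ‖f t - f s‖ₑ ≤ (∫⁻ r in Ioc s t, g r) + (e + e) := by
  refine (h s hs t ht hst).trans ?_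
  gcongr <;> split_ifs <;> simp

theorem congr (h : IsApproxDensity f e g₁ x y) (hg : EqOn g₁ g (Ioc x y)) :
    IsApproxDensity f e g x y := fun s hs t ht hst => by
  rw [← setLIntegral_congr_fun measurableSet_Ioc (hg.mono (Ioc_subset_Ioc hs.1 ht.2))]
  exact h s hs t ht hst

theorem glue (hxz : x ≤ z) (hzy : z ≤ y) (h₁ : IsApproxDensity f e g x z)
    (h₂ : IsApproxDensity f e g z y) : IsApproxDensity f e g x y := fun s hs t ht hst => by
  rcases le_total t z with htz | hzt
  · refine (h₁ s ⟨hs.1, hst.trans htz⟩ t ⟨ht.1, htz⟩ hst).trans ?_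
    have : (if t = z then 0 else e) ≤ if t = y then 0 else e := by grind [zero_le (a := e)]
    gcongr
  rcases le_total s z with hsz | hzs
  · calc ‖f t - f s‖ₑ
        ≤ ‖f z - f s‖ₑ + ‖f t - f z‖ₑ := by
          rw [← sub_add_sub_cancel' (f z) (f s) (f t)]
          exact enorm_add_le _ _
      _ ≤ _ := add_le_add (h₁ s ⟨hs.1, hsz⟩ z (right_mem_Icc.2 hxz) hsz)
          (h₂ z (left_mem_Icc.2 hzy) t ⟨hzt, ht.2⟩ hzt)
      _ = _ := by
          rw [← lintegral_Ioc_add_lintegral_Ioc g hsz hzt, if_pos rfl, add_zero,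
            zero_add, add_add_add_comm]
  · refine (h₂ s ⟨hzs, hs.2⟩ t ⟨hzs.trans hst, ht.2⟩ hst).trans ?_
    have : (if s = z then 0 else e) ≤ if s = x then 0 else e := by grind [zero_le (a := e)]
    gcongr

end IsApproxDensity

theorem HasRieszPartition.exists_isApproxDensity (hp : 0 < p) {e : ℝ≥0∞}
    (h : HasRieszPartition f p δ x y B)
    (hf : ∀ s ∈ Icc x y, ∀ t ∈ Icc x y, |t - s| ≤ δ → ‖f t - f s‖ₑ ≤ e) :
    ∃ g : ℝ → ℝ≥0∞, Measurable g ∧ ∫⁻ t in Ioc x y, g t ^ p ≤ ENNReal.ofReal B ∧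
      IsApproxDensity f e g x y := by
  induction h with
  | @single x y B hxy hmesh hB =>
    obtain ⟨c, hc_rpow, hc⟩ := exists_density_single (f := f) hp hxy
    refine ⟨fun _ => c, measurable_const, hc_rpow.trans_le (ENNReal.ofReal_le_ofReal hB),
      fun s hs t ht hst => ?_⟩
    have he : ‖f t - f s‖ₑ ≤ e :=
      hf s hs t ht (abs_le.2 ⟨by linarith [hs.1, ht.2], by linarith [hs.1, ht.2]⟩)
    by_cases hsx : s = x
    · by_cases hty : t = y
      · subst hsx hty
        exact hc.le.trans le_self_add
      · rw [if_pos hsx, if_neg hty, zero_add]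
        exact le_add_left he
    · rw [if_neg hsx]
      exact le_add_left (le_add_right he)
  | @glue x z y B₁ B₂ B h₁ h₂ hB ih₁ ih₂ =>
    obtain ⟨g₁, hg₁, hg₁_rpow, hfg₁⟩ := ih₁ fun s hs t ht =>
      hf s (Icc_subset_Icc_right h₂.le hs) t (Icc_subset_Icc_right h₂.le ht)
    obtain ⟨g₂, hg₂, hg₂_rpow, hfg₂⟩ := ih₂ fun s hs t ht =>
      hf s (Icc_subset_Icc_left h₁.le hs) t (Icc_subset_Icc_left h₁.le ht)
    set g : ℝ → ℝ≥0∞ := fun t => if t ≤ z then g₁ t else g₂ t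
    have hleft : EqOn g₁ g (Ioc x z) := fun r hr => (if_pos hr.2).symm
    have hright : EqOn g₂ g (Ioc z y) := fun r hr => (if_neg hr.1.not_ge).symm
    refine ⟨g, hg₁.ite measurableSet_Iic hg₂, ?_,
      (hfg₁.congr hleft).glue h₁.le h₂.le (hfg₂.congr hright)⟩
    calc ∫⁻ t in Ioc x y, g t ^ p
        = (∫⁻ t in Ioc x z, g₁ t ^ p) + ∫⁻ t in Ioc z y, g₂ t ^ p := by
          rw [← lintegral_Ioc_add_lintegral_Ioc _ h₁.le h₂.le]
          exact congrArg₂ _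
            (setLIntegral_congr_fun measurableSet_Ioc fun t ht => by rw [hleft ht])
            (setLIntegral_congr_fun measurableSet_Ioc fun t ht => by rw [hright ht])
      _ ≤ ENNReal.ofReal B₁ + ENNReal.ofReal B₂ := add_le_add hg₁_rpow hg₂_rpow
      _ ≤ ENNReal.ofReal B := by
          rw [← ENNReal.ofReal_add h₁.nonneg h₂.nonneg]
          exact ENNReal.ofReal_le_ofReal hB

theorem exists_density_of_continuousOn (hp : 0 < p) (hf : ContinuousOn f (Icc x y))
    (h : ∀ δ > 0, HasRieszPartition f p δ x y B) {e : ℝ} (he : 0 < e) :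
    ∃ g : ℝ → ℝ≥0∞, Measurable g ∧ ∫⁻ t, g t ^ p ≤ ENNReal.ofReal B ∧
      ∀ s ∈ Icc x y, ∀ t ∈ Icc x y, s ≤ t →
        ‖f t - f s‖ₑ ≤ (∫⁻ r in Ioc s t, g r) + ENNReal.ofReal e := by
  obtain ⟨δ, hδ, hfδ⟩ := Metric.uniformContinuousOn_iff_le.1
    (isCompact_Icc.uniformContinuousOn_of_continuous hf) (e / 2) (half_pos he)
  obtain ⟨g, hg, hg_rpow, hfg⟩ :=
    (h δ hδ).exists_isApproxDensity hp (e := ENNReal.ofReal (e / 2)) fun s hs t ht hst => by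
      rw [← ofReal_norm, ← dist_eq_norm]
      exact ENNReal.ofReal_le_ofReal (hfδ t ht s hs hst)
  refine ⟨(Ioc x y).indicator g, hg.indicator measurableSet_Ioc, ?_, fun s hs t ht hst => ?_⟩
  · rw [← lintegral_indicator measurableSet_Ioc] at hg_rpow
    convert hg_rpow with t
    by_cases ht : t ∈ Ioc x y <;> simp [ht, hp]
  · have hfg' := hfg.congr (eqOn_indicator (s := Ioc x y) (f := g)).symm
    have := hfg'.enorm_sub_le hs ht hst
    rwa [← ENNReal.ofReal_add (by positivity) (by positivity), add_halves] at this

theorem setLIntegral_rpow_le (hg : Measurable g) (hp : 1 ≤ p) (A : Set ℝ) :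
    (∫⁻ t in A, g t) ^ p ≤ (∫⁻ t in A, g t ^ p) * volume A ^ (p - 1) := by
  have hp₀ : 0 < p := one_pos.trans_le hp
  have hle := eLpNorm'_le_eLpNorm'_mul_rpow_measure_univ (μ := volume.restrict A) (f := g)
    one_pos hp hg.aestronglyMeasurable
  simp only [eLpNorm', enorm_eq_self, ENNReal.rpow_one, div_one, one_div,
    Measure.restrict_apply_univ] at hle
  refine (ENNReal.rpow_le_rpow hle hp₀.le).trans_eq ?_
  rw [ENNReal.mul_rpow_of_nonneg _ _ hp₀.le, ENNReal.rpow_inv_rpow hp₀.ne', ← ENNReal.rpow_mul,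
    sub_mul, inv_mul_cancel₀ hp₀.ne', one_mul]

theorem sum_enorm_rpow_le (hp : 1 ≤ p) (hf : ContinuousOn f (Icc x y))
    (h : ∀ δ > 0, HasRieszPartition f p δ x y B) {ι : Type*} [Fintype ι] {u v : ι → ℝ}
    (huv : ∀ i, u i ≤ v i ∧ Icc (u i) (v i) ⊆ Icc x y)
    (hdisj : Pairwise fun i j => Disjoint (Ioo (u i) (v i)) (Ioo (u j) (v j))) :
    (∑ i, ‖f (v i) - f (u i)‖ₑ) ^ p ≤
      ENNReal.ofReal B * (∑ i, ENNReal.ofReal (v i - u i)) ^ (p - 1) := by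
  have hp₀ : 0 < p := one_pos.trans_le hp
  set Q := ENNReal.ofReal B * (∑ i, ENNReal.ofReal (v i - u i)) ^ (p - 1)
  have hsum {e : ℝ} (he : 0 < e) :
      ∑ i, ‖f (v i) - f (u i)‖ₑ ≤ Q ^ p⁻¹ + Fintype.card ι * ENNReal.ofReal e := by
    obtain ⟨g, hg, hg_rpow, hfg⟩ := exists_density_of_continuousOn hp₀ hf h he
    set A := ⋃ i, Ioo (u i) (v i)
    have hA : volume A ≤ ∑ i, ENNReal.ofReal (v i - u i) :=
      (measure_iUnion_fintype_le _ _).trans_eq (by simp only [Real.volume_Ioo])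
    have hQ : ∫⁻ t in A, g t ≤ Q ^ p⁻¹ := (ENNReal.le_rpow_inv_iff hp₀).2 <|
      (setLIntegral_rpow_le hg hp A).trans <| mul_le_mul'
        ((setLIntegral_le_lintegral _ _).trans hg_rpow)
        (ENNReal.rpow_le_rpow hA (sub_nonneg.2 hp))
    calc ∑ i, ‖f (v i) - f (u i)‖ₑ
        ≤ ∑ i, ((∫⁻ t in Ioo (u i) (v i), g t) + ENNReal.ofReal e) := by
          refine Finset.sum_le_sum fun i _ => ?_
          obtain ⟨hle, hsub⟩ := huv i
          rw [restrict_Ioo_eq_restrict_Ioc]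
          exact hfg _ (hsub (left_mem_Icc.2 hle)) _ (hsub (right_mem_Icc.2 hle)) hle
      _ = (∫⁻ t in A, g t) + Fintype.card ι * ENNReal.ofReal e := by
          rw [lintegral_iUnion (fun _ => measurableSet_Ioo) hdisj, tsum_fintype,
            Finset.sum_add_distrib, Finset.sum_const, Finset.card_univ, nsmul_eq_mul]
      _ ≤ Q ^ p⁻¹ + Fintype.card ι * ENNReal.ofReal e := by gcongr
  have htendsto := (ENNReal.Tendsto.const_mul (a := Fintype.card ι)
    (ENNReal.tendsto_ofReal (tendsto_one_div_add_atTop_nhds_zero_nat (𝕜 := ℝ)))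
    (.inr (ENNReal.natCast_ne_top _))).const_add (Q ^ p⁻¹)
  rw [ENNReal.ofReal_zero, mul_zero, add_zero] at htendsto
  exact (ENNReal.le_rpow_inv_iff hp₀).1
    (ge_of_tendsto' htendsto fun k => hsum Nat.one_div_pos_of_nat)

theorem lintegral_Ioc_add_right (g : ℝ → ℝ≥0∞) (t r : ℝ) :
    ∫⁻ s in Ioc t (t + r), g s = ∫⁻ s in Ioc 0 r, g (t + s) := by
  rw [← (measurePreserving_add_left volume t).setLIntegral_comp_preimage_emb
    (measurableEmbedding_addLeft t), preimage_const_add_Ioc, sub_self, add_sub_cancel_left]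

theorem measurable_lintegral_Ioc_add (hg : Measurable g) (r : ℝ) :
    Measurable fun t => ∫⁻ s in Ioc t (t + r), g s := by
  simp only [lintegral_Ioc_add_right]
  exact (hg.comp measurable_add).lintegral_prod_right'

theorem lintegral_average_rpow_le (hg : Measurable g) (hp : 1 ≤ p) (hr : 0 < r) :
    ∫⁻ t, ((ENNReal.ofReal r)⁻¹ * ∫⁻ s in Ioc t (t + r), g s) ^ p ≤ ∫⁻ t, g t ^ p := by
  set R := ENNReal.ofReal r
  have hR : R ≠ 0 := by simpa [R] using hr
  have hR_top : R ≠ ∞ := ENNReal.ofReal_ne_top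
  have hjensen (t : ℝ) : (R⁻¹ * ∫⁻ s in Ioc t (t + r), g s) ^ p ≤
      R⁻¹ * ∫⁻ s in Ioc t (t + r), g s ^ p := by
    calc (R⁻¹ * ∫⁻ s in Ioc t (t + r), g s) ^ p
        ≤ R⁻¹ ^ p * ((∫⁻ s in Ioc t (t + r), g s ^ p) * R ^ (p - 1)) := by
          rw [ENNReal.mul_rpow_of_nonneg _ _ (by linarith)]
          gcongr
          simpa [R] using setLIntegral_rpow_le hg hp (Ioc t (t + r))
      _ = R⁻¹ * ∫⁻ s in Ioc t (t + r), g s ^ p := by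
          rw [mul_comm (lintegral _ _), ← mul_assoc, ENNReal.inv_rpow, ← ENNReal.rpow_neg,
            ← ENNReal.rpow_add _ _ hR hR_top, ← ENNReal.rpow_neg_one]
          ring_nf
  have hm : Measurable fun q : ℝ × ℝ => g (q.1 + q.2) ^ p := (hg.comp measurable_add).pow_const p
  calc ∫⁻ t, (R⁻¹ * ∫⁻ s in Ioc t (t + r), g s) ^ p
      ≤ ∫⁻ t, R⁻¹ * ∫⁻ s in Ioc t (t + r), g s ^ p := lintegral_mono hjensen
    _ = R⁻¹ * ∫⁻ s in Ioc 0 r, ∫⁻ t, g (t + s) ^ p := by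
        simp only [lintegral_Ioc_add_right]
        rw [lintegral_const_mul _ hm.lintegral_prod_right',
          lintegral_lintegral_swap hm.aemeasurable]
    _ = ∫⁻ t, g t ^ p := by
        have htrans (s : ℝ) : ∫⁻ t, g (t + s) ^ p = ∫⁻ t, g t ^ p :=
          lintegral_add_right_eq_self (fun t => g t ^ p) s
        simp only [htrans, setLIntegral_const, Real.volume_Ioc, sub_zero]
        rw [mul_comm, mul_assoc, ENNReal.mul_inv_cancel hR hR_top, mul_one]

theorem exists_slope_bound [NormedSpace ℝ E] (hp : 1 ≤ p) (hf : ContinuousOn f (Icc x y))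
    (h : ∀ δ > 0, HasRieszPartition f p δ x y B) (hr : 0 < r) :
    ∃ F : ℝ → ℝ≥0∞, Measurable F ∧ ∫⁻ t, F t ^ p ≤ ENNReal.ofReal B ∧
      ∀ t ∈ Icc x y, t + r ∈ Icc x y → ‖r⁻¹ • (f (t + r) - f t)‖ₑ ≤ F t + ENNReal.ofReal r := by
  obtain ⟨g, hg, hg_rpow, hfg⟩ :=
    exists_density_of_continuousOn (one_pos.trans_le hp) hf h (mul_pos hr hr)
  refine ⟨fun t => (ENNReal.ofReal r)⁻¹ * ∫⁻ s in Ioc t (t + r), g s,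
    (measurable_lintegral_Ioc_add hg r).const_mul _,
    (lintegral_average_rpow_le hg hp hr).trans hg_rpow, fun t ht htr => ?_⟩
  have hr_enorm : ‖r⁻¹‖ₑ = (ENNReal.ofReal r)⁻¹ := by
    rw [Real.enorm_of_nonneg (inv_nonneg.2 hr.le), ENNReal.ofReal_inv_of_pos hr]
  calc ‖r⁻¹ • (f (t + r) - f t)‖ₑ
      ≤ (ENNReal.ofReal r)⁻¹ *
          ((∫⁻ s in Ioc t (t + r), g s) + ENNReal.ofReal r * ENNReal.ofReal r) := by
        rw [enorm_smul, hr_enorm, ← ENNReal.ofReal_mul hr.le]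
        gcongr
        exact hfg t ht _ htr (by linarith)
    _ = _ := by
        rw [mul_add, ← mul_assoc, ENNReal.inv_mul_cancel (by simpa using hr) ENNReal.ofReal_ne_top,
          one_mul]

theorem enorm_deriv_rpow_le_liminf [NormedSpace ℝ E] (hp : 0 < p) {t : ℝ} {r : ℕ → ℝ}
    {F : ℕ → ℝ≥0∞} (hr : ∀ k, 0 < r k) (hr_zero : Filter.Tendsto r Filter.atTop (nhds 0))
    (hF : ∀ᶠ k in Filter.atTop,
      ‖(r k)⁻¹ • (f (t + r k) - f t)‖ₑ ≤ F k + ENNReal.ofReal (r k)) :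
    ‖deriv f t‖ₑ ^ p ≤ Filter.liminf (fun k => F k ^ p) Filter.atTop := by
  by_cases hd : DifferentiableAt ℝ f t
  swap
  · simp [deriv_zero_of_not_differentiableAt hd, hp]
  have hslope := (hd.hasDerivAt.tendsto_slope_zero_right.comp
    (tendsto_nhdsWithin_iff.2 ⟨hr_zero, .of_forall hr⟩)).enorm
  have hlim := (ENNReal.continuous_rpow_const (y := p)).continuousAt.tendsto.comp <|
    ENNReal.Tendsto.sub hslope (ENNReal.tendsto_ofReal hr_zero) (.inr ENNReal.ofReal_ne_top)
  rw [ENNReal.ofReal_zero, tsub_zero] at hlim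
  rw [← hlim.liminf_eq]
  refine Filter.liminf_le_liminf ?_
  filter_upwards [hF] with k hk
  exact ENNReal.rpow_le_rpow (tsub_le_iff_right.2 hk) hp.le

theorem lintegral_enorm_deriv_rpow_le [NormedSpace ℝ E] (hp : 1 ≤ p) (hαβ : α < β)
    (hf : ContinuousOn f (Ioo α β))
    (h : ∀ x y, α < x → x ≤ y → y < β → ∀ δ > 0, HasRieszPartition f p δ x y B) :
    ∫⁻ t in Ioo α β, ‖deriv f t‖ₑ ^ p ≤ ENNReal.ofReal B := by
  have hp₀ : 0 < p := one_pos.trans_le hp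
  set r : ℕ → ℝ := fun k => (β - α) / (k + 2 : ℕ)
  have hr (k : ℕ) : 0 < r k := div_pos (sub_pos.2 hαβ) (by positivity)
  have hr_half (k : ℕ) : r k ≤ (β - α) / 2 :=
    div_le_div_of_nonneg_left (sub_pos.2 hαβ).le two_pos (mod_cast Nat.le_add_left 2 k)
  have hr_zero : Filter.Tendsto r Filter.atTop (nhds 0) :=
    (tendsto_const_div_atTop_nhds_zero_nat (β - α)).comp (Filter.tendsto_add_atTop_nat 2)
  choose F hF hF_rpow hfF using fun k => exists_slope_bound (x := α + r k) (y := β - r k) hp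
    (hf.mono (Icc_subset_Ioo (by linarith [hr k]) (by linarith [hr k])))
    (h _ _ (by linarith [hr k]) (by linarith [hr_half k]) (by linarith [hr k])) (hr k)
  have hliminf : ∀ t ∈ Ioo α β,
      ‖deriv f t‖ₑ ^ p ≤ Filter.liminf (fun k => F k t ^ p) Filter.atTop := fun t ht => by
    refine enorm_deriv_rpow_le_liminf hp₀ hr hr_zero ?_
    filter_upwards [hr_zero.eventually_lt_const (sub_pos.2 ht.1),
      hr_zero.eventually_lt_const (half_pos (sub_pos.2 ht.2))] with k hk_left hk_right
    exact hfF k t ⟨by linarith, by linarith [hr k]⟩ ⟨by linarith [hr k], by linarith⟩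
  calc ∫⁻ t in Ioo α β, ‖deriv f t‖ₑ ^ p
      ≤ ∫⁻ t in Ioo α β, Filter.liminf (fun k => F k t ^ p) Filter.atTop :=
        setLIntegral_mono' measurableSet_Ioo hliminf
    _ ≤ ∫⁻ t, Filter.liminf (fun k => F k t ^ p) Filter.atTop := setLIntegral_le_lintegral _ _
    _ ≤ Filter.liminf (fun k => ∫⁻ t, F k t ^ p) Filter.atTop :=
        lintegral_liminf_le fun k => (hF k).pow_const p
    _ ≤ ENNReal.ofReal B := by
        refine (Filter.liminf_le_liminf (.of_forall hF_rpow)).trans_eq ?_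
        exact Filter.liminf_const _

theorem exists_Icc_subset_Ioo_of_finite {ι : Type*} [Finite ι] [Nonempty ι] {u v : ι → ℝ}
    (huv : ∀ i, u i ≤ v i ∧ Icc (u i) (v i) ⊆ Ioo α β) :
    ∃ x y, α < x ∧ x ≤ y ∧ y < β ∧ ∀ i, Icc (u i) (v i) ⊆ Icc x y := by
  obtain ⟨i, hi⟩ := Finite.exists_min u
  obtain ⟨j, hj⟩ := Finite.exists_max v
  exact ⟨u i, v j, ((huv i).2 (left_mem_Icc.2 (huv i).1)).1, (huv i).1.trans (hj i),
    ((huv j).2 (right_mem_Icc.2 (huv j).1)).2, fun k => Icc_subset_Icc (hi k) (hj k)⟩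

theorem absContOn_of_hasRieszPartition (hp : 1 < p) (hf : ContinuousOn f (Ioo α β))
    (h : ∀ x y, α < x → x ≤ y → y < β → ∀ δ > 0, HasRieszPartition f p δ x y B) :
    AbsContOn f (Ioo α β) := fun ε hε => by
  have htendsto : Filter.Tendsto (fun s : ℝ => ENNReal.ofReal B * ENNReal.ofReal s ^ (p - 1))
      (nhds 0) (nhds (ENNReal.ofReal B * ENNReal.ofReal 0 ^ (p - 1))) :=
    ENNReal.Tendsto.const_mul ((ENNReal.tendsto_ofReal Filter.tendsto_id).ennrpow_const _)
      (.inr ENNReal.ofReal_ne_top)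
  rw [ENNReal.ofReal_zero, ENNReal.zero_rpow_of_pos (sub_pos.2 hp), mul_zero] at htendsto
  obtain ⟨δ, hδ, hδε⟩ := Metric.eventually_nhds_iff.1 (htendsto.eventually_lt_const
    (ENNReal.rpow_pos (p := p) (ENNReal.ofReal_pos.2 hε) ENNReal.ofReal_ne_top))
  refine ⟨δ, hδ, fun N u v huv hdisj hlt => ?_⟩
  rcases isEmpty_or_nonempty (Fin N) with hN | hN
  · simpa using hε
  obtain ⟨x, y, hx, hxy, hy, hsub⟩ := exists_Icc_subset_Ioo_of_finite huv
  have hlen (i : Fin N) : 0 ≤ v i - u i := sub_nonneg.2 (huv i).1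
  have hsum := sum_enorm_rpow_le hp.le (hf.mono (Icc_subset_Ioo hx hy)) (h x y hx hxy hy)
    (fun i => ⟨(huv i).1, hsub i⟩) fun i j => hdisj i j
  rw [← ENNReal.ofReal_sum_of_nonneg fun i _ => hlen i] at hsum
  have hlt' := (ENNReal.rpow_lt_rpow_iff (one_pos.trans hp)).1 <| hsum.trans_lt <| hδε <| by
    rwa [Real.dist_0_eq_abs, abs_of_nonneg (Finset.sum_nonneg fun i _ => hlen i)]
  simp only [← ofReal_norm] at hlt'
  rw [← ENNReal.ofReal_sum_of_nonneg fun i _ => norm_nonneg _] at hlt'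
  exact (ENNReal.ofReal_lt_ofReal_iff hε).1 hlt'

end RieszDensity

section TaylorExtension

variable {E : Type*} [NormedAddCommGroup E] [NormedSpace ℝ E]
  {d : ℕ → ℝ → E} {k m : ℕ} {S : Set ℝ} {K α β : ℝ}

/-- The Taylor polynomial of degree less than `m` at `t₀` with prescribed derivatives `c i`. It is
used with values of a derivative chain, for which the iterated derivatives need not make sense at
the endpoints of the interval. -/
def taylorSum (c : ℕ → E) (m : ℕ) (t₀ t : ℝ) : E :=
  ∑ i ∈ Finset.range m, ((t - t₀) ^ i / (i.factorial : ℝ)) • c i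

theorem taylorSum_succ_self (c : ℕ → E) (m : ℕ) (t₀ : ℝ) : taylorSum c (m + 1) t₀ t₀ = c 0 := by
  simp [taylorSum, Finset.sum_range_succ']

theorem hasDerivAt_taylorSum_succ (c : ℕ → E) (m : ℕ) (t₀ t : ℝ) :
    HasDerivAt (taylorSum c (m + 1) t₀) (taylorSum (fun i => c (i + 1)) m t₀ t) t := by
  have hterm (i : ℕ) : HasDerivAt
      (fun t => ((t - t₀) ^ (i + 1) / ((i + 1).factorial : ℝ)) • c (i + 1))
      (((t - t₀) ^ i / (i.factorial : ℝ)) • c (i + 1)) t := by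
    have hpow := ((hasDerivAt_id t).sub_const t₀).pow (i + 1)
    refine ((hpow.div_const _).smul_const _).congr_deriv ?_
    rw [Nat.factorial_succ]
    push_cast
    simp only [id, mul_one]
    congr 1
    field_simp
  have hsplit : taylorSum c (m + 1) t₀ = fun t =>
      ∑ i ∈ Finset.range m, ((t - t₀) ^ (i + 1) / ((i + 1).factorial : ℝ)) • c (i + 1) + c 0 := by
    funext s
    simp [taylorSum, Finset.sum_range_succ']
  rw [hsplit]
  exact (HasDerivAt.fun_sum fun i _ => hterm i).add_const _

theorem norm_taylorSum_le {c : ℕ → E} {t₀ t : ℝ} (hc : ∀ i < m, ‖c i‖ ≤ K) (ht : |t - t₀| ≤ 1) :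
    ‖taylorSum c m t₀ t‖ ≤ m * K := by
  refine (norm_sum_le_of_le _ fun i hi => ?_).trans_eq (by simp : ∑ _ ∈ Finset.range m, K = m * K)
  have hcoeff : |t - t₀| ^ i / (i.factorial : ℝ) ≤ 1 :=
    div_le_one_of_le₀ ((pow_le_one₀ (abs_nonneg _) ht).trans (mod_cast i.factorial_pos))
      (by positivity)
  rw [norm_smul, norm_div, norm_pow, Real.norm_eq_abs, Real.norm_natCast]
  exact (mul_le_of_le_one_left (norm_nonneg _) hcoeff).trans (hc i (Finset.mem_range.1 hi))

theorem DerivChain.norm_sub_taylorSum_le (hS : S.OrdConnected) (hK : 0 ≤ K)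
    (hd : DerivChain d k S) (hL : ∀ s ∈ S, ∀ t ∈ S, ‖d k s - d k t‖ ≤ K * |s - t|) :
    ∀ s ∈ S, ∀ t ∈ S, ‖d 0 t - taylorSum (fun i => d i s) (k + 1) s t‖ ≤ K * |t - s| ^ (k + 1) := by
  induction k generalizing d with
  | zero =>
    intro s hs t ht
    simpa [taylorSum] using hL t ht s hs
  | succ k ih =>
    intro s hs t ht
    have hsub : uIcc s t ⊆ S := hS.uIcc_subset hs ht
    have hderiv (r : ℝ) (hr : r ∈ uIcc s t) : HasDerivWithinAt
        (fun t => d 0 t - taylorSum (fun i => d i s) (k + 1 + 1) s t)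
        (d 1 r - taylorSum (fun i => d (i + 1) s) (k + 1) s r) (uIcc s t) r :=
      ((hd 0 (by lia) r (hsub hr)).mono hsub).sub
        (hasDerivAt_taylorSum_succ _ _ _ _).hasDerivWithinAt
    have hbound (r : ℝ) (hr : r ∈ uIcc s t) :
        ‖d 1 r - taylorSum (fun i => d (i + 1) s) (k + 1) s r‖ ≤ K * |t - s| ^ (k + 1) := by
      refine (ih (d := fun i => d (i + 1)) (fun i hi => hd (i + 1) (by lia)) hL
        s hs r (hsub hr)).trans ?_
      have : |r - s| ≤ |t - s| := abs_sub_left_of_mem_uIcc hr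
      gcongr
    have hmvt := (convex_uIcc s t).norm_image_sub_le_of_norm_hasDerivWithin_le hderiv hbound
      left_mem_uIcc right_mem_uIcc
    rwa [taylorSum_succ_self, sub_self, sub_zero, Real.norm_eq_abs, mul_assoc, ← pow_succ] at hmvt

/-- The chain of derivatives `d` and the Lipschitz constant of `d k` on `S` are bounded by `K`:
membership in a ball of `C^{k,1}(S)`. -/
structure IsCk1Bounded (d : ℕ → ℝ → E) (k : ℕ) (S : Set ℝ) (K : ℝ) : Prop where
  derivChain : DerivChain d k S
  norm_le : ∀ i ≤ k, ∀ t ∈ S, ‖d i t‖ ≤ K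
  norm_sub_le : ∀ s ∈ S, ∀ t ∈ S, ‖d k s - d k t‖ ≤ K * |s - t|

/-- The extension of a chain of derivatives beyond `β` by the Taylor polynomials at `β`. -/
def taylorExtend (d : ℕ → ℝ → E) (k : ℕ) (β : ℝ) (i : ℕ) (t : ℝ) : E :=
  if t ≤ β then d i t else taylorSum (fun m => d (i + m) β) (k + 1 - i) β t

theorem taylorExtend_of_le {t : ℝ} (ht : t ≤ β) (i : ℕ) : taylorExtend d k β i t = d i t :=
  if_pos ht

theorem taylorExtend_of_ge {t : ℝ} (ht : β ≤ t) {i : ℕ} (hi : i ≤ k) :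
    taylorExtend d k β i t = taylorSum (fun m => d (i + m) β) (k - i + 1) β t := by
  rcases ht.eq_or_lt with rfl | hlt
  · rw [taylorExtend_of_le le_rfl, taylorSum_succ_self, add_zero]
  · rw [taylorExtend, if_neg hlt.not_ge, Nat.sub_add_comm hi]

theorem taylorExtend_top (t : ℝ) : taylorExtend d k β k t = d k (min t β) := by
  rcases le_total t β with ht | ht
  · rw [taylorExtend_of_le ht, min_eq_left ht]
  · rw [taylorExtend_of_ge ht le_rfl, min_eq_right ht]
    simp [taylorSum]

theorem hasDerivAt_taylorSum_chain {i : ℕ} (hi : i < k) (t : ℝ) :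
    HasDerivAt (taylorSum (fun m => d (i + m) β) (k - i + 1) β)
      (taylorSum (fun m => d (i + 1 + m) β) (k - (i + 1) + 1) β t) t := by
  have h := hasDerivAt_taylorSum_succ (fun m => d (i + m) β) (k - i) β t
  simp only [← add_assoc, add_right_comm i _ 1] at h
  rwa [← Nat.sub_sub, Nat.sub_add_cancel (Nat.sub_pos_of_lt hi)]

theorem DerivChain.taylorExtend (hd : DerivChain d k (Icc α β)) (hαβ : α ≤ β) :
    DerivChain (taylorExtend d k β) k (Ici α) := by
  intro i hi t ht
  rw [← Icc_union_Ici_eq_Ici hαβ]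
  refine .union ?_ ?_
  · by_cases htβ : t ≤ β
    · rw [taylorExtend_of_le htβ]
      exact (hd i hi t ⟨ht, htβ⟩).congr (fun s hs => taylorExtend_of_le hs.2 i)
        (taylorExtend_of_le htβ i)
    · exact HasFDerivWithinAt.of_notMem_closure
        (by rw [isClosed_Icc.closure_eq]; exact fun h => htβ h.2)
  · by_cases htβ : β ≤ t
    · rw [taylorExtend_of_ge htβ hi]
      exact (hasDerivAt_taylorSum_chain hi t).hasDerivWithinAt.congr
        (fun s hs => taylorExtend_of_ge hs hi.le) (taylorExtend_of_ge htβ hi.le)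
    · exact HasFDerivWithinAt.of_notMem_closure (by rwa [isClosed_Ici.closure_eq])

theorem IsCk1Bounded.nonneg (h : IsCk1Bounded d k S K) (hS : S.Nonempty) : 0 ≤ K :=
  (norm_nonneg _).trans (h.norm_le k le_rfl _ hS.some_mem)

theorem IsCk1Bounded.taylorExtend (h : IsCk1Bounded d k (Icc α β) K) (hαβ : α ≤ β) :
    IsCk1Bounded (taylorExtend d k β) k (Icc α (β + 1)) ((k + 1) * K) := by
  have hK : 0 ≤ K := h.nonneg (nonempty_Icc.2 hαβ)
  have hle : K ≤ (k + 1) * K := le_mul_of_one_le_left hK (by simp)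
  refine ⟨fun i hi t ht => (h.derivChain.taylorExtend hαβ i hi t ht.1).mono Icc_subset_Ici_self,
    fun i hi t ht => ?_, fun s hs t ht => ?_⟩
  · rcases le_total t β with htβ | htβ
    · rw [taylorExtend_of_le htβ]
      exact (h.norm_le i hi t ⟨ht.1, htβ⟩).trans hle
    · rw [taylorExtend_of_ge htβ hi]
      refine (norm_taylorSum_le (fun m hm => h.norm_le _ (by lia) β ⟨hαβ, le_rfl⟩)
        (abs_le.2 ⟨by linarith, by linarith [ht.2]⟩)).trans ?_
      gcongr
      exact_mod_cast Nat.add_le_add_right (Nat.sub_le k i) 1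
  · have hmem (r : ℝ) (hr : r ∈ Icc α (β + 1)) : min r β ∈ Icc α β :=
      ⟨le_min hr.1 hαβ, min_le_right _ _⟩
    rw [taylorExtend_top, taylorExtend_top]
    have hmin : |min s β - min t β| ≤ |s - t| := by simpa using abs_min_sub_min_le_max s β t β
    exact (h.norm_sub_le _ (hmem s hs) _ (hmem t ht)).trans
      (mul_le_mul hle hmin (abs_nonneg _) (hK.trans hle))

theorem IsCk1Bounded.boundedWhitneyClass {d : ℕ → ℝ → ℂ} (h : IsCk1Bounded d k S K)
    (hS : S.OrdConnected) {x : ℝ} (hx : Icc x (x + 1) ⊆ S) :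
    BoundedWhitneyClass (k + 1) K fun s => d 0 (x + s) := by
  have hmem {t : ℝ} (ht : t ∈ Icc (0 : ℝ) 1) : x + t ∈ S :=
    hx ⟨by linarith [ht.1], by linarith [ht.2]⟩
  have hK : 0 ≤ K := h.nonneg ⟨_, hmem (left_mem_Icc.2 zero_le_one)⟩
  intro t₀ ht₀
  refine ⟨Polynomial.ofFn (k + 1) fun i => d i (x + t₀) / ((i : ℕ).factorial : ℂ),
    ⟨Polynomial.ofFn_degree_lt _, fun t ht => ?_⟩, fun i => ?_⟩
  · have heval : (Polynomial.ofFn (k + 1) fun i => d i (x + t₀) / ((i : ℕ).factorial : ℂ)).eval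
        ((t - t₀ : ℝ) : ℂ) = taylorSum (fun i => d i (x + t₀)) (k + 1) (x + t₀) (x + t) := by
      simp only [taylorSum, Polynomial.ofFn_eq_sum_monomial, Polynomial.eval_finsetSum,
        Polynomial.eval_monomial, add_sub_add_left_eq_sub, Complex.real_smul, Finset.sum_range]
      push_cast
      exact Finset.sum_congr rfl fun i _ => div_mul_comm _ _ _
    rw [heval, ← add_sub_add_left_eq_sub t t₀ x]
    exact h.derivChain.norm_sub_taylorSum_le hS hK h.norm_sub_le _ (hmem ht₀) _ (hmem ht)
  · rcases lt_or_ge i (k + 1) with hi | hi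
    · rw [Polynomial.ofFn_coeff_eq_val_of_lt _ hi, norm_div, Complex.norm_natCast]
      exact (div_le_self (norm_nonneg _) (mod_cast i.factorial_pos)).trans
        (h.norm_le i (Nat.lt_succ_iff.1 hi) _ (hmem ht₀))
    · rwa [Polynomial.ofFn_coeff_eq_zero_of_ge _ hi, norm_zero]

end TaylorExtension

section Ck1Norm

variable {E : Type*} [NormedAddCommGroup E]

theorem HolderConst_nonneg (a : ℝ) (S : Set ℝ) (g : ℝ → E) : 0 ≤ HolderConst a S g :=
  Real.sSup_nonneg (by rintro r ⟨x, -, y, -, -, rfl⟩; positivity)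

theorem sSup_norm_nonneg (d : ℕ → ℝ → E) (k : ℕ) (S : Set ℝ) :
    0 ≤ sSup {r : ℝ | ∃ i ≤ k, ∃ x ∈ S, r = ‖d i x‖} :=
  Real.sSup_nonneg (by rintro r ⟨i, -, x, -, rfl⟩; positivity)

theorem CNorm_nonneg (d : ℕ → ℝ → E) (k : ℕ) (S : Set ℝ) : 0 ≤ CNorm d k S :=
  add_nonneg (sSup_norm_nonneg d k S) (HolderConst_nonneg 1 S (d k))

variable [NormedSpace ℝ E] {d : ℕ → ℝ → E} {k : ℕ} {S : Set ℝ}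

theorem MemCk1.continuousOn (h : MemCk1 d k S) {i : ℕ} (hi : i ≤ k) : ContinuousOn (d i) S := by
  obtain ⟨hchain, L, hL⟩ := h
  rcases hi.eq_or_lt with rfl | hlt
  · refine (LipschitzOnWith.of_dist_le_mul (K := L.toNNReal) fun s hs t ht => ?_).continuousOn
    rw [dist_eq_norm, Real.dist_eq]
    exact (hL s hs t ht).trans (by gcongr; exact L.le_coe_toNNReal)
  · exact fun t ht => (hchain i hlt t ht).continuousWithinAt

theorem MemCk1.bddAbove_norm (h : MemCk1 d k S) (hS : IsCompact S) :
    BddAbove {r : ℝ | ∃ i ≤ k, ∃ x ∈ S, r = ‖d i x‖} := by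
  have hunion : {r : ℝ | ∃ i ≤ k, ∃ x ∈ S, r = ‖d i x‖} = ⋃ i ∈ Iic k, (‖d i ·‖) '' S := by
    ext r
    simp [eq_comm]
  rw [hunion, (finite_Iic k).bddAbove_biUnion]
  exact fun i hi => hS.bddAbove_image (h.continuousOn hi).norm

theorem MemCk1.bddAbove_div (h : MemCk1 d k S) :
    BddAbove {r : ℝ | ∃ x ∈ S, ∃ y ∈ S, x ≠ y ∧ r = ‖d k x - d k y‖ / |x - y| ^ (1 : ℝ)} := by
  obtain ⟨-, L, hL⟩ := h
  refine ⟨L, ?_⟩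
  rintro r ⟨x, hx, y, hy, hxy, rfl⟩
  rw [Real.rpow_one, div_le_iff₀ (abs_sub_pos.2 hxy)]
  exact hL x hx y hy

theorem MemCk1.isCk1Bounded (h : MemCk1 d k S) (hS : IsCompact S) {K : ℝ} (hK : CNorm d k S ≤ K) :
    IsCk1Bounded d k S K where
  derivChain := h.1
  norm_le i hi t ht := calc
    ‖d i t‖ ≤ sSup {r : ℝ | ∃ i ≤ k, ∃ x ∈ S, r = ‖d i x‖} :=
      le_csSup (h.bddAbove_norm hS) ⟨i, hi, t, ht, rfl⟩
    _ ≤ CNorm d k S := le_add_of_nonneg_right (HolderConst_nonneg _ _ _)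
    _ ≤ K := hK
  norm_sub_le s hs t ht := by
    rcases eq_or_ne s t with rfl | hst
    · simp
    rw [← div_le_iff₀ (abs_sub_pos.2 hst), ← Real.rpow_one |s - t|]
    calc ‖d k s - d k t‖ / |s - t| ^ (1 : ℝ) ≤ HolderConst 1 S (d k) :=
          le_csSup h.bddAbove_div ⟨s, hs, t, ht, hst, rfl⟩
      _ ≤ CNorm d k S := le_add_of_nonneg_left (sSup_norm_nonneg d k S)
      _ ≤ K := hK

theorem MemCk1.isCk1Bounded_pow (h : MemCk1 d k S) (hS : IsCompact S) {j : ℕ} (hj : j ≠ 0) {M : ℝ}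
    (hM : CNorm d k S ^ (j : ℝ)⁻¹ ≤ M) : IsCk1Bounded d k S (M ^ j) := by
  refine h.isCk1Bounded hS ?_
  rw [← Real.rpow_inv_natCast_pow (CNorm_nonneg d k S) hj]
  have := Real.rpow_nonneg (CNorm_nonneg d k S) (j : ℝ)⁻¹
  gcongr

end Ck1Norm

section PartitionOnInterval

variable {n : ℕ} {p α β x y δ : ℝ}

theorem HasRieszPartition.of_unit_intervals {E : Type*} [NormedAddCommGroup E] {f : ℝ → E} {B : ℝ}
    (hp : 1 ≤ p) (hδ : 0 ≤ δ) (hxy : x ≤ y)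
    (h : ∀ u v, x ≤ u → u ≤ v → v ≤ u + 1 → v ≤ y → HasRieszPartition f p δ u v B) :
    HasRieszPartition f p δ x y (⌈y - x⌉₊ * B) := by
  have hstart : min y (x + (0 : ℕ)) = x := by simp [hxy]
  have hend : min y (x + ⌈y - x⌉₊) = y := min_eq_left (sub_le_iff_le_add'.1 (Nat.le_ceil _))
  have hcells := HasRieszPartition.of_forall_lt (f := f) hp hδ (fun k => min y (x + k))
    (fun _ => B) ⌈y - x⌉₊ fun k hk => by
      have hky : x + k ≤ y := by linarith [Nat.lt_ceil.1 hk]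
      rw [min_eq_right hky]
      refine h _ _ (by simp) (le_min hky (by simp)) ((min_le_right _ _).trans_eq ?_)
        (min_le_left _ _)
      rw [Nat.cast_succ, add_assoc]
  rwa [hstart, hend, Finset.sum_const, Finset.card_range, nsmul_eq_mul] at hcells

theorem BoundedWhitneyClass.const_mul {B : ℝ} {f : ℝ → ℂ} (h : BoundedWhitneyClass n B f) (m : ℂ) :
    BoundedWhitneyClass n (‖m‖ * B) fun t => m * f t := fun t₀ ht₀ => by
  obtain ⟨P, hP, hcoeff⟩ := h t₀ ht₀
  refine ⟨_, hP.const_mul m, fun k => ?_⟩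
  rw [Polynomial.coeff_C_mul, norm_mul]
  exact mul_le_mul_of_nonneg_left (hcoeff k) (norm_nonneg m)

theorem boundedWhitneyClass_scaleCoeffs_inv_taylorExtend {d : ℕ} {e : Fin d → ℕ → ℝ → ℂ} {S : ℝ}
    (hn : n ≠ 0) (hS : 0 < S) {i : Fin d}
    (he : IsCk1Bounded (e i) (n - 1) (Icc α β) (S ^ (d - (i : ℕ)))) (hx : x ∈ Icc α β) :
    BoundedWhitneyClass n n fun s =>
      scaleCoeffs S⁻¹ (fun i => taylorExtend (e i) (n - 1) β 0 (x + s)) i := by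
  have hextend := (he.taylorExtend (hx.1.trans hx.2)).boundedWhitneyClass ordConnected_Icc
    (Icc_subset_Icc hx.1 (add_le_add_left hx.2 1))
  have hpred : ((n - 1 : ℕ) : ℝ) + 1 = n := mod_cast Nat.sub_add_cancel (Nat.pos_of_ne_zero hn)
  have hscaled := hextend.const_mul (((S⁻¹ : ℝ) : ℂ) ^ (d - (i : ℕ)))
  rwa [hpred, Nat.sub_add_cancel (Nat.pos_of_ne_zero hn), norm_pow, Complex.norm_real,
    Real.norm_of_nonneg (inv_nonneg.2 hS.le), mul_left_comm, ← mul_pow, inv_mul_cancel₀ hS.ne',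
    one_pow, mul_one] at hscaled

theorem exists_hasRieszPartition_of_unit_length (hn : 2 ≤ n) (hp : 1 ≤ p) (hpn : p < n / (n - 1)) :
    ∃ A ≥ 0, ∀ (α β S : ℝ) (e : Fin n → ℕ → ℝ → ℂ) (l : ℝ → ℂ), 0 < S →
      (∀ i, IsCk1Bounded (e i) (n - 1) (Icc α β) (S ^ (n - (i : ℕ)))) →
      ContinuousOn l (Ioo α β) →
      (∀ t ∈ Ioo α β, (monicOfCoeffs fun i => e i 0 t).eval (l t) = 0) →
      ∀ u v, α < u → u ≤ v → v ≤ u + 1 → v < β → ∀ δ > 0,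
        HasRieszPartition l p δ u v (S ^ p * A) := by
  obtain ⟨A, hA, hbound⟩ := uniformRieszBound hn hp hpn le_rfl n (Nat.cast_nonneg n)
  refine ⟨A, hA, fun α β S e l hS he hl hroot u v hu huv hvu hv δ hδ => ?_⟩
  have hmem (s : ℝ) (hs : s ∈ Icc 0 (v - u)) : u + s ∈ Ioo α β :=
    ⟨by linarith [hs.1], by linarith [hs.2]⟩
  have hcoeff (s : ℝ) (hs : s ∈ Icc 0 (v - u)) :
      (fun i => taylorExtend (e i) (n - 1) β 0 (u + s)) = fun i => e i 0 (u + s) :=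
    funext fun i => taylorExtend_of_le (hmem s hs).2.le 0
  have hunit : IsContinuousRoot (fun s i => taylorExtend (e i) (n - 1) β 0 (u + s))
      (fun s => l (u + s)) 0 (v - u) :=
    ⟨le_rfl, by linarith, by linarith, hl.comp (by fun_prop) hmem, fun s hs => by
      rw [hcoeff s hs]; exact hroot _ (hmem s hs)⟩
  have hpart := hbound _ _ _ _ (fun i => boundedWhitneyClass_scaleCoeffs_inv_taylorExtend (by lia)
    hS (he i) ⟨hu.le, (huv.trans_lt hv).le⟩) (hunit.scaleCoeffs S⁻¹) δ hδ
  have haff := hpart.affine (f := l) (m := S) (r := 1) (s := u) one_pos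
    (fun t => by rw [smul_inv_smul₀ hS.ne', one_mul])
  simpa only [one_mul, add_zero, add_sub_cancel, Real.one_rpow, mul_one, abs_of_pos hS] using haff

theorem sum_fin_sub_mul_pow {R : Type*} [Semiring R] (n : ℕ) (c : ℕ → R) (z : R) :
    ∑ i : Fin n, c (n - (i : ℕ)) * z ^ (i : ℕ) = ∑ j ∈ Finset.Icc 1 n, c j * z ^ (n - j) := by
  rw [Finset.sum_fin_eq_sum_range]
  refine Finset.sum_nbij' (n - ·) (n - ·) ?_ ?_ ?_ ?_ ?_
  all_goals
    intro i hi
    simp only [Finset.mem_range, Finset.mem_Icc] at hi ⊢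
  any_goals lia
  rw [dif_pos hi, Nat.sub_sub_self hi.le]

theorem eval_monicOfCoeffs_sub (c : ℕ → ℂ) (z : ℂ) :
    (monicOfCoeffs fun i : Fin n => c (n - (i : ℕ))).eval z
      = z ^ n + ∑ j ∈ Finset.Icc 1 n, c j * z ^ (n - j) := by
  rw [eval_monicOfCoeffs, sum_fin_sub_mul_pow]

theorem exists_hasRieszPartition_of_root (hn : 2 ≤ n) (hp : 1 ≤ p) (hpn : p < n / (n - 1)) :
    ∃ A ≥ 0, ∀ (α β : ℝ) (d : ℕ → ℕ → ℝ → ℂ) (l : ℝ → ℂ),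
      (∀ j ∈ Finset.Icc 1 n, MemCk1 (d j) (n - 1) (Icc α β)) →
      ContinuousOn l (Ioo α β) →
      (∀ t ∈ Ioo α β, l t ^ n + ∑ j ∈ Finset.Icc 1 n, d j 0 t * l t ^ (n - j) = 0) →
      ∀ S > 0, (∀ j ∈ Finset.Icc 1 n, CNorm (d j) (n - 1) (Icc α β) ^ (j : ℝ)⁻¹ ≤ S) →
      ∀ x y, α < x → x ≤ y → y < β → ∀ δ > 0,
        HasRieszPartition l p δ x y (S ^ p * (A * max 1 (β - α))) := by
  obtain ⟨A, hA, hbound⟩ := exists_hasRieszPartition_of_unit_length hn hp hpn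
  refine ⟨2 * A, by positivity, fun α β d l hd hl hroot S hS hdS x y hx hxy hy δ hδ => ?_⟩
  have hcoeff (i : Fin n) : IsCk1Bounded (d (n - i)) (n - 1) (Icc α β) (S ^ (n - (i : ℕ))) :=
    have hj : n - (i : ℕ) ∈ Finset.Icc 1 n := Finset.mem_Icc.2 (by lia)
    (hd _ hj).isCk1Bounded_pow isCompact_Icc (by lia) (hdS _ hj)
  have heval (t : ℝ) (ht : t ∈ Ioo α β) :
      (monicOfCoeffs fun i : Fin n => d (n - i) 0 t).eval (l t) = 0 :=
    (eval_monicOfCoeffs_sub (fun j => d j 0 t) (l t)).trans (hroot t ht)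
  have hceil : (⌈y - x⌉₊ : ℝ) ≤ 2 * max 1 (β - α) := by
    linarith [Nat.ceil_lt_add_one (sub_nonneg.2 hxy), le_max_left 1 (β - α),
      le_max_right 1 (β - α)]
  refine (HasRieszPartition.of_unit_intervals hp hδ.le hxy fun u v hu huv hvu hv =>
    hbound α β S _ l hS hcoeff hl heval u v (hx.trans_le hu) huv hvu (hv.trans_lt hy) δ hδ).mono ?_
  calc ⌈y - x⌉₊ * (S ^ p * A) ≤ 2 * max 1 (β - α) * (S ^ p * A) := by gcongr
    _ = S ^ p * (2 * A * max 1 (β - α)) := by ring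

end PartitionOnInterval

section Conclusion

variable {p : ℝ}

theorem one_lt_div_sub_one {x : ℝ} (hx : 1 < x) : 1 < x / (x - 1) := by
  rw [one_lt_div (sub_pos.2 hx)]
  exact sub_one_lt x

theorem max_one_rpow_le {x r : ℝ} : max 1 x ^ r ≤ max 1 (x ^ r) := by
  rcases max_choice 1 x with h | h
  · rw [h, Real.one_rpow]
    exact le_max_left _ _
  · rw [h]
    exact le_max_right _ _

theorem enorm_norm_rpow {E : Type*} [SeminormedAddCommGroup E] (hp : 0 ≤ p) (z : E) :
    ‖‖z‖ ^ p‖ₑ = ‖z‖ₑ ^ p := by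
  rw [Real.enorm_rpow_of_nonneg (norm_nonneg z) hp, enorm_norm]

theorem integrable_norm_rpow_of_lintegral_le {X E : Type*} [MeasurableSpace X] {μ : Measure X}
    [NormedAddCommGroup E] {f : X → E} {B : ℝ} (hp : 0 ≤ p) (hf : AEStronglyMeasurable f μ)
    (hB : ∫⁻ t, ‖f t‖ₑ ^ p ∂μ ≤ ENNReal.ofReal B) : Integrable (fun t => ‖f t‖ ^ p) μ := by
  refine ⟨(hf.norm.aemeasurable.pow_const p).aestronglyMeasurable, ?_⟩
  simp only [HasFiniteIntegral, enorm_norm_rpow hp]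
  exact hB.trans_lt ENNReal.ofReal_lt_top

theorem integral_norm_rpow_le_of_lintegral_le {X E : Type*} [MeasurableSpace X] {μ : Measure X}
    [NormedAddCommGroup E] {f : X → E} {B : ℝ} (hp : 0 ≤ p) (hB₀ : 0 ≤ B)
    (hf : AEStronglyMeasurable f μ) (hB : ∫⁻ t, ‖f t‖ₑ ^ p ∂μ ≤ ENNReal.ofReal B) :
    ∫ t, ‖f t‖ ^ p ∂μ ≤ B := by
  rw [integral_eq_lintegral_of_nonneg_ae (.of_forall fun t => by positivity)
    (integrable_norm_rpow_of_lintegral_le hp hf hB).aestronglyMeasurable]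
  refine ENNReal.toReal_le_of_le_ofReal hB₀ ?_
  simpa only [← Real.enorm_of_nonneg (Real.rpow_nonneg (norm_nonneg _) p), enorm_norm_rpow hp]
    using hB

theorem rpow_one_div_le_of_forall_gt {I A L M : ℝ} (hp : 0 < p) (hI : 0 ≤ I) (hA : 0 ≤ A)
    (hM : 0 ≤ M) (h : ∀ S > M, I ≤ S ^ p * (A * max 1 L)) :
    I ^ (1 / p) ≤ (A ^ (1 / p) + 1) * max 1 (L ^ (1 / p)) * M := by
  have hS (S : ℝ) (hMS : M < S) :
      I ^ (1 / p) ≤ (A ^ (1 / p) + 1) * max 1 (L ^ (1 / p)) * S := by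
    have hS₀ : 0 < S := hM.trans_lt hMS
    calc I ^ (1 / p) ≤ (S ^ p * (A * max 1 L)) ^ (1 / p) := by gcongr; exact h S hMS
      _ = A ^ (1 / p) * max 1 L ^ (1 / p) * S := by
        rw [Real.mul_rpow (by positivity) (by positivity), Real.mul_rpow hA (by positivity),
          one_div, Real.rpow_rpow_inv hS₀.le hp.ne', mul_comm]
      _ ≤ (A ^ (1 / p) + 1) * max 1 (L ^ (1 / p)) * S := by
        gcongr
        · exact le_add_of_nonneg_right zero_le_one
        · exact max_one_rpow_le
  have hcont : Continuous fun S => (A ^ (1 / p) + 1) * max 1 (L ^ (1 / p)) * S := by fun_prop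
  exact ge_of_tendsto (hcont.continuousWithinAt (s := Ioi M) (x := M))
    (eventually_nhdsWithin_of_forall hS)

end Conclusion

/-- Any continuous root of a monic polynomial of degree `n` with
`C^{n-1,1}` coefficients on a bounded interval `(α,β)` is absolutely continuous with
derivative in `L^p` for `1 ≤ p < n/(n-1)`, with the uniform bound
`‖λ'‖_{L^p} ≤ C(n,p) max{1,(β-α)^{1/p}} max_j ‖a_j‖_{C^{n-1,1}}^{1/j}`. -/
theorem continuous_root_absolutely_continuous_Lp
    (n : ℕ) (hn : 2 ≤ n) (p : ℝ) (hp1 : 1 ≤ p)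
    (hp2 : p < (n : ℝ) / ((n : ℝ) - 1)) :
    ∃ C : ℝ, 0 < C ∧
      ∀ (α β : ℝ), α < β →
      ∀ d : ℕ → ℕ → ℝ → ℂ,
      (∀ j ∈ Finset.Icc 1 n, MemCk1 (d j) (n - 1) (Icc α β)) →
      ∀ l : ℝ → ℂ, ContinuousOn l (Ioo α β) →
      (∀ t ∈ Ioo α β, l t ^ n + ∑ j ∈ Finset.Icc 1 n, d j 0 t * l t ^ (n - j) = 0) →
      AbsContOn l (Ioo α β) ∧
      IntegrableOn (fun t => ‖deriv l t‖ ^ p) (Ioo α β) volume ∧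
      (∫ t in Ioo α β, ‖deriv l t‖ ^ p) ^ (1 / p) ≤
        C * max 1 ((β - α) ^ (1 / p)) *
          (Finset.Icc 1 n).sup' (Finset.nonempty_Icc.mpr (by omega))
            (fun j => CNorm (d j) (n - 1) (Icc α β) ^ ((j : ℝ)⁻¹)) := by
  obtain ⟨A, hA, hpart⟩ := exists_hasRieszPartition_of_root hn hp1 hp2
  obtain ⟨q, hq1, hq2⟩ := exists_between (one_lt_div_sub_one (x := n) (by exact_mod_cast hn))
  obtain ⟨_, -, hpart_q⟩ := exists_hasRieszPartition_of_root hn hq1.le hq2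
  have hp0 : 0 < p := one_pos.trans_le hp1
  refine ⟨A ^ (1 / p) + 1, by positivity, fun α β hαβ d hd l hl hroot => ?_⟩
  set F : ℕ → ℝ := fun j => CNorm (d j) (n - 1) (Icc α β) ^ ((j : ℝ)⁻¹)
  set M := (Finset.Icc 1 n).sup' _ F
  have hle (j : ℕ) (hj : j ∈ Finset.Icc 1 n) : F j ≤ M := Finset.le_sup' F hj
  have hM : 0 ≤ M :=
    (Real.rpow_nonneg (CNorm_nonneg _ _ _) _).trans (hle 1 (Finset.left_mem_Icc.2 (by lia)))
  have hlint (S : ℝ) (hS : M < S) :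
      ∫⁻ t in Ioo α β, ‖deriv l t‖ₑ ^ p ≤ ENNReal.ofReal (S ^ p * (A * max 1 (β - α))) :=
    lintegral_enorm_deriv_rpow_le hp1 hαβ hl
      (hpart α β d l hd hl hroot S (hM.trans_lt hS) fun j hj => (hle j hj).trans hS.le)
  have hmeas : AEStronglyMeasurable (deriv l) (volume.restrict (Ioo α β)) :=
    (measurable_deriv l).aestronglyMeasurable
  refine ⟨absContOn_of_hasRieszPartition hq1 hl (hpart_q α β d l hd hl hroot (M + 1)
      (by linarith) fun j hj => (hle j hj).trans (by linarith)),
    integrable_norm_rpow_of_lintegral_le hp0.le hmeas (hlint (M + 1) (by linarith)),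
    rpow_one_div_le_of_forall_gt hp0 (by positivity) hA hM fun S hS =>
      have : 0 < S := hM.trans_lt hS
      integral_norm_rpow_le_of_lintegral_le hp0.le (by positivity) hmeas (hlint S hS)⟩
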